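/- arXiv:1705.09957 — 6 statements merged into one kernel-verified Lean document; each statement's English description precedes it below -/
import Mathlib

section
/- Every finite graph G with m edges and no isolated edge (i.e., no edge both of whose endpoints have degree 1) admits a local antimagic labelling: a bijection f from the edge set of G to {1,…,m} such that for every edge xy of G, the sum of f over the edges incident to x differs from the sum of f over the edges incident to y. -/
/-!
Label the edges by a uniformly random bijection onto `{1, …, m}`. The theorem follows from the
union bound once the collision probabilities `P(xy)` of the edges (the probability that the two
endpoints get equal sums) are shown to add up to less than `1`. For an edge `xy`, let `A` and `B`
be the sets of the other edges at `x` and at `y`, with `|A| ≤ |B|`; a collision means that the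
label sums over `A` and `B` agree, i.e. that their difference `D` (`dif`) vanishes.

*Insertion* (`insertion`). Fix `e ∈ A` and repeatedly exchange the label of `e` with the next
larger label not used on `A \ {e}`. The labellings split into chains of length `m + 1 - |A|` along
which `D` increases strictly, so each chain contains at most one labelling with `D = 0`, whence
`P ≤ 1 / (m + 1 - |A|)`. Chains that start with `D > 0` or end with `D < 0` contain none, which
sharpens the bound:

* if `|A| < |B|`, reflecting all labels but the top one shows that about half of the chains ending
  with label `m` at `e` end with `D < 0` (`prob_le_of_lt'`, `prob_le_of_lt`);
* if `|A| = |B| ≥ 3`, condition on `e` having label `1` and on the largest label of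
  `(A \ {e}) ∪ B` lying in `A`; reflecting the labels in between negates `D` (`prob_lt_of_eq`).

The exceptional probability that `D = 0` in these conditioned spaces is controlled by exchanging
one label with many others (`transposition`). The case `|A| = |B| = 2` is an explicit count of
solutions of `a + b = c + d` (`prob_lt_of_two`). Altogether `P < 1 / m` whenever `3 |A| ≤ m`
(`prob_lt`), so the union bound succeeds if every edge satisfies this.

An edge violating `3 |A| ≤ m` is called heavy. Since three vertices of degree at least `d` meet at
least `3 d - 3` edges, all vertices off a heavy edge have smaller degree than its endpoints, so
there is only one heavy edge. The edges adjacent to it then have endpoints of different degrees,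
and the gain in the bound for `|A| < |B|` compensates for the loss at the heavy edge
(`prob_le_adjacent`, `heavy_arith`, `sum_prob_lt`).
-/

set_option linter.unusedSectionVars false

namespace LocalAntimagic

open Finset

section Labellings

variable {E : Type*} [Fintype E] [DecidableEq E] {m : ℕ}

/-! ### Labellings and insertion chains -/

/-- The label (in `{1, …, m}`) that the bijection `g` gives to `e`. -/
def lab (g : E ≃ Fin m) (e : E) : ℤ := ((g e : ℕ) : ℤ) + 1

/-- The difference of the label sums over `A` and `B`. -/
def dif (A B : Finset E) (g : E ≃ Fin m) : ℤ := ∑ x ∈ A, lab g x - ∑ x ∈ B, lab g x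

/-- The signed indicator of the pair `(A, B)`. -/
def sgn (A B : Finset E) (x : E) : ℤ := (if x ∈ A then 1 else 0) - (if x ∈ B then 1 else 0)

/-- The labelling `g` with the labels of `e` and `h` exchanged. -/
def sw (e h : E) (g : E ≃ Fin m) : E ≃ Fin m := (Equiv.swap e h).trans g

lemma lab_pos (g : E ≃ Fin m) (e : E) : 1 ≤ lab g e := by unfold lab; omega

lemma lab_le (g : E ≃ Fin m) (e : E) : lab g e ≤ m := by
  unfold lab; have := (g e).2; omega

lemma lab_inj (g : E ≃ Fin m) {e h : E} (H : lab g e = lab g h) : e = h := by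
  unfold lab at H
  apply g.injective; apply Fin.ext; omega

lemma lab_ext {g g' : E ≃ Fin m} (H : ∀ e, lab g e = lab g' e) : g = g' := by
  ext e; have := H e; unfold lab at this; omega

lemma lab_sw_left (e h : E) (g : E ≃ Fin m) : lab (sw e h g) e = lab g h := by
  simp [lab, sw]

lemma lab_sw_right (e h : E) (g : E ≃ Fin m) : lab (sw e h g) h = lab g e := by
  simp [lab, sw]

lemma lab_sw_of_ne {e h x : E} (g : E ≃ Fin m) (h1 : x ≠ e) (h2 : x ≠ h) :
    lab (sw e h g) x = lab g x := by
  simp [lab, sw, Equiv.swap_apply_of_ne_of_ne h1 h2]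

lemma sw_sw (e h : E) (g : E ≃ Fin m) : sw e h (sw e h g) = g := by
  ext x; simp [sw]

lemma sum_lab_sw (A : Finset E) {e h : E} (hne : e ≠ h) (g : E ≃ Fin m) :
    ∑ x ∈ A, lab (sw e h g) x = ∑ x ∈ A, lab g x +
      ((if e ∈ A then 1 else 0) - (if h ∈ A then 1 else 0)) * (lab g h - lab g e) := by
  have key : ∀ x, lab (sw e h g) x = lab g x + (if x = e then lab g h - lab g e else 0)
      + (if x = h then lab g e - lab g h else 0) := by
    intro x
    by_cases h1 : x = e
    · subst h1; simp [lab_sw_left, hne]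
    · by_cases h2 : x = h
      · subst h2; simp [lab_sw_right, h1]
      · simp [lab_sw_of_ne g h1 h2, h1, h2]
  simp only [key, sum_add_distrib, sum_ite_eq']
  split_ifs <;> ring

lemma dif_sw (A B : Finset E) {e h : E} (hne : e ≠ h) (g : E ≃ Fin m) :
    dif A B (sw e h g) = dif A B g + (sgn A B e - sgn A B h) * (lab g h - lab g e) := by
  unfold dif sgn
  rw [sum_lab_sw A hne, sum_lab_sw B hne]; ring

/-- One insertion step: the label of `e` is exchanged with the next larger label
carried by an element of `R`. -/
def Step (R : Finset E) (e : E) (g g' : E ≃ Fin m) : Prop :=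
  ∃ h ∈ R, lab g e < lab g h ∧ (∀ r ∈ R, lab g e < lab g r → lab g h ≤ lab g r) ∧ g' = sw e h g

lemma Step.right_unique (R : Finset E) (e : E) :
    Relator.RightUnique (Step (m := m) R e) := by
  rintro g g1 g2 ⟨h1, hR1, l1, m1, rfl⟩ ⟨h2, hR2, l2, m2, rfl⟩
  have : h1 = h2 := lab_inj g (le_antisymm (m1 _ hR2 l2) (m2 _ hR1 l1))
  rw [this]

lemma Step.lab_lt {R : Finset E} {e : E} {g g' : E ≃ Fin m} (h : Step R e g g') :
    lab g e < lab g' e := by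
  obtain ⟨h, _, l, _, rfl⟩ := h
  rwa [lab_sw_left]

lemma Step.dif_lt {A B : Finset E} {e : E} {g g' : E ≃ Fin m} (he : e ∈ A)
    (hAB : Disjoint A B) (H : Step (univ \ A.erase e) e g g') : dif A B g < dif A B g' := by
  obtain ⟨h, hR, l, _, rfl⟩ := H
  have hne : e ≠ h := by rintro rfl; exact lt_irrefl _ l
  have hA : h ∉ A := by
    intro hA; simp at hR; exact hR hne.symm hA
  have heB : e ∉ B := Finset.disjoint_left.1 hAB he
  rw [dif_sw A B hne]
  have : 1 ≤ sgn A B e - sgn A B h := by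
    unfold sgn; simp [he, heB, hA]; split_ifs <;> simp
  nlinarith

/-- Iterating steps strictly increases both the label of `e` and the difference. -/
lemma Steps.mono {A B : Finset E} {e : E} {g g' : E ≃ Fin m} (he : e ∈ A)
    (hAB : Disjoint A B) (H : Relation.ReflTransGen (Step (univ \ A.erase e) e) g g') :
    g = g' ∨ (lab g e < lab g' e ∧ dif A B g < dif A B g') := by
  induction H with
  | refl => exact Or.inl rfl
  | tail _ hs ih =>
    right
    have h1 := hs.lab_lt
    have h2 := hs.dif_lt he hAB
    rcases ih with rfl | ⟨h3, h4⟩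
    · exact ⟨h1, h2⟩
    · exact ⟨h3.trans h1, h4.trans h2⟩

/-- Every labelling is reached from one in which `e` has the least label within `R`. -/
lemma exists_bottom (R : Finset E) (e : E) (heR : e ∈ R) (N : ℕ) :
    ∀ g : E ≃ Fin m, (lab g e).toNat = N →
    ∃ b : E ≃ Fin m, (∀ r ∈ R, lab b e ≤ lab b r) ∧ Relation.ReflTransGen (Step R e) b g := by
  induction N using Nat.strong_induction_on with
  | _ N ih =>
  intro g hg
  by_cases hb : ∀ r ∈ R, lab g e ≤ lab g r
  · exact ⟨g, hb, .refl⟩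
  push Not at hb
  obtain ⟨r, hr, hlt⟩ := hb
  obtain ⟨h, hh, hmax⟩ := (R.filter (fun r => lab g r < lab g e)).exists_max_image (lab g)
    ⟨r, by simp [hr, hlt]⟩
  simp only [mem_filter] at hh hmax
  have hp := lab_pos g h
  have hne : e ≠ h := by rintro rfl; exact lt_irrefl _ hh.2
  obtain ⟨b, hb1, hb2⟩ := ih (lab (sw e h g) e).toNat (by rw [lab_sw_left]; omega) (sw e h g) rfl
  refine ⟨b, hb1, hb2.tail ⟨h, hh.1, ?_, ?_, (sw_sw e h g).symm⟩⟩
  · rw [lab_sw_left, lab_sw_right]; exact hh.2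
  · intro s hs hlts
    rw [lab_sw_right]
    rw [lab_sw_left] at hlts
    by_cases h1 : s = e
    · subst h1; rw [lab_sw_left] at hlts; omega
    by_cases h2 : s = h
    · subst h2; rw [lab_sw_right]
    rw [lab_sw_of_ne g h1 h2] at hlts ⊢
    by_contra hc
    have := hmax s ⟨hs, by omega⟩
    omega

lemma card_bottom_mul_le (R : Finset E) (e : E) (heR : e ∈ R) :
    R.card * (univ.filter (fun b : E ≃ Fin m => ∀ r ∈ R, lab b e ≤ lab b r)).card
      ≤ Fintype.card (E ≃ Fin m) := by
  rw [← card_product, ← card_univ (α := E ≃ Fin m)]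
  have aux : ∀ (r : E) (b : E ≃ Fin m), r ∈ R → (∀ s ∈ R, lab b e ≤ lab b s) →
      ∀ s ∈ R, lab (sw e r b) r ≤ lab (sw e r b) s := by
    intro r b hr hb s hs
    rw [lab_sw_right]
    by_cases h1 : s = e
    · subst h1; rw [lab_sw_left]; exact hb _ hr
    by_cases h2 : s = r
    · subst h2; rw [lab_sw_right]
    rw [lab_sw_of_ne b h1 h2]; exact hb _ hs
  apply card_le_card_of_injOn (fun p => sw e p.1 p.2)
  · intro _ _; simp
  · rintro ⟨r, b⟩ h1 ⟨r', b'⟩ h2 heq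
    simp only [coe_product, coe_filter, mem_univ, true_and, Set.mem_prod, mem_coe,
      Set.mem_ofPred_eq] at h1 h2 heq
    have e1 := aux r b h1.1 h1.2 r' h2.1
    have e2 := aux r' b' h2.1 h2.2 r h1.1
    rw [heq] at e1
    have hr : r = r' := lab_inj _ (le_antisymm e1 e2)
    subst hr
    have := congrArg (sw e r) heq
    rw [sw_sw, sw_sw] at this
    rw [this]

/-- Insertion bound: along a chain of insertion steps the difference is strictly increasing, so
a chain contains at most one labelling of difference zero, and none if its first element is
already positive or its last element is still negative. Label `1` (resp. `m`) at `e` makes a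
labelling the first (resp. last) element of its chain. -/
lemma insertion {A B : Finset E} {e : E} (he : e ∈ A) (hAB : Disjoint A B) :
    (univ \ A.erase e).card *
      ((univ.filter (fun g : E ≃ Fin m => dif A B g = 0)).card +
       (univ.filter (fun g : E ≃ Fin m => lab g e = 1 ∧ 0 < dif A B g)).card +
       (univ.filter (fun g : E ≃ Fin m => lab g e = m ∧ dif A B g < 0)).card)
      ≤ Fintype.card (E ≃ Fin m) := by
  set R := univ \ A.erase e with hR
  have heR : e ∈ R := by simp [hR]
  refine le_trans (Nat.mul_le_mul_left _ ?_) (card_bottom_mul_le R e heR)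
  rw [← card_union_of_disjoint, ← card_union_of_disjoint]
  · choose β hβ1 hβ2 using fun g : E ≃ Fin m => exists_bottom R e heR _ g rfl
    apply card_le_card_of_injOn β
    · intro g _
      simpa using hβ1 g
    · intro g1 h1 g2 h2 heq
      have aux : ∀ g1 g2 : E ≃ Fin m, (dif A B g1 = 0 ∨ (lab g1 e = 1 ∧ 0 < dif A B g1) ∨
          (lab g1 e = m ∧ dif A B g1 < 0)) → (dif A B g2 = 0 ∨ (lab g2 e = 1 ∧ 0 < dif A B g2) ∨
          (lab g2 e = m ∧ dif A B g2 < 0)) → Relation.ReflTransGen (Step R e) g1 g2 →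
          g1 = g2 := by
        intro g1 g2 h1 h2 hr
        rcases Steps.mono he hAB hr with h | ⟨h3, h4⟩
        · exact h
        · exfalso
          have := lab_pos g1 e
          have := lab_le g2 e
          omega
      simp only [coe_union, coe_filter, mem_univ, true_and, Set.mem_union, Set.mem_ofPred_eq,
        or_assoc] at h1 h2
      have t1 := hβ2 g1
      have t2 := hβ2 g2
      rw [heq] at t1
      rcases Relation.ReflTransGen.total_of_right_unique (Step.right_unique R e) t1 t2 with h | h
      · exact aux _ _ h1 h2 h
      · exact (aux _ _ h2 h1 h).symm
  · rw [disjoint_left]; intro g; simp only [mem_union, mem_filter, mem_univ, true_and]; omega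
  · rw [disjoint_left]; intro g; simp only [mem_filter, mem_univ, true_and]; omega

/-! ### Uniformity, transpositions and the case of different sizes -/

lemma sw_self (e : E) (g : E ≃ Fin m) : sw e e g = g := by
  ext x; simp [sw]

/-- Each label is equally likely at `e`. -/
lemma card_fibre (hE : Fintype.card E = m) (e : E) {l : ℤ} (h1 : 1 ≤ l) (h2 : l ≤ m) :
    m * (univ.filter (fun g : E ≃ Fin m => lab g e = l)).card = Fintype.card (E ≃ Fin m) := by
  have hl : (l - 1).toNat < m := by omega
  have key := card_eq_sum_card_fiberwise (s := (univ : Finset (E ≃ Fin m))) (t := (univ : Finset E))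
    (f := fun g => g.symm ⟨(l - 1).toNat, hl⟩) (by intro _ _; simp)
  rw [card_univ] at key
  rw [key]
  have : ∀ h ∈ (univ : Finset E),
      (univ.filter (fun g : E ≃ Fin m => g.symm ⟨(l - 1).toNat, hl⟩ = h)).card =
      (univ.filter (fun g : E ≃ Fin m => lab g e = l)).card := by
    intro h _
    have conv : ∀ g : E ≃ Fin m, g.symm ⟨(l - 1).toNat, hl⟩ = h ↔ lab g h = l := by
      intro g
      rw [Equiv.symm_apply_eq, Fin.ext_iff]; unfold lab; simp only; omega
    simp only [conv]
    apply card_bij' (fun g _ => sw e h g) (fun g _ => sw e h g)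
    · intro g hg; simpa [lab_sw_left] using hg
    · intro g hg; simpa [lab_sw_right] using hg
    · intro g _; exact sw_sw _ _ _
    · intro g _; exact sw_sw _ _ _
  rw [sum_congr rfl this, sum_const, card_univ, hE, smul_eq_mul]

/-- Exchanging the label of `f` with that of an `h ∈ H` changes a zero difference by an amount
that determines `h`, so few members of `S` have difference zero. -/
lemma transposition {A B : Finset E} (S : Finset (E ≃ Fin m)) (f : E) (H : Finset E)
    (hf : f ∉ H) (hS : ∀ g ∈ S, ∀ h ∈ H, sw f h g ∈ S) (c : ℤ) (hc : c ≠ 0)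
    (hsgn : ∀ h ∈ H, sgn A B f - sgn A B h = c) :
    (H.card + 1) * (S.filter (fun g => dif A B g = 0)).card ≤ S.card := by
  rw [← card_insert_of_notMem hf, ← card_product]
  have key : ∀ h ∈ insert f H, ∀ g : E ≃ Fin m, dif A B g = 0 →
      dif A B (sw f h g) = c * (lab (sw f h g) f - lab (sw f h g) h) := by
    intro h hh g hg
    rcases mem_insert.1 hh with rfl | hh
    · simp [sw_self, hg]
    · have : f ≠ h := by rintro rfl; exact hf hh
      rw [dif_sw A B this, hsgn h hh, lab_sw_left, lab_sw_right, hg, zero_add]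
  apply card_le_card_of_injOn (fun p => sw f p.1 p.2)
  · rintro ⟨h, g⟩ hp
    simp only [coe_product, Set.mem_prod, mem_coe, mem_insert, mem_filter] at hp
    rcases hp.1 with rfl | hh
    · simpa [sw_self] using hp.2.1
    · exact hS _ hp.2.1 _ hh
  · rintro ⟨h, g⟩ h1 ⟨h', g'⟩ h2 heq
    simp only [coe_product, Set.mem_prod, mem_coe, mem_filter] at h1 h2 heq
    have e1 := key h h1.1 g h1.2.2
    have e2 := key h' h2.1 g' h2.2.2
    rw [heq] at e1
    rw [e2] at e1
    have := mul_left_cancel₀ hc e1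
    have hh : h = h' := lab_inj (sw f h' g') (by omega)
    subst hh
    have := congrArg (sw f h) heq
    rw [sw_sw, sw_sw] at this
    rw [this]

/-- Reflection of the labels in the interval `[p, q]`; other labels are fixed. -/
def reflFun (p q : ℕ) (t : Fin m) : Fin m :=
  if h : p ≤ t + 1 ∧ t + 1 ≤ q ∧ q ≤ m ∧ 1 ≤ p then ⟨p + q - t - 2, by omega⟩ else t

lemma reflFun_involutive (p q : ℕ) : Function.Involutive (reflFun (m := m) p q) := by
  intro t; unfold reflFun
  by_cases h : p ≤ t + 1 ∧ t + 1 ≤ q ∧ q ≤ m ∧ 1 ≤ p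
  · rw [dif_pos h, dif_pos (by simp only; omega)]; apply Fin.ext; simp only; omega
  · rw [dif_neg h, dif_neg h]

/-- The labelling `g` followed by the reflection of the interval `[p, q]` of labels. -/
def reflect (p q : ℕ) (g : E ≃ Fin m) : E ≃ Fin m :=
  g.trans ((reflFun_involutive p q).toPerm _)

lemma reflect_apply (p q : ℕ) (g : E ≃ Fin m) (x : E) :
    reflect p q g x = reflFun p q (g x) := rfl

lemma reflect_reflect (p q : ℕ) (g : E ≃ Fin m) : reflect p q (reflect p q g) = g := by
  ext x
  rw [reflect_apply, reflect_apply, reflFun_involutive]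

lemma lab_reflect_in {p q : ℕ} (hq : q ≤ m) (hp : 1 ≤ p) {g : E ≃ Fin m} {x : E}
    (h1 : p ≤ lab g x) (h2 : lab g x ≤ q) : lab (reflect p q g) x = p + q - lab g x := by
  unfold lab at *
  rw [reflect_apply, reflFun, dif_pos (by omega)]; simp only; omega

lemma lab_reflect_out {p q : ℕ} {g : E ≃ Fin m} {x : E}
    (h : lab g x < p ∨ q < lab g x) : lab (reflect p q g) x = lab g x := by
  unfold lab at *
  rw [reflect_apply, reflFun, dif_neg (by omega)]

/-- Reflecting all labels but the top one, carried by `e`, sends a label `t` to `m - t`, so the two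
differences add up to a multiple of `m` that is nonpositive as soon as `|A| < |B|`. -/
lemma dif_add_reflect_top {A B : Finset E} {e : E} (he : e ∈ A) (heB : e ∉ B) {g : E ≃ Fin m}
    (hg : lab g e = m) :
    dif A B g + dif A B (reflect 1 (m - 1) g) = m * (A.card + 1 - B.card) := by
  have h0 := lab_pos g e
  have hl : lab (reflect 1 (m - 1) g) e = m := by
    rw [lab_reflect_out (by right; omega), hg]
  have hx : ∀ x, x ≠ e → lab (reflect 1 (m - 1) g) x = m - lab g x := by
    intro x hx
    have h1 := lab_pos g x
    have h2 := lab_le g x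
    have h3 : lab g x ≠ m := fun h => hx (lab_inj g (h.trans hg.symm))
    rw [lab_reflect_in (by omega) le_rfl (by exact_mod_cast h1) (by omega)]
    push_cast
    omega
  have hA : ∑ x ∈ A, lab (reflect 1 (m - 1) g) x + ∑ x ∈ A, lab g x = m * (A.card + 1) := by
    rw [← sum_add_distrib, ← add_sum_erase _ _ he,
      sum_congr rfl (g := fun _ => (m : ℤ)) (by
        intro x hxA; rw [hx x (ne_of_mem_erase hxA)]; ring), sum_const, hl, hg,
      card_erase_of_mem he]
    have : 1 ≤ A.card := card_pos.2 ⟨e, he⟩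
    simp only [nsmul_eq_mul]; push_cast [this]; ring
  have hB : ∑ x ∈ B, lab (reflect 1 (m - 1) g) x + ∑ x ∈ B, lab g x = m * B.card := by
    rw [← sum_add_distrib, sum_congr rfl (g := fun _ => (m : ℤ)) (by
        intro x hxB; rw [hx x (by rintro rfl; exact heB hxB)]; ring), sum_const]
    simp only [nsmul_eq_mul]; ring
  unfold dif
  linarith

lemma lab_reflect_top {e : E} {g : E ≃ Fin m}
    (hg : lab g e = m) : lab (reflect 1 (m - 1) g) e = m := by
  have h0 := lab_pos g e
  rw [lab_reflect_out (by right; omega), hg]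

/-- With `e` carrying the top label and `|A| < |B|`, negative differences are at least as frequent
as positive ones. -/
lemma card_top_lt {A B : Finset E} {e : E} (he : e ∈ A) (heB : e ∉ B) (hlt : A.card < B.card) :
    (univ.filter (fun g : E ≃ Fin m => lab g e = m)).card ≤
      2 * (univ.filter (fun g : E ≃ Fin m => lab g e = m ∧ dif A B g < 0)).card +
      (univ.filter (fun g : E ≃ Fin m => lab g e = m ∧ dif A B g = 0)).card := by
  have h1 : (univ.filter (fun g : E ≃ Fin m => lab g e = m ∧ 0 < dif A B g)).card ≤
      (univ.filter (fun g : E ≃ Fin m => lab g e = m ∧ dif A B g < 0)).card := by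
    apply card_le_card_of_injOn (reflect 1 (m - 1))
    · intro g hg
      simp only [coe_filter, mem_univ, true_and, Set.mem_ofPred_eq] at hg ⊢
      have := dif_add_reflect_top he heB hg.1
      refine ⟨lab_reflect_top hg.1, ?_⟩
      have : (m : ℤ) * (A.card + 1 - B.card) ≤ 0 :=
        mul_nonpos_of_nonneg_of_nonpos (by positivity) (by omega)
      omega
    · exact (Function.LeftInverse.injective (reflect_reflect 1 (m - 1))).injOn
  have h2 : (univ.filter (fun g : E ≃ Fin m => lab g e = m)) ⊆
      (univ.filter (fun g : E ≃ Fin m => lab g e = m ∧ 0 < dif A B g)) ∪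
      ((univ.filter (fun g : E ≃ Fin m => lab g e = m ∧ dif A B g < 0)) ∪
      (univ.filter (fun g : E ≃ Fin m => lab g e = m ∧ dif A B g = 0))) := by
    intro g; simp only [mem_union, mem_filter, mem_univ, true_and]; omega
  have h3 := (card_le_card h2).trans ((card_union_le _ _).trans
    (Nat.add_le_add_left (card_union_le _ _) _))
  omega

/-- For `|A| + 1 < |B|` the reflected difference is negative already when the original one
is zero. -/
lemma card_top_lt' {A B : Finset E} {e : E} (he : e ∈ A) (heB : e ∉ B)
    (hlt : A.card + 1 < B.card) :
    (univ.filter (fun g : E ≃ Fin m => lab g e = m)).card ≤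
      2 * (univ.filter (fun g : E ≃ Fin m => lab g e = m ∧ dif A B g < 0)).card := by
  have h1 : (univ.filter (fun g : E ≃ Fin m => lab g e = m ∧ 0 ≤ dif A B g)).card ≤
      (univ.filter (fun g : E ≃ Fin m => lab g e = m ∧ dif A B g < 0)).card := by
    apply card_le_card_of_injOn (reflect 1 (m - 1))
    · intro g hg
      simp only [coe_filter, mem_univ, true_and, Set.mem_ofPred_eq] at hg ⊢
      have := dif_add_reflect_top he heB hg.1
      refine ⟨lab_reflect_top hg.1, ?_⟩
      have := lab_pos g e
      have : (m : ℤ) * (A.card + 1 - B.card) < 0 :=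
        mul_neg_of_pos_of_neg (by omega) (by omega)
      omega
    · exact (Function.LeftInverse.injective (reflect_reflect 1 (m - 1))).injOn
  have h2 : (univ.filter (fun g : E ≃ Fin m => lab g e = m)) ⊆
      (univ.filter (fun g : E ≃ Fin m => lab g e = m ∧ 0 ≤ dif A B g)) ∪
      (univ.filter (fun g : E ≃ Fin m => lab g e = m ∧ dif A B g < 0)) := by
    intro g; simp only [mem_union, mem_filter, mem_univ, true_and]; omega
  have h3 := (card_le_card h2).trans (card_union_le _ _)
  omega

/-- The probability that a uniformly random labelling has equal label sums on `A` and `B`. -/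
def prob (m : ℕ) (A B : Finset E) : ℚ :=
  ((univ.filter (fun g : E ≃ Fin m => dif A B g = 0)).card : ℚ) / Fintype.card (E ≃ Fin m)

lemma card_labellings_pos (hE : Fintype.card E = m) : 0 < Fintype.card (E ≃ Fin m) := by
  rw [Fintype.card_pos_iff]; exact ⟨Fintype.equivFinOfCardEq hE⟩

lemma card_compl_erase {A : Finset E} (hE : Fintype.card E = m) {e : E} (he : e ∈ A) :
    (univ \ A.erase e).card = m + 1 - A.card := by
  rw [card_sdiff_of_subset (subset_univ _), card_univ, hE, card_erase_of_mem he]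
  have : 1 ≤ A.card := card_pos.2 ⟨e, he⟩
  omega

/-- Basic collision bound, from counting insertion chains. -/
lemma prob_le (hE : Fintype.card E = m) {A B : Finset E} (hA : A.Nonempty)
    (hAB : Disjoint A B) : prob m A B ≤ 1 / (m + 1 - A.card) := by
  obtain ⟨e, he⟩ := hA
  have h := insertion (m := m) he hAB
  have hF := card_labellings_pos hE
  have hAm : A.card ≤ m := hE ▸ card_le_univ A
  rw [card_compl_erase hE he] at h
  unfold prob
  have hN : ((m + 1 - A.card : ℕ) : ℚ) = m + 1 - A.card := by
    push_cast [show A.card ≤ m + 1 by omega]; ring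
  rw [← hN, div_le_div_iff₀ (by exact_mod_cast hF) (by exact_mod_cast (by omega))]
  rw [mul_add, mul_add] at h
  have : (m + 1 - A.card) * (univ.filter (fun g : E ≃ Fin m => dif A B g = 0)).card ≤
     Fintype.card (E ≃ Fin m) := by omega
  rw [mul_comm, one_mul]
  exact_mod_cast this

/-- Arithmetic of the refined bounds: `Z` collisions and `X` labellings witnessing collision-free
chains of length `N`, among `F` labellings in total; `X` is at least a proportion `y` of the
`s = F / m` labellings with a prescribed label at `e`. -/
lemma refine_bound {N m F Z X s y : ℚ} (hN : 0 < N) (hm : 0 < m) (hF : 0 < F)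
    (h1 : N * (Z + X) ≤ F) (hs : m * s = F) (hX : y * s ≤ X) :
    Z / F ≤ 1 / N - y / m := by
  have h2 : (Z + X) / F ≤ 1 / N := by
    rw [div_le_div_iff₀ hF hN]; linarith
  have h3 : y / m ≤ X / F := by
    rw [div_le_div_iff₀ hm hF, ← hs]; nlinarith
  rw [add_div] at h2
  linarith

/-- At least half of the labellings with label `m` at `e ∈ A` have `dif < 0`, which improves `prob_le`. -/
lemma prob_le_of_lt' (hE : Fintype.card E = m) {A B : Finset E} (hA : A.Nonempty)
    (hAB : Disjoint A B) (hlt : A.card + 1 < B.card) :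
    prob m A B ≤ 1 / (m + 1 - A.card) - (1 / 2) / m := by
  obtain ⟨e, he⟩ := hA
  have heB : e ∉ B := disjoint_left.1 hAB he
  have h := insertion (m := m) he hAB
  have hF := card_labellings_pos hE
  have hAm : A.card ≤ m := hE ▸ card_le_univ A
  have hA1 : 1 ≤ A.card := card_pos.2 ⟨e, he⟩
  have hm : 1 ≤ m := by omega
  rw [card_compl_erase hE he] at h
  have hN : ((m + 1 - A.card : ℕ) : ℚ) = m + 1 - A.card := by
    push_cast [show A.card ≤ m + 1 by omega]; ring
  rw [← hN]
  have hfib := card_fibre hE e (l := m) (by omega) le_rfl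
  have ht := card_top_lt' (m := m) he heB hlt
  refine refine_bound (by exact_mod_cast (by omega)) (by exact_mod_cast hm)
    (by exact_mod_cast hF) (X := (univ.filter (fun g : E ≃ Fin m =>
      lab g e = m ∧ dif A B g < 0)).card)
    (s := (univ.filter (fun g : E ≃ Fin m => lab g e = m)).card) ?_ (by exact_mod_cast hfib) ?_
  · exact_mod_cast (Nat.mul_le_mul_left _ (by omega)).trans h
  · have : ((univ.filter (fun g : E ≃ Fin m => lab g e = m)).card : ℚ) ≤
      2 * (univ.filter (fun g : E ≃ Fin m => lab g e = m ∧ dif A B g < 0)).card := by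
      exact_mod_cast ht
    linarith

/-- The analogue of `prob_le_of_lt'` for `|A| < |B|`; the correction `1 / (m - |A| - |B| + 1)`
bounds the conditional probability that `dif = 0`, by exchanging the label of an element of `B`
with those outside `A ∪ B`. -/
lemma prob_le_of_lt (hE : Fintype.card E = m) {A B : Finset E} (hA : A.Nonempty)
    (hAB : Disjoint A B) (hlt : A.card < B.card) :
    prob m A B ≤ 1 / (m + 1 - A.card) -
      ((1 - 1 / (m - A.card - B.card + 1)) / 2) / m := by
  obtain ⟨e, he⟩ := hA
  have heB : e ∉ B := disjoint_left.1 hAB he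
  have h := insertion (m := m) he hAB
  have hF := card_labellings_pos hE
  have hAm : A.card ≤ m := hE ▸ card_le_univ A
  have hA1 : 1 ≤ A.card := card_pos.2 ⟨e, he⟩
  have hm : 1 ≤ m := by omega
  rw [card_compl_erase hE he] at h
  have hN : ((m + 1 - A.card : ℕ) : ℚ) = m + 1 - A.card := by
    push_cast [show A.card ≤ m + 1 by omega]; ring
  rw [← hN]
  have hfib := card_fibre hE e (l := m) (by omega) le_rfl
  have ht := card_top_lt (m := m) he heB hlt
  obtain ⟨f, hf⟩ : B.Nonempty := card_pos.1 (by omega)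
  have hfA : f ∉ A := disjoint_right.1 hAB hf
  have hABm : A.card + B.card ≤ m := by
    rw [← card_union_of_disjoint hAB, ← hE]; exact card_le_univ _
  have htr := transposition (A := A) (B := B) (univ.filter (fun g : E ≃ Fin m => lab g e = m)) f
    (univ \ (A ∪ B)) (by simp [hf]) (by
      intro g hg h hh
      simp only [mem_filter, mem_univ, true_and, mem_sdiff, mem_union, not_or] at hg hh ⊢
      rw [lab_sw_of_ne g (by rintro rfl; exact heB hf) (by rintro rfl; exact hh.1 he), hg])
    (-1) (by norm_num) (by
      intro h hh
      simp only [mem_univ, true_and, mem_sdiff, mem_union, not_or] at hh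
      simp [sgn, hf, hfA, hh.1, hh.2])
  rw [card_sdiff_of_subset (subset_univ _), card_univ, hE, card_union_of_disjoint hAB,
    filter_filter] at htr
  have hO : ((m - (A.card + B.card) + 1 : ℕ) : ℚ) = m - A.card - B.card + 1 := by
    push_cast [hABm]; ring
  refine refine_bound (by exact_mod_cast (by omega)) (by exact_mod_cast hm)
    (by exact_mod_cast hF) (X := (univ.filter (fun g : E ≃ Fin m =>
      lab g e = m ∧ dif A B g < 0)).card)
    (s := (univ.filter (fun g : E ≃ Fin m => lab g e = m)).card) ?_ (by exact_mod_cast hfib) ?_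
  · exact_mod_cast (Nat.mul_le_mul_left _ (by omega)).trans h
  · rw [← hO]
    have h4 : ((univ.filter (fun g : E ≃ Fin m => lab g e = m)).card : ℚ) ≤
      2 * (univ.filter (fun g : E ≃ Fin m => lab g e = m ∧ dif A B g < 0)).card +
      (univ.filter (fun g : E ≃ Fin m => lab g e = m ∧ dif A B g = 0)).card := by
      exact_mod_cast ht
    have h5 : ((univ.filter (fun g : E ≃ Fin m => lab g e = m ∧ dif A B g = 0)).card : ℚ) ≤
        1 / (m - (A.card + B.card) + 1 : ℕ) *
        (univ.filter (fun g : E ≃ Fin m => lab g e = m)).card := by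
      rw [one_div_mul_eq_div, le_div_iff₀ (by exact_mod_cast (by omega)), mul_comm]
      exact_mod_cast htr
    linarith

/-! ### Equal sizes at least three -/

/-- The labellings that give `e` the label `1` and in which `x` carries the largest label
within `T`. -/
def maxAt (m : ℕ) (T : Finset E) (e x : E) : Finset (E ≃ Fin m) :=
  univ.filter (fun g => lab g e = 1 ∧ ∀ y ∈ T, lab g y ≤ lab g x)

lemma mem_maxAt {T : Finset E} {e x : E} {g : E ≃ Fin m} :
    g ∈ maxAt m T e x ↔ lab g e = 1 ∧ ∀ y ∈ T, lab g y ≤ lab g x := by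
  simp [maxAt]

lemma sw_mem_maxAt {T : Finset E} {e x y : E} {g : E ≃ Fin m} (heT : e ∉ T) (hx : x ∈ T)
    (hy : y ∈ T) (hg : g ∈ maxAt m T e x) : sw x y g ∈ maxAt m T e y := by
  rw [mem_maxAt] at *
  refine ⟨?_, fun z hz => ?_⟩
  · rw [lab_sw_of_ne g (by rintro rfl; exact heT hx) (by rintro rfl; exact heT hy), hg.1]
  · rw [lab_sw_right]
    by_cases h1 : z = x
    · subst h1; rw [lab_sw_left]; exact hg.2 _ hy
    by_cases h2 : z = y
    · subst h2; rw [lab_sw_right]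
    rw [lab_sw_of_ne g h1 h2]; exact hg.2 _ hz

/-- By symmetry the largest label within `T` is equally likely at each element of `T`. -/
lemma card_maxAt {T : Finset E} {e x : E} (heT : e ∉ T) (hx : x ∈ T) :
    T.card * (maxAt m T e x).card =
      (univ.filter (fun g : E ≃ Fin m => lab g e = 1)).card := by
  have hsum : (univ.filter (fun g : E ≃ Fin m => lab g e = 1)) =
      T.biUnion (fun y => maxAt m T e y) := by
    ext g
    simp only [mem_filter, mem_univ, true_and, mem_biUnion, mem_maxAt]
    constructor
    · intro h
      obtain ⟨y, hy, hm⟩ := T.exists_max_image (lab g) ⟨x, hx⟩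
      exact ⟨y, hy, h, hm⟩
    · rintro ⟨_, _, h, _⟩; exact h
  rw [hsum, card_biUnion]
  · rw [sum_congr rfl (g := fun _ => (maxAt m T e x).card), sum_const, smul_eq_mul]
    intro y hy
    apply card_bij' (fun g _ => sw x y g) (fun g _ => sw x y g)
    · intro g hg
      have := sw_mem_maxAt heT hy hx hg
      rwa [sw, Equiv.swap_comm] at this
    · intro g hg; exact sw_mem_maxAt heT hx hy hg
    · intro g _; exact sw_sw _ _ _
    · intro g _; exact sw_sw _ _ _
  · intro y hy z hz hne
    rw [Function.onFun, disjoint_left]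
    intro g h1 h2
    rw [mem_maxAt] at h1 h2
    exact hne (lab_inj g (le_antisymm (h2.2 _ hy) (h1.2 _ hz)))

/-- Reflecting the labels strictly between those of `e` and `x` negates the difference when
`A` and `B` have the same size and `e`, `x` carry the extreme labels. -/
lemma dif_reflect_maxAt {A B : Finset E} {e x : E} (he : e ∈ A) (hAB : Disjoint A B)
    (hx : x ∈ A.erase e) (hcard : A.card = B.card) {g : E ≃ Fin m}
    (hg : g ∈ maxAt m (A.erase e ∪ B) e x) :
    dif A B (reflect 2 (lab g x - 1).toNat g) = - dif A B g ∧
    lab (reflect 2 (lab g x - 1).toNat g) x = lab g x ∧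
    reflect 2 (lab g x - 1).toNat g ∈ maxAt m (A.erase e ∪ B) e x := by
  rw [mem_maxAt] at hg
  have hxA : x ∈ A := mem_of_mem_erase hx
  have hxe : x ≠ e := ne_of_mem_erase hx
  have hxm := lab_le g x
  have hx1 := lab_pos g x
  have heB : e ∉ B := disjoint_left.1 hAB he
  have hxB : x ∉ B := disjoint_left.1 hAB hxA
  set g' := reflect 2 (lab g x - 1).toNat g with hg'
  have e1 : lab g' e = 1 := by rw [hg', lab_reflect_out (by left; rw [hg.1]; norm_num), hg.1]
  have x1 : lab g' x = lab g x := by rw [hg', lab_reflect_out (by right; omega)]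
  have mid : ∀ y ∈ A.erase e ∪ B, y ≠ x → lab g' y = lab g x + 1 - lab g y ∧ 2 ≤ lab g y := by
    intro y hy hyx
    have hye : y ≠ e := by
      rintro rfl
      rcases mem_union.1 hy with h | h
      · exact ne_of_mem_erase h rfl
      · exact heB h
    have h1 := lab_pos g y
    have h2 : lab g y ≠ 1 := fun h => hye (lab_inj g (h.trans hg.1.symm))
    have h3 := hg.2 y hy
    have h4 : lab g y ≠ lab g x := fun h => hyx (lab_inj g h)
    refine ⟨?_, by omega⟩
    rw [hg', lab_reflect_in (by omega) (by norm_num) (by push_cast; omega) (by omega)]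
    push_cast; omega
  refine ⟨?_, x1, ?_⟩
  · have hA : ∑ y ∈ A, lab g' y + ∑ y ∈ A, lab g y = (lab g x + 1) * A.card := by
      rw [← sum_add_distrib, ← add_sum_erase _ _ he, ← add_sum_erase _ _ hx,
        sum_congr rfl (g := fun _ => lab g x + 1) (by
          intro y hy
          rw [(mid y (mem_union_left _ (mem_of_mem_erase hy)) (ne_of_mem_erase hy)).1]; ring),
        sum_const, e1, x1, hg.1, card_erase_of_mem hx, card_erase_of_mem he]
      have h2 : 2 ≤ A.card := by
        have := card_pos.2 ⟨x, hx⟩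
        rw [card_erase_of_mem he] at this; omega
      rw [Nat.sub_sub, nsmul_eq_mul, Nat.cast_sub h2]; push_cast; ring
    have hB : ∑ y ∈ B, lab g' y + ∑ y ∈ B, lab g y = (lab g x + 1) * B.card := by
      rw [← sum_add_distrib, sum_congr rfl (g := fun _ => lab g x + 1) (by
          intro y hy
          rw [(mid y (mem_union_right _ hy) (by rintro rfl; exact hxB hy)).1]; ring),
        sum_const, nsmul_eq_mul]; ring
    rw [hcard] at hA
    unfold dif; linarith
  · rw [mem_maxAt]
    refine ⟨e1, fun y hy => ?_⟩
    by_cases hyx : y = x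
    · rw [hyx]
    · have := mid y hy hyx; rw [x1]; omega

/-- On `maxAt` positive and negative differences are equally frequent, by reflection, and a
proportion of at most `1 / (k + 2)` of the differences is zero, by exchanging labels between a
third element of `A` and the elements of `B`. -/
lemma card_maxAt_pos {A B : Finset E} {e x : E} {k : ℕ} (he : e ∈ A) (hAB : Disjoint A B)
    (hx : x ∈ A.erase e) (hA : A.card = k + 1) (hB : B.card = k + 1) (hk : 2 ≤ k) :
    (k + 1) * (maxAt m (A.erase e ∪ B) e x).card ≤ 2 * (k + 2) *
      ((maxAt m (A.erase e ∪ B) e x).filter (fun g => 0 < dif A B g)).card := by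
  set T := A.erase e ∪ B with hT
  have hxA : x ∈ A := mem_of_mem_erase hx
  have hxe : x ≠ e := ne_of_mem_erase hx
  have heB : e ∉ B := disjoint_left.1 hAB he
  have hxB : x ∉ B := disjoint_left.1 hAB hxA
  have h1 : ((maxAt m T e x).filter (fun g => dif A B g < 0)).card ≤
      ((maxAt m T e x).filter (fun g => 0 < dif A B g)).card := by
    apply card_le_card_of_injOn (fun g => reflect 2 (lab g x - 1).toNat g)
    · intro g hg
      simp only [coe_filter, Set.mem_ofPred_eq] at hg ⊢
      have := dif_reflect_maxAt he hAB hx (hA.trans hB.symm) hg.1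
      exact ⟨this.2.2, by omega⟩
    · intro g hg g' hg' heq
      simp only [coe_filter, Set.mem_ofPred_eq] at hg hg' heq
      have t1 := dif_reflect_maxAt he hAB hx (hA.trans hB.symm) hg.1
      have t2 := dif_reflect_maxAt he hAB hx (hA.trans hB.symm) hg'.1
      have hl : lab g x = lab g' x := by rw [← t1.2.1, ← t2.2.1, heq]
      rw [hl] at heq
      exact Function.LeftInverse.injective (reflect_reflect _ _) heq
  have h2 : maxAt m T e x ⊆ (maxAt m T e x).filter (fun g => 0 < dif A B g) ∪
      ((maxAt m T e x).filter (fun g => dif A B g < 0) ∪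
      (maxAt m T e x).filter (fun g => dif A B g = 0)) := by
    intro g hg; simp only [mem_union, mem_filter, hg, true_and]; omega
  have h3 := (card_le_card h2).trans ((card_union_le _ _).trans
    (Nat.add_le_add_left (card_union_le _ _) _))
  obtain ⟨f, hf⟩ : ((A.erase e).erase x).Nonempty := by
    rw [← card_pos, card_erase_of_mem hx, card_erase_of_mem he]; omega
  have hfx := ne_of_mem_erase hf
  have hf1 := mem_of_mem_erase hf
  have hfe := ne_of_mem_erase hf1
  have hfA := mem_of_mem_erase hf1
  have hfB : f ∉ B := disjoint_left.1 hAB hfA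
  have h4 := transposition (A := A) (B := B) (maxAt m T e x) f B hfB (by
      intro g hg h hh
      rw [mem_maxAt] at hg ⊢
      have hhe : e ≠ h := by rintro rfl; exact heB hh
      have hhx : x ≠ h := by rintro rfl; exact hxB hh
      refine ⟨by rw [lab_sw_of_ne g hfe.symm hhe, hg.1], fun y hy => ?_⟩
      rw [lab_sw_of_ne g hfx.symm hhx]
      by_cases h1 : y = f
      · subst h1; rw [lab_sw_left]; exact hg.2 _ (mem_union_right _ hh)
      by_cases h2 : y = h
      · subst h2; rw [lab_sw_right]; exact hg.2 _ (mem_union_left _ hf1)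
      rw [lab_sw_of_ne g h1 h2]; exact hg.2 _ hy) 2 (by norm_num) (by
      intro h hh
      have : h ∉ A := disjoint_right.1 hAB hh
      simp [sgn, hfA, hfB, hh, this])
  rw [hB] at h4
  nlinarith

/-- Summation of `card_maxAt_pos` over the possible positions `x ∈ A \ {e}` of the maximum. -/
lemma card_bottom_pos {A B : Finset E} {e : E} {k : ℕ} (he : e ∈ A) (hAB : Disjoint A B)
    (hA : A.card = k + 1) (hB : B.card = k + 1) (hk : 2 ≤ k) :
    k * (k + 1) * (univ.filter (fun g : E ≃ Fin m => lab g e = 1)).card ≤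
      2 * (k + 2) * (2 * k + 1) *
      (univ.filter (fun g : E ≃ Fin m => lab g e = 1 ∧ 0 < dif A B g)).card := by
  set T := A.erase e ∪ B with hT
  have heB : e ∉ B := disjoint_left.1 hAB he
  have heT : e ∉ T := by simp [hT, heB]
  have hcT : T.card = 2 * k + 1 := by
    rw [hT, card_union_of_disjoint (hAB.mono_left (erase_subset _ _)), card_erase_of_mem he, hA, hB]
    omega
  have hcA : (A.erase e).card = k := by rw [card_erase_of_mem he, hA]; omega
  have h1 : ∑ x ∈ A.erase e, ((maxAt m T e x).filter (fun g => 0 < dif A B g)).card ≤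
      (univ.filter (fun g : E ≃ Fin m => lab g e = 1 ∧ 0 < dif A B g)).card := by
    rw [← card_biUnion]
    · apply card_le_card
      intro g
      simp only [mem_biUnion, mem_filter, mem_univ, true_and, mem_maxAt]
      rintro ⟨x, _, h1, h2⟩; exact ⟨h1.1, h2⟩
    · intro y hy z hz hne
      rw [Function.onFun, disjoint_left]
      intro g h1 h2
      simp only [mem_filter, mem_maxAt] at h1 h2
      exact hne (lab_inj g (le_antisymm (h2.1.2 _ (mem_union_left _ hy))
        (h1.1.2 _ (mem_union_left _ hz))))
  calc k * (k + 1) * (univ.filter (fun g : E ≃ Fin m => lab g e = 1)).card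
      = ∑ x ∈ A.erase e, (k + 1) * (univ.filter (fun g : E ≃ Fin m => lab g e = 1)).card := by
        rw [sum_const, hcA, smul_eq_mul, mul_assoc]
    _ ≤ ∑ x ∈ A.erase e, (2 * k + 1) * (2 * (k + 2) *
          ((maxAt m T e x).filter (fun g => 0 < dif A B g)).card) := by
        apply sum_le_sum
        intro x hx
        rw [← card_maxAt (m := m) heT (mem_union_left _ hx), hcT]
        have := card_maxAt_pos (m := m) he hAB hx hA hB hk
        calc _ = (2 * k + 1) * ((k + 1) * (maxAt m T e x).card) := by ring
          _ ≤ _ := Nat.mul_le_mul_left _ this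
    _ = 2 * (k + 2) * (2 * k + 1) *
          ∑ x ∈ A.erase e, ((maxAt m T e x).filter (fun g => 0 < dif A B g)).card := by
        rw [mul_sum]; apply sum_congr rfl; intros; ring
    _ ≤ _ := Nat.mul_le_mul_left _ h1

lemma dif_reverse {A B : Finset E} (hcard : A.card = B.card) (g : E ≃ Fin m) :
    dif A B (reflect 1 m g) = - dif A B g := by
  have h : ∀ C : Finset E, ∑ x ∈ C, lab (reflect 1 m g) x + ∑ x ∈ C, lab g x =
      (m + 1) * C.card := by
    intro C
    rw [← sum_add_distrib, sum_congr rfl (g := fun _ => (m + 1 : ℤ)) (by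
      intro x _
      rw [lab_reflect_in le_rfl le_rfl (by exact_mod_cast lab_pos g x) (lab_le g x)]
      push_cast; ring), sum_const, nsmul_eq_mul]; ring
  have hA := h A
  have hB := h B
  rw [hcard] at hA
  unfold dif; linarith

lemma card_bottom_le_top {A B : Finset E} (e : E) (hcard : A.card = B.card) :
    (univ.filter (fun g : E ≃ Fin m => lab g e = 1 ∧ 0 < dif A B g)).card ≤
    (univ.filter (fun g : E ≃ Fin m => lab g e = m ∧ dif A B g < 0)).card := by
  apply card_le_card_of_injOn (reflect 1 m)
  · intro g hg
    simp only [coe_filter, mem_univ, true_and, Set.mem_ofPred_eq] at hg ⊢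
    refine ⟨?_, by rw [dif_reverse hcard]; omega⟩
    rw [lab_reflect_in le_rfl le_rfl (by exact_mod_cast lab_pos g e) (lab_le g e), hg.1]
    push_cast; ring
  · exact (Function.LeftInverse.injective (reflect_reflect 1 m)).injOn

/-- Collision bound for equal sizes at least `3`: both chains starting with `dif > 0` and chains
ending with `dif < 0` are frequent. -/
lemma prob_lt_of_eq (hE : Fintype.card E = m) {A B : Finset E} {k : ℕ}
    (hAB : Disjoint A B) (hA : A.card = k + 1) (hB : B.card = k + 1) (hk : 2 ≤ k)
    (hm : 3 * k + 3 ≤ m) : prob m A B < 1 / m := by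
  obtain ⟨e, he⟩ : A.Nonempty := card_pos.1 (by omega)
  have h := insertion (m := m) he hAB
  have hF := card_labellings_pos hE
  rw [card_compl_erase hE he, hA] at h
  have hN : ((m + 1 - (k + 1) : ℕ) : ℚ) = m - k := by
    rw [Nat.cast_sub (by omega)]; push_cast; ring
  have hfib := card_fibre hE e (l := 1) (by omega) (by omega)
  have hb := card_bottom_pos (m := m) he hAB hA hB hk
  have ht := card_bottom_le_top (m := m) e (hA.trans hB.symm)
  have hkq : (2 : ℚ) ≤ k := by exact_mod_cast hk
  have hmq : 3 * (k : ℚ) + 3 ≤ m := by exact_mod_cast hm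
  have key : prob m A B ≤ 1 / (m - k) - (k * (k + 1) / ((k + 2) * (2 * k + 1))) / m := by
    rw [← hN]
    refine refine_bound (by exact_mod_cast (by omega)) (by linarith)
      (by exact_mod_cast hF)
      (X := 2 * (univ.filter (fun g : E ≃ Fin m => lab g e = 1 ∧ 0 < dif A B g)).card)
      (s := (univ.filter (fun g : E ≃ Fin m => lab g e = 1)).card) ?_
      (by exact_mod_cast hfib) ?_
    · exact_mod_cast (Nat.mul_le_mul_left _ (by omega)).trans h
    · rw [div_mul_eq_mul_div, div_le_iff₀ (by positivity)]
      have : (k * (k + 1) * (univ.filter (fun g : E ≃ Fin m => lab g e = 1)).card : ℚ) ≤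
        2 * (k + 2) * (2 * k + 1) *
        (univ.filter (fun g : E ≃ Fin m => lab g e = 1 ∧ 0 < dif A B g)).card := by
        exact_mod_cast hb
      linarith
  refine key.trans_lt ?_
  have hmk : (0 : ℚ) < m - k := by linarith
  have hm0 : (0 : ℚ) < m := by linarith
  rw [sub_lt_iff_lt_add, ← add_div, div_lt_div_iff₀ hmk hm0, one_mul]
  have hy : (k : ℚ) < k * (k + 1) / ((k + 2) * (2 * k + 1)) * (m - k) := by
    rw [div_mul_eq_mul_div, lt_div_iff₀ (by positivity)]
    nlinarith [mul_le_mul_of_nonneg_left hmq (show (0 : ℚ) ≤ k * (k + 1) by positivity)]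
  linarith

/-! ### Equal sizes two -/

/-- Triples `(a, b, c)` of distinct numbers below `m` for which `d = a + b - c` is a fourth
number below `m`, distinct from them, so that `a + b = c + d`. -/
def quads (m : ℕ) : Finset (ℕ × ℕ × ℕ) :=
  (range m ×ˢ range m ×ˢ range m).filter (fun t => t.1 ≠ t.2.1 ∧ t.1 ≠ t.2.2 ∧ t.2.1 ≠ t.2.2 ∧
    t.2.2 ≤ t.1 + t.2.1 ∧ t.1 + t.2.1 < m + t.2.2 ∧ 2 * t.2.2 ≠ t.1 + t.2.1)

lemma mem_quads {m a b c : ℕ} : (a, b, c) ∈ quads m ↔ (a < m ∧ b < m ∧ c < m) ∧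
    a ≠ b ∧ a ≠ c ∧ b ≠ c ∧ c ≤ a + b ∧ a + b < m + c ∧ 2 * c ≠ a + b := by
  simp [quads]

lemma card_pairs_lt (m : ℕ) :
    2 * ((range m ×ˢ range m).filter (fun t => t.1 < t.2)).card = m * (m - 1) := by
  have h1 : ((range m ×ˢ range m).filter (fun t => t.1 < t.2)).card =
      ((range m ×ˢ range m).filter (fun t => t.2 < t.1)).card := by
    apply card_bij' (fun t _ => t.swap) (fun t _ => t.swap) <;> simp <;> tauto
  have h2 : (range m).offDiag = (range m ×ˢ range m).filter (fun t => t.1 < t.2) ∪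
      (range m ×ˢ range m).filter (fun t => t.2 < t.1) := by
    ext ⟨a, b⟩; simp; omega
  have h3 := offDiag_card (range m)
  rw [h2, card_union_of_disjoint (by
    rw [disjoint_left]; rintro ⟨a, b⟩; simp; omega), card_range] at h3
  rw [Nat.mul_sub, mul_one]
  omega

/-- A solution that uses the new number `m` uses it in one of four positions, and each time it is
determined by a pair `x < y < m`. -/
lemma card_quads_succ (m : ℕ) : (quads (m + 1)).card ≤ (quads m).card + 2 * (m * (m - 1)) := by
  set L := (range m ×ˢ range m).filter (fun t => t.1 < t.2) with hL
  have hLc := card_pairs_lt m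
  rw [← hL] at hLc
  set Q := quads (m + 1) with hQ
  have hsub : Q ⊆ quads m ∪ (Q.filter (fun t => t.1 = m) ∪ (Q.filter (fun t => t.2.1 = m) ∪
      (Q.filter (fun t => t.2.2 = m) ∪ Q.filter (fun t => t.1 + t.2.1 = m + t.2.2 ∧
        t.1 < m ∧ t.2.1 < m)))) := by
    rintro ⟨a, b, c⟩ h
    simp only [mem_union, mem_filter, h, true_and, mem_quads]
    rw [hQ, mem_quads] at h
    omega
  have b1 : (Q.filter (fun t => t.1 = m)).card ≤ L.card := by
    apply card_le_card_of_injOn (fun t => (t.2.1, t.2.2))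
    · rintro ⟨a, b, c⟩ h
      simp only [coe_filter, Set.mem_ofPred_eq, hQ, mem_quads, hL, mem_product, mem_range] at h ⊢
      omega
    · rintro ⟨a, b, c⟩ h ⟨a', b', c'⟩ h' heq
      simp only [coe_filter, Set.mem_ofPred_eq, hQ, mem_quads, Prod.mk.injEq] at h h' heq ⊢
      omega
  have b2 : (Q.filter (fun t => t.2.1 = m)).card ≤ L.card := by
    apply card_le_card_of_injOn (fun t => (t.1, t.2.2))
    · rintro ⟨a, b, c⟩ h
      simp only [coe_filter, Set.mem_ofPred_eq, hQ, mem_quads, hL, mem_product, mem_range] at h ⊢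
      omega
    · rintro ⟨a, b, c⟩ h ⟨a', b', c'⟩ h' heq
      simp only [coe_filter, Set.mem_ofPred_eq, hQ, mem_quads, Prod.mk.injEq] at h h' heq ⊢
      omega
  have b3 : (Q.filter (fun t => t.2.2 = m)).card ≤ L.card := by
    apply card_le_card_of_injOn (fun t => (m - 1 - t.1, t.2.1))
    · rintro ⟨a, b, c⟩ h
      simp only [coe_filter, Set.mem_ofPred_eq, hQ, mem_quads, hL, mem_product, mem_range] at h ⊢
      omega
    · rintro ⟨a, b, c⟩ h ⟨a', b', c'⟩ h' heq
      simp only [coe_filter, Set.mem_ofPred_eq, hQ, mem_quads, Prod.mk.injEq] at h h' heq ⊢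
      omega
  have b4 : (Q.filter (fun t => t.1 + t.2.1 = m + t.2.2 ∧ t.1 < m ∧ t.2.1 < m)).card
      ≤ L.card := by
    apply card_le_card_of_injOn (fun t => (m - 1 - t.1, t.2.1))
    · rintro ⟨a, b, c⟩ h
      simp only [coe_filter, Set.mem_ofPred_eq, hQ, mem_quads, hL, mem_product, mem_range] at h ⊢
      omega
    · rintro ⟨a, b, c⟩ h ⟨a', b', c'⟩ h' heq
      simp only [coe_filter, Set.mem_ofPred_eq, hQ, mem_quads, Prod.mk.injEq] at h h' heq ⊢
      omega
  have h := card_le_card hsub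
  have h' := h.trans ((card_union_le _ _).trans (Nat.add_le_add_left ((card_union_le _ _).trans
    (Nat.add_le_add_left ((card_union_le _ _).trans (Nat.add_le_add_left
      (card_union_le _ _) _)) _)) _))
  omega

lemma card_quads_lt (j : ℕ) : (quads (j + 6)).card < (j + 5) * (j + 4) * (j + 3) := by
  induction j with
  | zero =>
    have : (quads 6).card = 56 := by decide +kernel
    simp [this]
  | succ j ih =>
    have h := card_quads_succ (j + 6)
    have e : j + 1 + 6 = j + 6 + 1 := by ring
    rw [e]
    have e2 : j + 6 - 1 = j + 5 := by omega
    rw [e2] at h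
    nlinarith

/-- Collision bound for two pairs: the labels of the four elements form a uniformly distributed
injective tuple, so the bound reduces to `card_quads_lt`. -/
lemma prob_lt_of_two (hE : Fintype.card E = m) {A B : Finset E} (hAB : Disjoint A B)
    (hA : A.card = 2) (hB : B.card = 2) (hm : 6 ≤ m) : prob m A B < 1 / m := by
  obtain ⟨p, q, hpq, rfl⟩ := card_eq_two.1 hA
  obtain ⟨r, s, hrs, rfl⟩ := card_eq_two.1 hB
  simp only [disjoint_insert_left, disjoint_singleton_left, mem_insert, mem_singleton,
    not_or] at hAB
  obtain ⟨⟨hpr, hps⟩, hqr, hqs⟩ := hAB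
  let ι : Fin 4 ↪ E := ⟨![p, q, r, s], by
    intro i j h
    fin_cases i <;> fin_cases j <;> simp_all [eq_comm]⟩
  let φ : (E ≃ Fin m) → (Fin 4 ↪ Fin m) := fun g => ι.trans g.toEmbedding
  have hF := card_labellings_pos hE
  obtain ⟨g0⟩ := Fintype.card_pos_iff.1 hF
  set c := (univ.filter (fun g => φ g = φ g0)).card with hc
  have hfib : ∀ τ, (univ.filter (fun g => φ g = τ)).card = c := by
    intro τ
    have := Equiv.Perm.isMultiplyPretransitive (Fin m) 4
    obtain ⟨σ, hσ⟩ := MulAction.exists_smul_eq (Equiv.Perm (Fin m)) (φ g0) τ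
    symm
    have hφ : ∀ (g : E ≃ Fin m) (σ : Equiv.Perm (Fin m)), φ (g.trans σ) = σ • φ g := by
      intro g σ; ext i; rfl
    refine card_bij' (fun g _ => g.trans σ) (fun g _ => g.trans σ.symm) ?_ ?_ ?_ ?_
    · intro g hg
      simp only [mem_filter, mem_univ, true_and] at hg ⊢
      rw [hφ, hg, hσ]
    · intro g hg
      simp only [mem_filter, mem_univ, true_and] at hg ⊢
      rw [hφ, hg, ← hσ]
      exact inv_smul_smul σ _
    · intro g _; ext; simp
    · intro g _; ext; simp
  set T := univ.filter (fun τ : Fin 4 ↪ Fin m =>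
    (τ 0 : ℕ) + (τ 1 : ℕ) = (τ 2 : ℕ) + (τ 3 : ℕ)) with hT
  have hFc : Fintype.card (E ≃ Fin m) = m.descFactorial 4 * c := by
    rw [← card_univ, card_eq_sum_card_fiberwise (f := φ) (t := univ) (by intro _ _; simp),
      sum_congr rfl (fun τ _ => hfib τ), sum_const, card_univ, Fintype.card_embedding_eq]
    simp
  have hZ : (univ.filter (fun g : E ≃ Fin m => dif {p, q} {r, s} g = 0)).card = T.card * c := by
    rw [card_eq_sum_card_fiberwise (f := φ) (t := T)]
    · rw [sum_congr rfl (g := fun _ => c), sum_const, smul_eq_mul]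
      intro τ hτ
      rw [← hfib τ, filter_filter]
      congr 1
      ext g
      simp only [mem_filter, mem_univ, true_and, and_iff_right_iff_imp]
      rintro rfl
      simp only [hT, mem_filter, mem_univ, true_and] at hτ
      have h' : (g p : ℕ) + g q = g r + g s := hτ
      rw [dif, sum_pair hpq, sum_pair hrs]; unfold lab; omega
    · intro g hg
      simp only [coe_filter, mem_univ, true_and, Set.mem_ofPred_eq, hT] at hg ⊢
      change (g p : ℕ) + g q = g r + g s
      rw [dif, sum_pair hpq, sum_pair hrs] at hg; unfold lab at hg; omega
  have hTq : T.card ≤ (quads m).card := by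
    apply card_le_card_of_injOn (fun τ => ((τ 0 : ℕ), (τ 1 : ℕ), (τ 2 : ℕ)))
    · intro τ hτ
      simp only [coe_filter, mem_univ, true_and, Set.mem_ofPred_eq, hT, mem_coe,
        mem_quads] at hτ ⊢
      have ne : ∀ i j : Fin 4, i ≠ j → (τ i : ℕ) ≠ τ j := by
        intro i j hij h; exact hij (τ.injective (Fin.ext h))
      have n1 := ne 0 1 (by decide)
      have n2 := ne 0 2 (by decide)
      have n3 := ne 1 2 (by decide)
      have n4 := ne 2 3 (by decide)
      have l0 := (τ 0).2
      have l1 := (τ 1).2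
      have l2 := (τ 2).2
      have l3 := (τ 3).2
      omega
    · intro τ hτ τ' hτ' heq
      simp only [coe_filter, mem_univ, true_and, Set.mem_ofPred_eq, hT, Prod.mk.injEq] at hτ hτ' heq
      ext i
      fin_cases i
      · exact heq.1
      · exact heq.2.1
      · exact heq.2.2
      · change (τ 3 : ℕ) = τ' 3
        omega
  obtain ⟨j, rfl⟩ := Nat.exists_eq_add_of_le' hm
  have hq := card_quads_lt j
  have hd : (j + 6).descFactorial 4 = (j + 6) * ((j + 5) * (j + 4) * (j + 3)) := by
    simp [Nat.descFactorial]; ring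
  have hc0 : 0 < c := by
    rcases Nat.eq_zero_or_pos c with h | h
    · rw [h] at hFc; omega
    · exact h
  unfold prob
  rw [div_lt_div_iff₀ (by exact_mod_cast hF) (by positivity), one_mul, hZ, hFc, hd]
  have : T.card * c * (j + 6) < (j + 6) * ((j + 5) * (j + 4) * (j + 3)) * c := by
    have h1 : T.card < (j + 5) * (j + 4) * (j + 3) := by omega
    have h2 := Nat.mul_lt_mul_of_pos_right h1 (Nat.mul_pos hc0 (show 0 < j + 6 by omega))
    calc _ = T.card * (c * (j + 6)) := by ring
      _ < _ := h2
      _ = _ := by ring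
  exact_mod_cast this

/-! ### Collision bounds for light edges and for neighbours of a heavy edge -/

lemma prob_eq_zero {A B : Finset E} (h : ∀ g : E ≃ Fin m, dif A B g ≠ 0) : prob m A B = 0 := by
  simp [prob, h]

lemma prob_empty {A B : Finset E} (hA : A.card = 0) (hB : 1 ≤ B.card) : prob m A B = 0 := by
  apply prob_eq_zero
  intro g
  obtain ⟨b, hb⟩ := card_pos.1 hB
  have h1 : 0 < ∑ x ∈ B, lab g x := sum_pos (fun x _ => by have := lab_pos g x; omega) ⟨b, hb⟩
  rw [card_eq_zero] at hA
  simp only [dif, hA, sum_empty]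
  omega

lemma prob_singletons {A B : Finset E} (hAB : Disjoint A B) (hA : A.card = 1)
    (hB : B.card = 1) : prob m A B = 0 := by
  apply prob_eq_zero
  intro g h
  obtain ⟨a, rfl⟩ := card_eq_one.1 hA
  obtain ⟨b, rfl⟩ := card_eq_one.1 hB
  simp only [dif, sum_singleton] at h
  have := lab_inj g (show lab g a = lab g b by omega)
  simp [this] at hAB

/-- The collision bound for edges that are not heavy. -/
lemma prob_lt (hE : Fintype.card E = m) {A B : Finset E} (hAB : Disjoint A B)
    (hle : A.card ≤ B.card) (hB : 1 ≤ B.card) (hm : A.card + B.card + 1 ≤ m)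
    (h3 : 3 * A.card ≤ m) : prob m A B < 1 / m := by
  have hm0 : (0 : ℚ) < m := by exact_mod_cast (by omega : 0 < m)
  rcases Nat.eq_zero_or_pos A.card with h0 | h0
  · rw [prob_empty h0 hB]; positivity
  have hA : A.Nonempty := card_pos.1 h0
  rcases Nat.lt_or_ge A.card B.card with hlt | hge
  · have h3q : 3 * (A.card : ℚ) ≤ m := by exact_mod_cast h3
    have h0q : (1 : ℚ) ≤ A.card := by exact_mod_cast h0
    have hN : (0 : ℚ) < m + 1 - A.card := by linarith
    rcases Nat.lt_or_ge (A.card + 1) B.card with hlt2 | hge2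
    · refine (prob_le_of_lt' hE hA hAB hlt2).trans_lt ?_
      rw [sub_lt_iff_lt_add, ← add_div, div_lt_div_iff₀ hN hm0]
      linarith
    · have hb : B.card = A.card + 1 := by omega
      refine (prob_le_of_lt hE hA hAB hlt).trans_lt ?_
      rw [sub_lt_iff_lt_add, ← add_div, div_lt_div_iff₀ hN hm0, hb]
      rw [hb] at hm
      have hmq : 2 * (A.card : ℚ) + 2 ≤ m := by exact_mod_cast (by omega)
      have hP : (0 : ℚ) < m - A.card - (A.card + 1 : ℕ) + 1 := by push_cast; linarith
      set P : ℚ := m - A.card - (A.card + 1 : ℕ) + 1 with hPd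
      have hPe : P = m - 2 * A.card := by rw [hPd]; push_cast; ring
      have key : (1 / P) * (m + 1 - A.card) < m + 3 - 3 * A.card := by
        rw [one_div_mul_eq_div, div_lt_iff₀ hP, hPe]
        nlinarith [mul_nonneg (sub_nonneg.2 h3q) (sub_nonneg.2 hmq),
          mul_nonneg (sub_nonneg.2 h3q) (sub_nonneg.2 h0q),
          mul_nonneg (sub_nonneg.2 h0q) (sub_nonneg.2 hmq)]
      linarith
  · have heq : A.card = B.card := le_antisymm hle hge
    obtain h1 | h2 | h3' : A.card = 1 ∨ A.card = 2 ∨ 3 ≤ A.card := by omega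
    · rw [prob_singletons hAB h1 (by omega)]; positivity
    · exact prob_lt_of_two hE hAB h2 (by omega) (by omega)
    · exact prob_lt_of_eq hE (k := A.card - 1) hAB (by omega) (by omega) (by omega) (by omega)

/-- The bound used for the edges adjacent to a heavy edge; `a` and `q` stand for the smaller
endpoint degree minus one and for the number of adjacent edges of the heavy edge. -/
lemma prob_le_adjacent (hE : Fintype.card E = m) {A B : Finset E} (hAB : Disjoint A B)
    {a q : ℕ} (ha : A.card + 1 ≤ a) (hb : a ≤ B.card) (hq : 2 * a ≤ q) (hqm : q + 1 ≤ m)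
    (hA : A.card + q ≤ m) :
    prob m A B ≤ 1 / (q + 1) - ((1 - 1 / (a + 1)) / 2) / m := by
  have hm0 : (0 : ℚ) < m := by exact_mod_cast (by omega : 0 < m)
  have hqmq : (q : ℚ) + 1 ≤ m := by exact_mod_cast hqm
  have hAq : (A.card : ℚ) + q ≤ m := by exact_mod_cast hA
  have hq0 : (0 : ℚ) ≤ q := by positivity
  have ha0 : (0 : ℚ) < a + 1 := by positivity
  have hinv : (0 : ℚ) < 1 / (a + 1) := by positivity
  have mono : ∀ y : ℚ, 1 - 1 / ((a : ℚ) + 1) ≤ y →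
      ((1 - 1 / ((a : ℚ) + 1)) / 2) / m ≤ (y / 2) / m := by
    intro y hy
    gcongr
  rcases Nat.eq_zero_or_pos A.card with h0 | h0
  · rw [prob_empty h0 (by omega)]
    have h1 : 1 / (m : ℚ) ≤ 1 / (q + 1) := one_div_le_one_div_of_le (by linarith) hqmq
    have h2 := mono 1 (by linarith)
    have h3 : (1 / 2) / (m : ℚ) ≤ 1 / m := by gcongr; norm_num
    linarith
  have hAn : A.Nonempty := card_pos.1 h0
  have hN : 1 / ((m : ℚ) + 1 - A.card) ≤ 1 / (q + 1) :=
    one_div_le_one_div_of_le (by linarith) (by linarith)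
  rcases Nat.lt_or_ge (A.card + 1) B.card with hlt2 | hge2
  · have h1 := prob_le_of_lt' hE hAn hAB hlt2
    have h2 := mono 1 (by linarith)
    linarith
  · have h1 := prob_le_of_lt hE hAn hAB (by omega)
    have hBa : B.card = a := by omega
    have hAa : A.card + 1 = a := by omega
    have hAaq : (A.card : ℚ) + 1 = a := by exact_mod_cast hAa
    have hqq : 2 * (a : ℚ) ≤ q := by exact_mod_cast hq
    rw [hBa] at h1
    have h2 := mono (1 - 1 / (m - A.card - a + 1)) (by
      have := one_div_le_one_div_of_le ha0 (b := (m : ℚ) - A.card - a + 1) (by linarith)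
      linarith)
    linarith

/-- The union bound in the presence of a heavy edge: the heavy edge, the `q` edges adjacent to it,
and the remaining `m - 1 - q` edges. -/
lemma heavy_arith {m a q : ℚ} (ha : 2 ≤ a) (hq : 2 * a ≤ q) (hqm : q + 1 ≤ m)
    (hm : m ≤ 3 * a - 1) :
    1 / (m + 1 - a) + q * (1 / (q + 1) - ((1 - 1 / (a + 1)) / 2) / m) + (m - 1 - q) * (1 / m)
      < 1 := by
  have hm0 : 0 < m := by linarith
  have h1 : 1 / (m + 1 - a) < 2 / m := by
    rw [div_lt_div_iff₀ (by linarith) hm0]; linarith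
  have h2 : q * (1 / (q + 1)) ≤ 1 - 1 / m := by
    have : 1 / m ≤ 1 / (q + 1) := one_div_le_one_div_of_le (by linarith) hqm
    have h : q * (1 / (q + 1)) = 1 - 1 / (q + 1) := by
      have : q + 1 ≠ 0 := by linarith
      field_simp; ring
    linarith
  have h3 : 6 * a - 2 ≤ q * (3 - 1 / (a + 1)) := by
    have hh : 1 / (a + 1) ≤ 1 := by
      rw [div_le_one (by linarith)]; linarith
    have : 6 * a - 2 ≤ 2 * a * (3 - 1 / (a + 1)) := by
      have e : 2 * a * (3 - 1 / (a + 1)) = 6 * a - 2 + 2 / (a + 1) := by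
        have : a + 1 ≠ 0 := by linarith
        field_simp; ring
      have : 0 < 2 / (a + 1) := by apply div_pos <;> linarith
      linarith
    nlinarith
  have h4 : 1 ≤ q * (((1 - 1 / (a + 1)) / 2) / m) + q / m := by
    have : q * (((1 - 1 / (a + 1)) / 2) / m) + q / m = (q * (3 - 1 / (a + 1)) / 2) / m := by
      ring
    rw [this, le_div_iff₀ hm0]
    linarith
  have h5 : (m - 1 - q) * (1 / m) = 1 - q / m - 1 / m := by field_simp; ring
  have h6 : 2 / m = 1 / m + 1 / m := by ring
  rw [mul_sub]
  linarith

end Labellings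

/-! ### The union bound over the edges of a graph -/

lemma exists_of_sum_prob_lt {E : Type*} [Fintype E] [DecidableEq E] {m : ℕ}
    (hE : Fintype.card E = m) (A B : E → Finset E) (h : ∑ e, prob m (A e) (B e) < 1) :
    ∃ g : E ≃ Fin m, ∀ e, dif (A e) (B e) g ≠ 0 := by
  by_contra hc
  push Not at hc
  have hF := card_labellings_pos hE
  have hsub : (univ : Finset (E ≃ Fin m)) ⊆
      univ.biUnion (fun e => univ.filter (fun g => dif (A e) (B e) g = 0)) := by
    intro g _
    obtain ⟨e, he⟩ := hc g
    simp only [mem_biUnion, mem_filter, mem_univ, true_and]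
    exact ⟨e, he⟩
  have h1 := (card_le_card hsub).trans card_biUnion_le
  rw [card_univ] at h1
  simp only [prob] at h
  rw [← sum_div, div_lt_one (by exact_mod_cast hF)] at h
  have h2 : (Fintype.card (E ≃ Fin m) : ℚ) ≤ ∑ e,
    ((univ.filter (fun g : E ≃ Fin m => dif (A e) (B e) g = 0)).card : ℚ) := by
    exact_mod_cast h1
  linarith

section Graph

variable {V : Type*} [Fintype V] [DecidableEq V] (G : SimpleGraph V) [DecidableRel G.Adj]

/-- The edges at `x`, as a finset of the subtype of edges. -/
def inc (x : V) : Finset G.edgeSet := univ.filter (fun e => x ∈ (e : Sym2 V))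

variable {G}

lemma mem_inc {x : V} {e : G.edgeSet} : e ∈ inc G x ↔ x ∈ (e : Sym2 V) := by simp [inc]

lemma map_inc (x : V) :
    (inc G x).map (Function.Embedding.subtype _) = G.incidenceFinset x := by
  ext e
  simp only [mem_map, mem_inc, Function.Embedding.subtype_apply, Subtype.exists,
    exists_and_right, exists_eq_right, SimpleGraph.mem_incidenceFinset,
    SimpleGraph.incidenceSet, Set.mem_ofPred_eq]
  constructor
  · rintro ⟨h, hx⟩; exact ⟨h, hx⟩
  · rintro ⟨h, hx⟩; exact ⟨h, hx⟩

lemma card_inc (x : V) : (inc G x).card = G.degree x := by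
  rw [← card_map (Function.Embedding.subtype _), map_inc, SimpleGraph.card_incidenceFinset_eq_degree]

lemma card_inc_inter {x y : V} (hxy : x ≠ y) : (inc G x ∩ inc G y).card ≤ 1 := by
  rw [card_le_one]
  intro e he e' he'
  simp only [mem_inter, mem_inc] at he he'
  apply Subtype.ext
  rw [(Sym2.mem_and_mem_iff hxy).1 he, (Sym2.mem_and_mem_iff hxy).1 he']

/-- Any two of the three vertices share at most one edge. -/
lemma degree_add_three {m : ℕ} (hE : Fintype.card G.edgeSet = m) {x y z : V} (hxy : x ≠ y)
    (hxz : x ≠ z) (hyz : y ≠ z) : G.degree x + G.degree y + G.degree z ≤ m + 3 := by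
  have h1 := card_union_add_card_inter (inc G x) (inc G y)
  have h2 := card_union_add_card_inter (inc G x ∪ inc G y) (inc G z)
  have h3 : ((inc G x ∪ inc G y) ∩ inc G z).card ≤ 2 := by
    rw [union_inter_distrib_right]
    exact (card_union_le _ _).trans (Nat.add_le_add (card_inc_inter hxz) (card_inc_inter hyz))
  have h4 := card_inc_inter (G := G) hxy
  have h5 : (inc G x ∪ inc G y ∪ inc G z).card ≤ m := hE ▸ card_le_univ _
  rw [card_inc] at h1 h2
  rw [card_inc] at h1
  omega

lemma disjoint_erase {x y : V} {e : G.edgeSet} (hxy : x ≠ y) (he : (e : Sym2 V) = s(x, y)) :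
    Disjoint ((inc G x).erase e) ((inc G y).erase e) := by
  rw [disjoint_left]
  intro e' h1 h2
  simp only [mem_erase, mem_inc] at h1 h2
  exact h1.1 (Subtype.ext (((Sym2.mem_and_mem_iff hxy).1 ⟨h1.2, h2.2⟩).trans he.symm))

/-- The union bound succeeds: `u e` and `v e` are the endpoints of `e`, the first one having the
smaller degree. -/
lemma sum_prob_lt {m : ℕ} (hE : Fintype.card G.edgeSet = m) (hm : 0 < m)
    (hiso : ∀ x y : V, G.Adj x y → ¬ (G.degree x = 1 ∧ G.degree y = 1))
    (u v : G.edgeSet → V) (hadj : ∀ e, G.Adj (u e) (v e))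
    (huv : ∀ e : G.edgeSet, (e : Sym2 V) = s(u e, v e)) (hdeg : ∀ e, G.degree (u e) ≤ G.degree (v e)) :
    ∑ e, prob m ((inc G (u e)).erase e) ((inc G (v e)).erase e) < 1 := by
  have hne : ∀ e, u e ≠ v e := fun e => (hadj e).ne
  have hue : ∀ e, e ∈ inc G (u e) := fun e => by rw [mem_inc, huv e]; simp
  have hve : ∀ e, e ∈ inc G (v e) := fun e => by rw [mem_inc, huv e]; simp
  have hdu : ∀ e, 1 ≤ G.degree (u e) := fun e => by
    rw [← card_inc]; exact card_pos.2 ⟨e, hue e⟩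
  have hdv : ∀ e, 2 ≤ G.degree (v e) := fun e => by
    have h1 := hiso _ _ (hadj e)
    have h2 := hdu e
    have h3 := hdeg e
    omega
  have hcA : ∀ e, ((inc G (u e)).erase e).card = G.degree (u e) - 1 := fun e => by
    rw [card_erase_of_mem (hue e), card_inc]
  have hcB : ∀ e, ((inc G (v e)).erase e).card = G.degree (v e) - 1 := fun e => by
    rw [card_erase_of_mem (hve e), card_inc]
  have hdis : ∀ e, Disjoint ((inc G (u e)).erase e) ((inc G (v e)).erase e) := fun e =>
    disjoint_erase (hne e) (huv e)
  have hsum : ∀ e, G.degree (u e) + G.degree (v e) ≤ m + 1 := fun e => by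
    have h1 := card_union_add_card_inter (inc G (u e)) (inc G (v e))
    have h2 := card_inc_inter (G := G) (hne e)
    have h3 : (inc G (u e) ∪ inc G (v e)).card ≤ m := hE ▸ card_le_univ _
    rw [card_inc, card_inc] at h1
    omega
  have light : ∀ e, 3 * (G.degree (u e) - 1) ≤ m →
      prob m ((inc G (u e)).erase e) ((inc G (v e)).erase e) < 1 / m := by
    intro e he
    have h1 := hdu e
    have h2 := hdv e
    have h3 := hdeg e
    have h4 := hsum e
    have h5 := hcA e
    have h6 := hcB e
    apply prob_lt hE (hdis e) <;> omega
  have hmq : (0 : ℚ) < m := by exact_mod_cast hm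
  by_cases hheavy : ∀ e, 3 * (G.degree (u e) - 1) ≤ m
  · have hnonempty : (univ : Finset G.edgeSet).Nonempty := by
      rw [← card_pos, card_univ, hE]; exact hm
    calc _ < ∑ e : G.edgeSet, 1 / (m : ℚ) :=
          sum_lt_sum_of_nonempty hnonempty (fun e _ => light e (hheavy e))
      _ = 1 := by rw [sum_const, card_univ, hE, nsmul_eq_mul]; field_simp
  push Not at hheavy
  obtain ⟨e₀, he₀⟩ := hheavy
  set x := u e₀ with hx
  set y := v e₀ with hy
  set a := G.degree x - 1 with ha
  have hxy : x ≠ y := hne e₀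
  have hdx := hdu e₀
  have hdy := hdv e₀
  have hdxy := hdeg e₀
  have hs := hsum e₀
  rw [← hx] at hdx hdxy hs
  rw [← hy] at hdy hdxy hs
  have hA0 : ((inc G x).erase e₀).card = a := hcA e₀
  have hB0 : ((inc G y).erase e₀).card = G.degree y - 1 := hcB e₀
  set Q := (inc G x).erase e₀ ∪ (inc G y).erase e₀ with hQ
  set q := G.degree x + G.degree y - 2 with hq
  have hQc : Q.card = q := by
    rw [hQ, card_union_of_disjoint (hdis e₀), hA0, hB0]; omega
  have heQ : e₀ ∉ Q := by simp [hQ]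
  -- every vertex off the heavy edge has smaller degree, and few edges remain for it
  have hz : ∀ z, z ≠ x → z ≠ y → G.degree z < G.degree x ∧ G.degree z + q ≤ m + 1 := by
    intro z hzx hzy
    have := degree_add_three hE hxy hzx.symm hzy.symm
    omega
  have hQbound : ∀ e ∈ Q, prob m ((inc G (u e)).erase e) ((inc G (v e)).erase e) ≤
      1 / (q + 1) - ((1 - 1 / (a + 1)) / 2) / m := by
    intro e he
    have hee : e ≠ e₀ := by rintro rfl; exact heQ he
    have hnot : ¬ (x ∈ (e : Sym2 V) ∧ y ∈ (e : Sym2 V)) := by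
      intro h
      exact hee (Subtype.ext (((Sym2.mem_and_mem_iff hxy).1 h).trans (huv e₀).symm))
    have hor : x ∈ (e : Sym2 V) ∨ y ∈ (e : Sym2 V) := by
      simp only [hQ, mem_union, mem_erase, mem_inc] at he
      tauto
    rw [huv e, Sym2.mem_iff, Sym2.mem_iff] at hnot hor
    have hd := hdeg e
    -- the endpoint of `e` off the heavy edge has the smaller degree, so it is `u e`
    have hcase : u e ≠ x ∧ u e ≠ y ∧ (v e = x ∨ v e = y) := by
      have hn := hne e
      rcases hor with (h | h) | (h | h)
      · have h1 := hz (v e) (by rw [h]; exact hn.symm)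
          (by intro h'; exact hnot ⟨Or.inl h, Or.inr h'.symm⟩)
        rw [← h] at hd; omega
      · exact ⟨by rw [h]; exact hn, by intro h'; exact hnot ⟨Or.inr h, Or.inl h'.symm⟩,
          Or.inl h.symm⟩
      · have h1 := hz (v e) (by intro h'; exact hnot ⟨Or.inr h'.symm, Or.inl h⟩)
          (by rw [h]; exact hn.symm)
        rw [← h] at hd; omega
      · exact ⟨by intro h'; exact hnot ⟨Or.inl h'.symm, Or.inr h⟩, by rw [h]; exact hn,
          Or.inr h.symm⟩
    obtain ⟨h1, h2, h3⟩ := hcase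
    have h4 := hz _ h1 h2
    have h5 := hdu e
    have h6 : G.degree x ≤ G.degree (v e) := by
      rcases h3 with h | h <;> rw [h]
      exact hdxy
    have h7 := hcA e
    have h8 := hcB e
    apply prob_le_adjacent hE (hdis e) <;> omega
  -- the edges disjoint from the heavy edge are not heavy
  have hrest : ∀ e ∈ (univ \ insert e₀ Q), prob m ((inc G (u e)).erase e) ((inc G (v e)).erase e)
      ≤ 1 / m := by
    intro e he
    apply le_of_lt (light e _)
    simp only [hQ, mem_sdiff, mem_univ, true_and, mem_insert, mem_union, mem_erase, mem_inc,
      not_or, not_and] at he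
    obtain ⟨hee, h1, h2⟩ := he
    have hnx := h1 hee
    have hny := h2 hee
    rw [huv e, Sym2.mem_iff, not_or] at hnx hny
    have h3 := hz _ (Ne.symm hnx.1) (Ne.symm hny.1)
    have h4 := degree_add_three hE hnx.1 hnx.2 (hne e)
    have := hdeg e
    omega
  have hsplit : ∑ e, prob m ((inc G (u e)).erase e) ((inc G (v e)).erase e) =
      ∑ e ∈ (univ \ insert e₀ Q), prob m ((inc G (u e)).erase e) ((inc G (v e)).erase e) +
      (prob m ((inc G x).erase e₀) ((inc G y).erase e₀) +
      ∑ e ∈ Q, prob m ((inc G (u e)).erase e) ((inc G (v e)).erase e)) := by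
    rw [← sum_sdiff (subset_univ (insert e₀ Q)), sum_insert heQ]
  have b0 : prob m ((inc G x).erase e₀) ((inc G y).erase e₀) ≤ 1 / (m + 1 - a) := by
    have := prob_le hE (A := (inc G x).erase e₀) (B := (inc G y).erase e₀)
      (card_pos.1 (by omega)) (hdis e₀)
    rwa [hA0] at this
  have b1 := sum_le_sum hQbound
  have b2 := sum_le_sum hrest
  rw [sum_const, hQc, nsmul_eq_mul] at b1
  rw [sum_const, card_sdiff_of_subset (subset_univ _), card_univ, hE, card_insert_of_notMem heQ,
    hQc, nsmul_eq_mul, Nat.cast_sub (by omega)] at b2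
  have har := heavy_arith (m := m) (a := a) (q := q) (by exact_mod_cast (by omega))
    (by exact_mod_cast (by omega)) (by exact_mod_cast (by omega)) (by
      have : m + 1 ≤ 3 * a := by omega
      have : (m : ℚ) + 1 ≤ 3 * a := by exact_mod_cast this
      linarith)
  push_cast at b2
  rw [show (m : ℚ) - (q + 1) = m - 1 - q by ring] at b2
  rw [hsplit]
  linarith

end Graph

end LocalAntimagic

open LocalAntimagic

/-- Every finite simple graph `G` with `m` edges and no isolated edge admits a local
antimagic labelling: a bijection `f` from the edge set of `G` to `{1,…,m}` such that
for every edge `xy`, the sums of the labels of the edges incident to `x` and to `y`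
differ. -/
theorem local_antimagic_exists {V : Type*} [Fintype V] [DecidableEq V]
    (G : SimpleGraph V) [DecidableRel G.Adj] (m : ℕ) (hm : G.edgeFinset.card = m)
    (hiso : ∀ x y : V, G.Adj x y → ¬ (G.degree x = 1 ∧ G.degree y = 1)) :
    ∃ f : Sym2 V → ℕ, Set.BijOn f G.edgeSet (Set.Icc 1 m) ∧
      ∀ x y : V, G.Adj x y →
        ∑ e ∈ G.incidenceFinset x, f e ≠ ∑ e ∈ G.incidenceFinset y, f e := by
  have hE : Fintype.card G.edgeSet = m := by
    rw [← hm, SimpleGraph.edgeFinset_card]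
  have hex : ∃ g : G.edgeSet ≃ Fin m, ∀ x y : V, G.Adj x y →
      ∑ e ∈ inc G x, lab g e ≠ ∑ e ∈ inc G y, lab g e := by
    have hend : ∀ e : G.edgeSet, ∃ u v : V, G.Adj u v ∧ (e : Sym2 V) = s(u, v) ∧
        G.degree u ≤ G.degree v := by
      rintro ⟨e, he⟩
      induction e using Sym2.ind with
      | _ x y =>
      rcases le_total (G.degree x) (G.degree y) with h | h
      · exact ⟨x, y, he, rfl, h⟩
      · exact ⟨y, x, G.adj_symm he, Sym2.eq_swap, h⟩
    choose u v hadj huv hdeg using hend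
    rcases Nat.eq_zero_or_pos m with h0 | h0
    · refine ⟨Fintype.equivFinOfCardEq hE, fun x y hxy => ?_⟩
      subst h0
      exact ((Fintype.card_eq_zero_iff.1 hE).false ⟨s(x, y), hxy⟩).elim
    obtain ⟨g, hg⟩ := exists_of_sum_prob_lt hE _ _ (sum_prob_lt hE h0 hiso u v hadj huv hdeg)
    refine ⟨g, fun x y hxy heq => ?_⟩
    let e : G.edgeSet := ⟨s(x, y), hxy⟩
    apply hg e
    have hue : e ∈ inc G (u e) := by rw [mem_inc, huv e]; simp
    have hve : e ∈ inc G (v e) := by rw [mem_inc, huv e]; simp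
    have heq' : ∑ e ∈ inc G (u e), lab g e = ∑ e ∈ inc G (v e), lab g e := by
      rcases Sym2.eq_iff.1 (huv e) with ⟨h1, h2⟩ | ⟨h1, h2⟩
      · rw [← h1, ← h2, heq]
      · rw [← h1, ← h2, heq]
    rw [← Finset.add_sum_erase _ _ hue, ← Finset.add_sum_erase _ _ hve] at heq'
    unfold dif
    linarith
  obtain ⟨g, hg⟩ := hex
  classical
  let f : Sym2 V → ℕ := fun e => if h : e ∈ G.edgeSet then (g ⟨e, h⟩ : ℕ) + 1 else 0
  have hf : ∀ e : G.edgeSet, f e = (g e : ℕ) + 1 := fun e => by simp [f]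
  refine ⟨f, ⟨?_, ?_, ?_⟩, ?_⟩
  · intro e he
    have := hf ⟨e, he⟩
    have h2 := (g ⟨e, he⟩).2
    simp only at this
    rw [Set.mem_Icc]; omega
  · intro e he e' he' h
    have h1 := hf ⟨e, he⟩
    have h2 := hf ⟨e', he'⟩
    simp only at h1 h2
    have := g.injective (Fin.ext (show (g ⟨e, he⟩ : ℕ) = g ⟨e', he'⟩ by omega))
    exact congrArg Subtype.val this
  · intro i hi
    rw [Set.mem_Icc] at hi
    refine ⟨g.symm ⟨i - 1, by omega⟩, Subtype.coe_prop _, ?_⟩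
    rw [hf, Equiv.apply_symm_apply]; simp only; omega
  · have hsum : ∀ x, ((∑ e ∈ G.incidenceFinset x, f e : ℕ) : ℤ) = ∑ e ∈ inc G x, lab g e := by
      intro x
      rw [← map_inc, Finset.sum_map]
      push_cast
      apply Finset.sum_congr rfl
      intro e _
      rw [Function.Embedding.subtype_apply, hf]; unfold lab; push_cast; rfl
    intro x y hxy h
    apply hg x y hxy
    rw [← hsum, ← hsum, h]
end

section
/- Let G be a finite simple graph with m edges, none of which is isolated, and let xy be an edge of G. If the edges of G are labelled by a uniformly random bijection f: E(G) → {1,…,m}, then the probability that S_x = S_y is at most 1/m, where S_v denotes the sum of labels of edges incident to v. Moreover this inequality is strict unless m = 5 and both x and y have degree 3. -/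
/-!
Colour an edge `A` if it meets `x` but not `y`, `B` if it meets `y` but not `x`, and `C` otherwise
(the edge `xy` is a `C`). Listing the colours in the order of the labels turns a random labelling
into a uniformly random word with `a = deg x - 1` letters `A`, `b = deg y - 1` letters `B` and
`c ≥ 1` letters `C`, and `S_x - S_y` becomes the weight of the word: the sum of the positions of the
`A`s minus that of the `B`s. With `m = a + b + c` and, by symmetry, `a ≤ b`, the claim is that at
most one word in `m` has weight `0` (`words_bound`). The cases `a = 0` and `a = b = 1` are trivial,
as no word has weight `0`. The rest depends on `b - a`.

Three devices are used. Rotating a word by one place changes its weight by `b - a` modulo `m`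
(`rotation_count`). Reversing all letters but the last maps words of weight `0` to words of weight
divisible by `m`, and for `b - a ≥ 2` the new weight is not `0` (`flip_count_two`). Changing a
marked `C` into a `B` shifts the weight by the position of the mark (`beta`).

* `b - a = 1`: by rotation at most one word in `m` has weight divisible by `m`; flipping doubles the
  gain up to a small correction controlled by `beta_exact` (`count_deficiency_one`).
* `b = a`: deleting the first letter preserves the weight, giving a recursion in `c` whose other
  terms belong to the case `b - a = 1` (`balanced`). Equality survives only for `a = b = 2`,
  `c = 1`, i.e. for `m = 5` and both degrees `3`.
* `b - a = i ∈ {2, 3}`: flipping gains a factor `2`. If `i` and `m` are coprime, rotation gives the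
  rest. If `i` divides `m`, rotation reduces to words with weight divisible by `i`, whose proportion
  is below `(i + 1) / (2 * i)`, as swapping the labels of a `B` and a `C` shows (`signedSum_dvd`).
* `b - a ≥ 4`: mark an `A`, and as long as the letter before the marked block is an `A`, absorb it.
  In a word of weight `0`, a block of `i` letters `A` not preceded by an `A` is determined by the
  word `v` of the remaining letters; moving it to the end gives a nonnegative weight divisible by
  `i`. Few `v` allow this: at most half of them for `i ≤ 3`, by reversal, and about one in
  `i * b / m` for `i ≥ 4`, by `beta`. Summation over `i` gives `count_deficiency_four`.
-/

/-- The role of an edge with respect to a fixed edge `xy`: `A` for an edge meeting `x` only, `B` for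
an edge meeting `y` only, `C` for the remaining edges (`xy` itself among them). -/
inductive Letter
  | A | B | C
  deriving DecidableEq

namespace Letter

/-- The coefficient with which the label of an edge enters `S_x - S_y`. -/
def eps : Letter → ℤ
  | A => 1
  | B => -1
  | C => 0

/-- The number of `A`s minus the number of `B`s. -/
def sgn (l : List Letter) : ℤ := (l.map eps).sum

/-- The weight of a word: the sum of the (1-based) positions of its `A`s minus the sum of those of
its `B`s. Prepending a letter shifts every position by one, whence the summand `sgn l`. -/
def wt : List Letter → ℤ
  | [] => 0
  | x :: l => eps x + sgn l + wt l

@[simp] lemma sgn_nil : sgn [] = 0 := rfl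
@[simp] lemma sgn_cons (x l) : sgn (x :: l) = eps x + sgn l := by simp [sgn]
@[simp] lemma sgn_append (l₁ l₂) : sgn (l₁ ++ l₂) = sgn l₁ + sgn l₂ := by simp [sgn]
@[simp] lemma wt_nil : wt [] = 0 := rfl
lemma wt_cons (x l) : wt (x :: l) = eps x + sgn l + wt l := rfl

lemma wt_append (l₁ l₂ : List Letter) :
    wt (l₁ ++ l₂) = wt l₁ + wt l₂ + l₁.length * sgn l₂ := by
  induction l₁ with
  | nil => simp
  | cons x l ih =>
    simp only [List.cons_append, wt_cons, ih, sgn_append, List.length_cons]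
    push_cast
    ring

lemma wt_concat (l : List Letter) (x : Letter) :
    wt (l ++ [x]) = wt l + (l.length + 1) * eps x := by
  rw [wt_append]
  simp [wt_cons]
  ring

lemma sgn_reverse (l : List Letter) : sgn l.reverse = sgn l := by
  simp [sgn, List.sum_reverse]

lemma wt_reverse (l : List Letter) :
    wt l.reverse = (l.length + 1) * sgn l - wt l := by
  induction l with
  | nil => simp
  | cons x l ih =>
    rw [List.reverse_cons, wt_concat, ih, wt_cons]
    simp only [List.length_reverse, List.length_cons, sgn_cons]
    push_cast
    ring

lemma sgn_replicate (i : ℕ) (x : Letter) : sgn (List.replicate i x) = i * eps x := by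
  simp [sgn]

lemma two_wt_replicate (i : ℕ) (x : Letter) :
    2 * wt (List.replicate i x) = i * (i + 1) * eps x := by
  induction i with
  | zero => simp
  | succ i ih =>
    rw [List.replicate_succ, wt_cons, sgn_replicate]
    push_cast
    linarith

lemma sgn_eq_count (l : List Letter) : sgn l = l.count A - l.count B := by
  induction l with
  | nil => simp
  | cons x l ih =>
    rw [sgn_cons, ih]
    cases x <;> simp [eps] <;> ring

lemma length_eq_count (l : List Letter) :
    l.length = l.count A + l.count B + l.count C := by
  induction l with
  | nil => simp
  | cons x l ih =>
    cases x <;> simp [ih] <;> ring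

/-! ### Words with prescribed letter counts -/

/-- The finite set of words with `a` letters `A`, `b` letters `B` and `c` letters `C`. -/
def words (a b c : ℕ) : Finset (List Letter) :=
  (List.replicate a A ++ List.replicate b B ++ List.replicate c C).permutations.toFinset

lemma mem_words {a b c : ℕ} {l : List Letter} :
    l ∈ words a b c ↔ l.count A = a ∧ l.count B = b ∧ l.count C = c := by
  rw [words, List.mem_toFinset, List.mem_permutations, List.perm_iff_count]
  constructor
  · intro h
    refine ⟨?_, ?_, ?_⟩
    · simpa [List.count_replicate] using h A
    · simpa [List.count_replicate] using h B
    · simpa [List.count_replicate] using h C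
  · rintro ⟨h1, h2, h3⟩ x
    cases x <;> simp [List.count_replicate, *]

lemma length_of_mem {a b c : ℕ} {l : List Letter} (h : l ∈ words a b c) :
    l.length = a + b + c := by
  obtain ⟨h1, h2, h3⟩ := mem_words.1 h
  rw [length_eq_count, h1, h2, h3]

lemma sgn_of_mem {a b c : ℕ} {l : List Letter} (h : l ∈ words a b c) :
    sgn l = a - b := by
  obtain ⟨h1, h2, h3⟩ := mem_words.1 h
  rw [sgn_eq_count, h1, h2]

lemma words_card_pos (a b c : ℕ) : 0 < (words a b c).card := by
  apply Finset.card_pos.2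
  refine ⟨List.replicate a A ++ List.replicate b B ++ List.replicate c C, ?_⟩
  rw [mem_words]
  simp [List.count_replicate]

lemma perm_mem_words {a b c : ℕ} {l l' : List Letter} (h : l.Perm l') :
    l ∈ words a b c ↔ l' ∈ words a b c := by
  simp [mem_words, h.count_eq]

/-! ### Words with a marked gap or a marked letter -/

/-- The pairs `(u, v)` with `u ++ v ∈ words a b c`: a word together with one of its gaps. -/
def splits (a b c : ℕ) : Finset (List Letter × List Letter) :=
  (words a b c ×ˢ Finset.range (a + b + c + 1)).image
    (fun p => (p.1.take p.2, p.1.drop p.2))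

lemma mem_splits {a b c : ℕ} {p : List Letter × List Letter} :
    p ∈ splits a b c ↔ p.1 ++ p.2 ∈ words a b c := by
  rw [splits, Finset.mem_image]
  constructor
  · rintro ⟨⟨w, k⟩, h, rfl⟩
    simpa using (Finset.mem_product.1 h).1
  · intro h
    refine ⟨(p.1 ++ p.2, p.1.length), ?_, by simp⟩
    have := length_of_mem h
    rw [List.length_append] at this
    simp only [Finset.mem_product, Finset.mem_range]
    exact ⟨h, by omega⟩

lemma card_splits (a b c : ℕ) :
    (splits a b c).card = (a + b + c + 1) * (words a b c).card := by
  rw [splits, Finset.card_image_of_injOn, Finset.card_product, Finset.card_range, mul_comm]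
  rintro ⟨w, k⟩ h ⟨w', k'⟩ h' e
  simp only [Finset.coe_product, Set.mem_prod, Finset.mem_coe, Finset.mem_range] at h h'
  simp only [Prod.mk.injEq] at e
  have hw : w = w' := by
    rw [← List.take_append_drop k w, e.1, e.2, List.take_append_drop]
  subst hw
  have := congrArg List.length e.1
  have hl := length_of_mem h.1
  simp only [List.length_take] at this
  simp only [Prod.mk.injEq, true_and]
  omega

/-- The ways of writing a word as `u ++ x :: v`, that is, of marking one occurrence of `x`. -/
def marks (x : Letter) : List Letter → Finset (List Letter × List Letter)
  | [] => ∅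
  | y :: t => (if y = x then {([], t)} else ∅) ∪
      (marks x t).image (fun p => (y :: p.1, p.2))

lemma mem_marks {x : Letter} {w : List Letter} {p : List Letter × List Letter} :
    p ∈ marks x w ↔ p.1 ++ x :: p.2 = w := by
  induction w generalizing p with
  | nil => simp [marks]
  | cons y t ih =>
    obtain ⟨u, v⟩ := p
    simp only [marks, Finset.mem_union, Finset.mem_image]
    constructor
    · rintro (h | ⟨q, hq, e⟩)
      · split_ifs at h with hy
        · simp at h
          simp [h, hy]
        · simp at h
      · simp only [Prod.mk.injEq] at e
        rw [ih] at hq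
        simp [← e.1, ← e.2, hq]
    · intro h
      cases u with
      | nil =>
        left
        simp at h
        simp [h]
      | cons z u =>
        right
        simp only [List.cons_append, List.cons.injEq] at h
        exact ⟨(u, v), ih.2 h.2, by simp [h.1]⟩

lemma card_marks (x : Letter) (w : List Letter) : (marks x w).card = w.count x := by
  induction w with
  | nil => simp [marks]
  | cons y t ih =>
    rw [marks, Finset.card_union_of_disjoint, Finset.card_image_of_injective, ih,
      List.count_cons]
    · by_cases h : y = x <;> simp [h, add_comm]
    · rintro ⟨u, v⟩ ⟨u', v'⟩ h
      simpa using h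
    · rw [Finset.disjoint_left]
      rintro ⟨u, v⟩ h1 h2
      split_ifs at h1
      · simp at h1 h2
        simp [h1.1] at h2
      · simp at h1

/-- Double counting of words with one marked occurrence of `x`: if every word of `T` contains `x`
exactly `n` times, there are `n * |T|` markings. -/
lemma card_marking (x : Letter) (S : Finset (List Letter × List Letter))
    (T : Finset (List Letter)) (n : ℕ)
    (hS : ∀ p, p ∈ S ↔ p.1 ++ x :: p.2 ∈ T) (hT : ∀ w ∈ T, w.count x = n) :
    S.card = n * T.card := by
  have : S = T.biUnion (marks x) := by
    ext p
    simp only [Finset.mem_biUnion, mem_marks, hS]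
    constructor
    · intro h
      exact ⟨_, h, rfl⟩
    · rintro ⟨w, hw, rfl⟩
      exact hw
  rw [this, Finset.card_biUnion,
    Finset.sum_congr rfl (fun w hw => (card_marks x w).trans (hT w hw)),
    Finset.sum_const, smul_eq_mul, mul_comm]
  intro w _ w' _ hne
  rw [Function.onFun, Finset.disjoint_left]
  intro p h1 h2
  rw [mem_marks] at h1 h2
  exact hne (h1.symm.trans h2)

lemma mem_words_insA {a b c : ℕ} {u v : List Letter} :
    u ++ A :: v ∈ words (a + 1) b c ↔ u ++ v ∈ words a b c := by
  simp only [mem_words, List.count_append]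
  simp
  intros; omega

lemma mem_words_insB {a b c : ℕ} {u v : List Letter} :
    u ++ B :: v ∈ words a (b + 1) c ↔ u ++ v ∈ words a b c := by
  simp only [mem_words, List.count_append]
  simp
  intros; omega

lemma mem_words_insC {a b c : ℕ} {u v : List Letter} :
    u ++ C :: v ∈ words a b (c + 1) ↔ u ++ v ∈ words a b c := by
  simp only [mem_words, List.count_append]
  simp
  intros; omega

/-- Inserting an `A` in a gap of a word of `words a b c` produces each word of `words (a + 1) b c`
exactly `a + 1` times. -/
lemma card_markA (a b c : ℕ) (Q : List Letter → Prop) [DecidablePred Q] :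
    ((splits a b c).filter (fun p => Q (p.1 ++ A :: p.2))).card =
      (a + 1) * ((words (a + 1) b c).filter Q).card := by
  apply card_marking A
  · intro p
    simp [mem_splits, mem_words_insA]
  · intro w hw
    exact (mem_words.1 (Finset.mem_filter.1 hw).1).1

lemma card_markB (a b c : ℕ) (Q : List Letter → Prop) [DecidablePred Q] :
    ((splits a b c).filter (fun p => Q (p.1 ++ B :: p.2))).card =
      (b + 1) * ((words a (b + 1) c).filter Q).card := by
  apply card_marking B
  · intro p
    simp [mem_splits, mem_words_insB]
  · intro w hw
    exact (mem_words.1 (Finset.mem_filter.1 hw).1).2.1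

lemma card_markC (a b c : ℕ) (Q : List Letter → Prop) [DecidablePred Q] :
    ((splits a b c).filter (fun p => Q (p.1 ++ C :: p.2))).card =
      (c + 1) * ((words a b (c + 1)).filter Q).card := by
  apply card_marking C
  · intro p
    simp [mem_splits, mem_words_insC]
  · intro w hw
    exact (mem_words.1 (Finset.mem_filter.1 hw).1).2.2

lemma card_words_succA (a b c : ℕ) :
    (a + 1) * (words (a + 1) b c).card = (a + b + c + 1) * (words a b c).card := by
  have := card_markA a b c (fun _ => True)
  simpa [card_splits] using this.symm

lemma card_words_succB (a b c : ℕ) :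
    (b + 1) * (words a (b + 1) c).card = (a + b + c + 1) * (words a b c).card := by
  have := card_markB a b c (fun _ => True)
  simpa [card_splits] using this.symm

lemma card_words_succC (a b c : ℕ) :
    (c + 1) * (words a b (c + 1)).card = (a + b + c + 1) * (words a b c).card := by
  have := card_markC a b c (fun _ => True)
  simpa [card_splits] using this.symm

/-! ### Exchanging a marked letter -/

/-- An interval of length `n` has at most `⌈n / i⌉` members in a given residue class modulo `i`. -/
lemma card_dvd_range (i : ℕ) (hi : 0 < i) (n : ℕ) (ρ : ℤ) :
    i * ((Finset.range n).filter (fun j : ℕ => (i : ℤ) ∣ (j : ℤ) + ρ)).card ≤ n + i - 1 := by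
  set T := (Finset.range n).filter (fun j : ℕ => (i : ℤ) ∣ (j : ℤ) + ρ) with hT
  have h : (T ×ˢ Finset.range i).card ≤ (Finset.range (n + i - 1)).card := by
    apply Finset.card_le_card_of_injOn (fun p => p.1 + p.2)
    · rintro ⟨j, r⟩ h
      simp only [hT, Finset.coe_product, Set.mem_prod, Finset.mem_coe, Finset.mem_filter,
        Finset.mem_range] at h ⊢
      omega
    · rintro ⟨j, r⟩ h ⟨j', r'⟩ h' e
      simp only [hT, Finset.coe_product, Set.mem_prod, Finset.mem_coe, Finset.mem_filter,
        Finset.mem_range] at h h' e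
      have hd : (i : ℤ) ∣ (r : ℤ) - r' := by
        have := dvd_sub h'.1.2 h.1.2
        have e' : (j : ℤ) + r = j' + r' := by exact_mod_cast e
        have e2 : (r : ℤ) - r' = j' + ρ - (j + ρ) := by linarith
        rw [e2]
        exact this
      have : (r : ℤ) - r' = 0 := by
        apply Int.eq_zero_of_abs_lt_dvd hd
        rw [abs_lt]; omega
      simp only [Prod.mk.injEq]
      omega
  rw [Finset.card_product, Finset.card_range, Finset.card_range] at h
  rw [mul_comm]; exact h

/-- Replacing a marked `C` at position `j` by `B` lowers the weight by `j`. Hence, among the ways to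
reach a given word, the condition `i ∣ wt w + κ` pins the residue of `j` modulo `i`, and at most `K`
markings survive. The value `i = 0` is allowed and then prescribes the weight exactly. -/
lemma beta (a b c i K : ℕ) (κ : ℤ)
    (hK : ∀ ρ : ℤ, ((Finset.range (a + b + c + 1)).filter
      (fun j : ℕ => (i : ℤ) ∣ (j : ℤ) + ρ)).card ≤ K) :
    (b + 1) * ((words a b (c + 1)).filter (fun w => (i : ℤ) ∣ wt w + κ)).card ≤
      K * (words a b (c + 1)).card := by
  have h1 := card_markC a b c (fun w => (i : ℤ) ∣ wt w + κ)
  have h2 : ((splits a b c).filter (fun p => (i : ℤ) ∣ wt (p.1 ++ C :: p.2) + κ)).card ≤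
      K * (words a (b + 1) c).card := by
    apply Finset.card_le_mul_card_image_of_maps_to (f := fun p => p.1 ++ B :: p.2)
    · intro p hp
      rw [mem_words_insB]
      exact mem_splits.1 (Finset.mem_filter.1 hp).1
    · intro u hu
      refine le_trans ?_ (hK (wt u + 1 + κ))
      apply Finset.card_le_card_of_injOn (fun p => p.1.length)
      · rintro ⟨v, v'⟩ h
        simp only [Finset.coe_filter, Finset.mem_filter, Set.mem_ofPred_eq, mem_splits,
          Finset.mem_range] at h ⊢
        obtain ⟨⟨h3, h4⟩, h5⟩ := h
        have := length_of_mem h3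
        rw [List.length_append] at this
        refine ⟨by omega, ?_⟩
        rw [← h5]
        convert h4 using 1
        simp only [wt_append, wt_cons, sgn_cons, eps]
        ring
      · rintro ⟨v, v'⟩ h ⟨u, u'⟩ h' e
        simp only [Finset.coe_filter, Finset.mem_filter, Set.mem_ofPred_eq] at h h'
        have := List.append_inj (h.2.trans h'.2.symm) e
        simp at this
        simp [this]
  have h3 := card_words_succB a b c
  have h4 := card_words_succC a b c
  have h5 : (c + 1) * ((b + 1) * ((words a b (c + 1)).filter
      (fun w => (i : ℤ) ∣ wt w + κ)).card) ≤ (c + 1) * (K * (words a b (c + 1)).card) := by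
    calc _ = (b + 1) * ((c + 1) * ((words a b (c + 1)).filter
              (fun w => (i : ℤ) ∣ wt w + κ)).card) := by ring
      _ ≤ (b + 1) * (K * (words a (b + 1) c).card) := by
        rw [← h1]; exact Nat.mul_le_mul_left _ h2
      _ = K * ((b + 1) * (words a (b + 1) c).card) := by ring
      _ = K * ((c + 1) * (words a b (c + 1)).card) := by rw [h3, h4]
      _ = _ := by ring
  exact Nat.le_of_mul_le_mul_left h5 (by omega)

lemma beta_mod (a b c i : ℕ) (hi : 0 < i) (κ : ℤ) :
    i * ((b + 1) * ((words a b (c + 1)).filter (fun w => (i : ℤ) ∣ wt w + κ)).card) ≤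
      (a + b + c + i) * (words a b (c + 1)).card := by
  have h := beta a b c i ((a + b + c + i) / i) κ (fun ρ => by
    rw [Nat.le_div_iff_mul_le hi, mul_comm]
    exact (card_dvd_range i hi _ ρ).trans (by omega))
  calc _ ≤ i * ((a + b + c + i) / i * (words a b (c + 1)).card) := Nat.mul_le_mul_left _ h
    _ = (i * ((a + b + c + i) / i)) * (words a b (c + 1)).card := by ring
    _ ≤ _ := Nat.mul_le_mul_right _ (Nat.mul_div_le _ _)

lemma beta_exact (a b c : ℕ) (t : ℤ) :
    (b + 1) * ((words a b (c + 1)).filter (fun w => wt w = t)).card ≤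
      (words a b (c + 1)).card := by
  have h := beta a b c 0 1 (-t) (fun ρ => by
    rw [Finset.card_le_one]
    intro x hx y hy
    simp only [Nat.cast_zero, zero_dvd_iff, Finset.mem_filter] at hx hy
    omega)
  simp only [Nat.cast_zero, zero_dvd_iff, one_mul, ← sub_eq_add_neg, sub_eq_zero] at h
  exact h

/-- Replacing a marked `A` at position `j` by `B` lowers the weight by `2 * j`, so a word of weight
`t` with a marked `A` is determined by the word obtained; `U` is any set containing the words
reached. -/
lemma exchange_AB (a b c : ℕ) (t : ℤ) (U : Finset (List Letter))
    (hU : ∀ v v', v ++ v' ∈ words a b c → wt (v ++ A :: v') = t → v ++ B :: v' ∈ U) :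
    (a + 1) * ((words (a + 1) b c).filter (fun w => wt w = t)).card ≤ U.card := by
  rw [← card_markA a b c (fun w => wt w = t)]
  apply Finset.card_le_card_of_injOn (fun p => p.1 ++ B :: p.2)
  · rintro ⟨v, v'⟩ h
    simp only [Finset.coe_filter, Set.mem_ofPred_eq, mem_splits, Finset.mem_coe] at h ⊢
    exact hU _ _ h.1 h.2
  · rintro ⟨v, v'⟩ h ⟨u, u'⟩ h' e
    simp only [Finset.coe_filter, Set.mem_ofPred_eq, mem_splits] at h h' e
    have e1 : wt (v ++ A :: v') = wt (v ++ B :: v') + 2 * (v.length + 1) := by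
      simp only [wt_append, wt_cons, sgn_cons, eps]
      ring
    have e2 : wt (u ++ A :: u') = wt (u ++ B :: u') + 2 * (u.length + 1) := by
      simp only [wt_append, wt_cons, sgn_cons, eps]
      ring
    have : v.length = u.length := by
      rw [e] at e1
      have := h.2; have := h'.2
      omega
    have := List.append_inj e this
    simp at this
    simp [this]

lemma base_le (a : ℕ) :
    (a + 2) * ((words (a + 1) (a + 1) 0).filter (fun w => wt w = 0)).card ≤
      (words (a + 1) (a + 1) 0).card := by
  have h := exchange_AB a (a + 1) 0 0 (words a (a + 2) 0) (fun v v' h _ => mem_words_insB.2 h)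
  have h3 := card_words_succA a (a + 1) 0
  have h4 := card_words_succB a (a + 1) 0
  rw [← h3] at h4
  have : (a + 1) * ((a + 2) * ((words (a + 1) (a + 1) 0).filter (fun w => wt w = 0)).card) ≤
      (a + 1) * (words (a + 1) (a + 1) 0).card := by
    rw [← h4]
    calc _ = (a + 2) * ((a + 1) * ((words (a + 1) (a + 1) 0).filter (fun w => wt w = 0)).card) := by
          ring
      _ ≤ _ := Nat.mul_le_mul_left _ h
  exact Nat.le_of_mul_le_mul_left this (by omega)

/-- The exchange of `A` for `B` never reaches `A ⋯ A B ⋯ B`, whose weight is too negative; this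
makes `base_le` strict. -/
lemma base_lt (a : ℕ) (ha : 2 ≤ a) :
    (a + 2) * ((words (a + 1) (a + 1) 0).filter (fun w => wt w = 0)).card <
      (words (a + 1) (a + 1) 0).card := by
  set u₀ := List.replicate a A ++ List.replicate (a + 2) B with hu₀
  have hmem : u₀ ∈ words a (a + 2) 0 := by
    rw [mem_words]; simp [hu₀, List.count_replicate]
  have h := exchange_AB a (a + 1) 0 0 ((words a (a + 2) 0).erase u₀) (fun v v' h hw => by
    rw [Finset.mem_erase]
    refine ⟨?_, mem_words_insB.2 h⟩
    intro e
    have e1 : wt (v ++ A :: v') = wt (v ++ B :: v') + 2 * (v.length + 1) := by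
      simp only [wt_append, wt_cons, sgn_cons, eps]
      ring
    have hl := length_of_mem h
    rw [List.length_append] at hl
    have h5 := two_wt_replicate a A
    have h6 := two_wt_replicate (a + 2) B
    rw [e, hw, hu₀, wt_append, sgn_replicate, List.length_replicate] at e1
    simp only [eps] at e1 h5 h6
    push_cast at e1 h5 h6
    have hv : (v.length : ℤ) ≤ 2 * a + 1 := by omega
    have ha' : (2 : ℤ) ≤ a := by exact_mod_cast ha
    nlinarith)
  have h7 := Finset.card_erase_lt_of_mem hmem
  have h3 := card_words_succA a (a + 1) 0
  have h4 := card_words_succB a (a + 1) 0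
  rw [← h3] at h4
  have : (a + 1) * ((a + 2) * ((words (a + 1) (a + 1) 0).filter (fun w => wt w = 0)).card) <
      (a + 1) * (words (a + 1) (a + 1) 0).card := by
    rw [← h4]
    calc _ = (a + 2) * ((a + 1) * ((words (a + 1) (a + 1) 0).filter (fun w => wt w = 0)).card) := by
          ring
      _ < _ := Nat.mul_lt_mul_of_pos_left (lt_of_le_of_lt h h7) (by omega)
  exact Nat.lt_of_mul_lt_mul_left this

lemma dvd_congr {n x y : ℤ} (h : n ∣ x) (e : y = x) : n ∣ y := e ▸ h

/-! ### Rotating a word -/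

/-- Rotating a word by one place changes its weight by `-sgn w` modulo its length. -/
lemma dvd_wt_rotate (w : List Letter) (j : ℕ) :
    (w.length : ℤ) ∣ wt (w.rotate j) - wt w + j * sgn w := by
  induction j generalizing w with
  | zero => simp
  | succ j ih =>
    cases w with
    | nil => simp
    | cons x l =>
      rw [List.rotate_cons_succ]
      have h := ih (l ++ [x])
      rw [wt_concat] at h
      simp only [List.length_append, List.length_cons, List.length_nil, sgn_append, sgn_cons,
        sgn_nil, zero_add, wt_cons] at h ⊢
      have h2 := dvd_add h (dvd_mul_right ((l.length + 1 : ℕ) : ℤ) (eps x))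
      refine dvd_congr h2 ?_
      push_cast
      ring

lemma rotate_mem_words {a b c : ℕ} {w : List Letter} (j : ℕ) (h : w ∈ words a b c) :
    w.rotate j ∈ words a b c :=
  (perm_mem_words (List.rotate_perm w j)).2 h

/-- With `m = a + b + c = d * k` and `a - b = d * e`, where `k` and `e` are coprime, the `k` first
rotations of a word of weight divisible by `m` have distinct weights modulo `m`, all divisible by
`d`. -/
lemma rotation_count (a b c d k : ℕ) (e : ℤ) (hm : a + b + c = d * k) (hd : 0 < d)
    (he : (a : ℤ) - b = d * e) (hc : IsCoprime (k : ℤ) e) :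
    k * ((words a b c).filter (fun w => ((a + b + c : ℕ) : ℤ) ∣ wt w)).card ≤
      ((words a b c).filter (fun w => (d : ℤ) ∣ wt w)).card := by
  have hcard : (((words a b c).filter (fun w => ((a + b + c : ℕ) : ℤ) ∣ wt w)) ×ˢ
      Finset.range k).card ≤ ((words a b c).filter (fun w => (d : ℤ) ∣ wt w)).card := by
    apply Finset.card_le_card_of_injOn (fun p => p.1.rotate p.2)
    · rintro ⟨w, j⟩ h
      simp only [Finset.coe_product, Set.mem_prod, Finset.mem_coe, Finset.mem_filter,
        Finset.mem_range] at h ⊢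
      refine ⟨rotate_mem_words j h.1.1, ?_⟩
      have h1 := dvd_wt_rotate w j
      rw [length_of_mem h.1.1] at h1
      rw [sgn_of_mem h.1.1, he] at h1
      have h2 : (d : ℤ) ∣ ((a + b + c : ℕ) : ℤ) := by rw [hm]; simp
      have h3 := h2.trans h1
      have h4 := h2.trans h.1.2
      have h5 : (d : ℤ) ∣ j * (d * e) := ⟨j * e, by ring⟩
      have h6 := dvd_add (dvd_sub h3 h5) h4
      refine dvd_congr h6 ?_
      ring
    · rintro ⟨w, j⟩ h ⟨w', j'⟩ h' heq
      simp only [Finset.coe_product, Set.mem_prod, Finset.mem_coe, Finset.mem_filter,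
        Finset.mem_range] at h h' heq
      have h1 := dvd_wt_rotate w j
      have h2 := dvd_wt_rotate w' j'
      rw [length_of_mem h.1.1, sgn_of_mem h.1.1, he] at h1
      rw [length_of_mem h'.1.1, sgn_of_mem h'.1.1, he, ← heq] at h2
      have h3 : ((a + b + c : ℕ) : ℤ) ∣ d * ((j - j') * e) := by
        have := dvd_add (dvd_sub h1 h2) (dvd_sub h.1.2 h'.1.2)
        refine dvd_congr this ?_
        ring
      rw [hm, Nat.cast_mul] at h3
      have h4 := Int.dvd_of_mul_dvd_mul_left (by exact_mod_cast hd.ne') h3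
      have h5 := hc.dvd_of_dvd_mul_right h4
      have h6 : (j : ℤ) - j' = 0 := by
        apply Int.eq_zero_of_abs_lt_dvd h5
        rw [abs_lt]; omega
      have h7 : j = j' := by omega
      subst h7
      have h8 := List.rotate_injective j heq
      rw [h8]
  rw [Finset.card_product, Finset.card_range] at hcard
  rw [mul_comm]; exact hcard

/-! ### Reversing all letters but the last -/

/-- The word obtained by reversing everything except the last letter: `l ++ [x]` becomes
`l.reverse ++ [x]`. -/
def flip (w : List Letter) : List Letter := w.reverse.rotate 1

lemma flip_injective : Function.Injective flip :=
  (List.rotate_injective 1).comp List.reverse_injective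

lemma flip_mem {a b c : ℕ} {w : List Letter} (h : w ∈ words a b c) : flip w ∈ words a b c :=
  rotate_mem_words 1 ((perm_mem_words (List.reverse_perm w)).2 h)

lemma wt_flip_concat (l : List Letter) (x : Letter) :
    wt (flip (l ++ [x])) =
      (l.length + 1) * (sgn (l ++ [x]) + eps x) - wt (l ++ [x]) := by
  have : flip (l ++ [x]) = l.reverse ++ [x] := by simp [flip]
  rw [this, wt_concat, wt_concat, wt_reverse, List.length_reverse, sgn_append]
  simp only [sgn_cons, sgn_nil]
  ring

/-- Words of weight `0` and their flips all have weight divisible by the length `m`, and a flip is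
again of weight `0` only for the words counted by the last summand. -/
lemma flip_count (a b c : ℕ) (hm : 0 < a + b + c) :
    2 * ((words a b c).filter (fun w => wt w = 0)).card ≤
      ((words a b c).filter (fun w => ((a + b + c : ℕ) : ℤ) ∣ wt w)).card +
      ((words a b c).filter (fun w => wt w = 0 ∧ wt (flip w) = 0)).card := by
  set F := (words a b c).filter (fun w => wt w = 0) with hF
  set R := (words a b c).filter (fun w => wt w = 0 ∧ wt (flip w) = 0) with hR
  have hsplit : F.card = R.card + (F.filter (fun w => ¬ wt (flip w) = 0)).card := by
    rw [← Finset.card_filter_add_card_filter_not (s := F) (fun w => wt (flip w) = 0), hF, hR,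
      Finset.filter_filter]
  have hle : (F ∪ (F.filter (fun w => ¬ wt (flip w) = 0)).image flip).card ≤
      ((words a b c).filter (fun w => ((a + b + c : ℕ) : ℤ) ∣ wt w)).card := by
    apply Finset.card_le_card
    intro w hw
    simp only [hF, Finset.mem_union, Finset.mem_filter, Finset.mem_image] at hw ⊢
    rcases hw with h | ⟨w, ⟨⟨h1, h2⟩, h3⟩, rfl⟩
    · exact ⟨h.1, by rw [h.2]; simp⟩
    · refine ⟨flip_mem h1, ?_⟩
      have hl := length_of_mem h1
      rcases List.eq_nil_or_concat' w with rfl | ⟨l, x, rfl⟩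
      · simp at hl; omega
      · rw [wt_flip_concat, h2, sub_zero]
        rw [← hl]
        simp
  rw [Finset.card_union_of_disjoint, Finset.card_image_of_injective _ flip_injective] at hle
  · omega
  · rw [Finset.disjoint_left]
    intro w hw hw'
    simp only [hF, Finset.mem_filter, Finset.mem_image] at hw hw'
    obtain ⟨w, h, rfl⟩ := hw'
    exact h.2 hw.2

/-- If `b - a ≥ 2`, the flip of a word of weight `0` has weight `m * (a - b + eps x) < 0`, where `x`
is the last letter. -/
lemma flip_count_two (a b c : ℕ) (hab : a + 2 ≤ b) :
    2 * ((words a b c).filter (fun w => wt w = 0)).card ≤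
      ((words a b c).filter (fun w => ((a + b + c : ℕ) : ℤ) ∣ wt w)).card := by
  have h := flip_count a b c (by omega)
  have h2 : (words a b c).filter (fun w => wt w = 0 ∧ wt (flip w) = 0) = ∅ := by
    rw [Finset.filter_eq_empty_iff]
    rintro w hw ⟨h1, h2⟩
    have hl := length_of_mem hw
    rcases List.eq_nil_or_concat' w with rfl | ⟨l, x, rfl⟩
    · simp at hl; omega
    · rw [wt_flip_concat, h1, sub_zero, sgn_of_mem hw] at h2
      have hx : eps x ≤ 1 := by cases x <;> simp [eps]
      have : (0 : ℤ) < l.length + 1 := by positivity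
      rcases mul_eq_zero.1 h2 with h | h <;> omega
  rw [h2] at h
  simpa using h

/-- The case `b = a + 1` (shifted by one in the parameters). Here the flip of a word of weight `0`
has weight `0` only if the word ends in `A`; such words are bounded by `beta_exact` after deleting
that `A`. The gain over `1 / m` is used again in `balanced_step`. -/
lemma count_deficiency_one (a c : ℕ) :
    (2 * a + c + 4) * ((a + 3) *
      ((words (a + 1) (a + 2) (c + 1)).filter (fun w => wt w = 0)).card) ≤
      (a + 2) * (words (a + 1) (a + 2) (c + 1)).card := by
  have h1 := flip_count (a + 1) (a + 2) (c + 1) (by omega)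
  have hrot := rotation_count (a + 1) (a + 2) (c + 1) 1 (2 * a + c + 4) (-1) (by ring) (by omega)
    (by push_cast; ring) (isCoprime_one_right.neg_right)
  have hle : ((words (a + 1) (a + 2) (c + 1)).filter (fun w => ((1 : ℕ) : ℤ) ∣ wt w)).card ≤
    (words (a + 1) (a + 2) (c + 1)).card := Finset.card_filter_le _ _
  have h2 : ((words (a + 1) (a + 2) (c + 1)).filter
      (fun w => wt w = 0 ∧ wt (flip w) = 0)).card ≤
      ((words a (a + 2) (c + 1)).filter (fun w => wt w = -(2 * a + c + 4 : ℕ))).card := by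
    rw [← Finset.card_image_of_injective (s := (words a (a + 2) (c + 1)).filter
      (fun w => wt w = -(2 * a + c + 4 : ℕ))) (f := fun l => l ++ [A])
        (List.append_left_injective [A])]
    apply Finset.card_le_card
    intro w hw
    simp only [Finset.mem_filter, Finset.mem_image] at hw ⊢
    obtain ⟨hw, h3, h4⟩ := hw
    have hl := length_of_mem hw
    rcases List.eq_nil_or_concat' w with rfl | ⟨l, x, rfl⟩
    · simp at hl
    · rw [wt_flip_concat, h3, sub_zero, sgn_of_mem hw] at h4
      have : (0 : ℤ) < l.length + 1 := by positivity
      have hx : eps x = 1 := by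
        push_cast at h4
        rcases mul_eq_zero.1 h4 with h | h <;> omega
      have hx : x = A := by cases x <;> simp [eps] at hx ⊢
      subst hx
      refine ⟨l, ⟨?_, ?_⟩, rfl⟩
      · have := mem_words_insA.1 hw
        simpa using this
      · rw [wt_concat] at h3
        simp only [List.length_append, List.length_cons, List.length_nil] at hl
        simp only [eps] at h3
        omega
  have h3 := beta_exact a (a + 2) c (-(2 * a + c + 4 : ℕ))
  have h4 := card_words_succA a (a + 2) (c + 1)
  set N := ((words (a + 1) (a + 2) (c + 1)).filter (fun w => wt w = 0)).card
  set R := ((words a (a + 2) (c + 1)).filter (fun w => wt w = -(2 * a + c + 4 : ℕ))).card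
  set W := (words (a + 1) (a + 2) (c + 1)).card
  set M := ((words (a + 1) (a + 2) (c + 1)).filter (fun w =>
    ((a + 1 + (a + 2) + (c + 1) : ℕ) : ℤ) ∣ wt w)).card
  have e1 : 2 * N ≤ M + R := by omega
  have e2 : (2 * a + c + 4) * M ≤ W := hrot.trans hle
  have e3 : (2 * a + c + 4) * ((a + 3) * R) ≤ (a + 1) * W := by
    calc _ ≤ (2 * a + c + 4) * (words a (a + 2) (c + 1)).card := Nat.mul_le_mul_left _ h3
      _ = (a + 1) * W := by rw [h4]; ring
  have e4 : 2 * ((2 * a + c + 4) * ((a + 3) * N)) ≤ 2 * ((a + 2) * W) := by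
    calc _ = (2 * a + c + 4) * ((a + 3) * (2 * N)) := by ring
      _ ≤ (2 * a + c + 4) * ((a + 3) * (M + R)) := by gcongr
      _ = (a + 3) * ((2 * a + c + 4) * M) + (2 * a + c + 4) * ((a + 3) * R) := by ring
      _ ≤ (a + 3) * W + (a + 1) * W := by gcongr
      _ = _ := by ring
  omega

/-! ### The balanced case: equally many letters A and B -/

/-- The exchange of `A` and `B`, which negates the weight. -/
def swap : Letter → Letter
  | A => B
  | B => A
  | C => C

lemma swap_swap (x : Letter) : swap (swap x) = x := by cases x <;> rfl

lemma swap_injective : Function.Injective swap := Function.LeftInverse.injective swap_swap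

lemma sgn_map_swap (l : List Letter) : sgn (l.map swap) = - sgn l := by
  induction l with
  | nil => simp
  | cons x l ih => cases x <;> simp [swap, eps, ih] <;> ring

lemma wt_map_swap (l : List Letter) : wt (l.map swap) = - wt l := by
  induction l with
  | nil => simp
  | cons x l ih =>
    rw [List.map_cons, wt_cons, wt_cons, ih, sgn_map_swap]
    cases x <;> simp [swap, eps] <;> ring

lemma map_swap_mem {a b c : ℕ} {w : List Letter} (h : w ∈ words a b c) :
    w.map swap ∈ words b a c := by
  rw [mem_words] at h ⊢
  have key : ∀ x, (w.map swap).count (swap x) = w.count x := fun x =>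
    List.count_map_of_injective w swap swap_injective x
  exact ⟨(key B).trans h.2.1, (key A).trans h.1, (key C).trans h.2.2⟩

lemma count_swap_le (a b c : ℕ) :
    ((words a b c).filter (fun w => wt w = 0)).card ≤
      ((words b a c).filter (fun w => wt w = 0)).card := by
  apply Finset.card_le_card_of_injOn (List.map swap)
  · intro w hw
    simp only [Finset.coe_filter, Set.mem_ofPred_eq] at hw ⊢
    exact ⟨map_swap_mem hw.1, by rw [wt_map_swap, hw.2, neg_zero]⟩
  · exact (List.map_injective_iff.2 swap_injective).injOn

/-- In a word with as many `A`s as `B`s, deleting the first letter does not change the weight. -/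
lemma balanced_recursion (a c : ℕ) :
    ((words (a + 1) (a + 1) (c + 1)).filter (fun w => wt w = 0)).card ≤
      ((words (a + 1) (a + 1) c).filter (fun w => wt w = 0)).card +
      2 * ((words a (a + 1) (c + 1)).filter (fun w => wt w = 0)).card := by
  have hsub : (words (a + 1) (a + 1) (c + 1)).filter (fun w => wt w = 0) ⊆
      ((words (a + 1) (a + 1) c).filter (fun w => wt w = 0)).image (List.cons C) ∪
      (((words a (a + 1) (c + 1)).filter (fun w => wt w = 0)).image (List.cons A) ∪
      ((words (a + 1) a (c + 1)).filter (fun w => wt w = 0)).image (List.cons B)) := by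
    intro w hw
    obtain ⟨hw, h0⟩ := Finset.mem_filter.1 hw
    have hl := length_of_mem hw
    have hs := sgn_of_mem hw
    simp only [Finset.mem_union, Finset.mem_image, Finset.mem_filter]
    cases w with
    | nil => simp at hl
    | cons x l =>
      have h1 : wt l = 0 := by
        rw [wt_cons, ← sgn_cons, hs] at h0
        simpa using h0
      cases x with
      | A => exact Or.inr (Or.inl ⟨l, ⟨mem_words_insA (u := []).1 hw, h1⟩, rfl⟩)
      | B => exact Or.inr (Or.inr ⟨l, ⟨mem_words_insB (u := []).1 hw, h1⟩, rfl⟩)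
      | C => exact Or.inl ⟨l, ⟨mem_words_insC (u := []).1 hw, h1⟩, rfl⟩
  have h1 := Finset.card_le_card hsub
  have h2 := Finset.card_union_le
    (((words (a + 1) (a + 1) c).filter (fun w => wt w = 0)).image (List.cons C))
    (((words a (a + 1) (c + 1)).filter (fun w => wt w = 0)).image (List.cons A) ∪
      ((words (a + 1) a (c + 1)).filter (fun w => wt w = 0)).image (List.cons B))
  have h3 := Finset.card_union_le
    (((words a (a + 1) (c + 1)).filter (fun w => wt w = 0)).image (List.cons A))
    (((words (a + 1) a (c + 1)).filter (fun w => wt w = 0)).image (List.cons B))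
  have h4 := Finset.card_image_le (s := (words (a + 1) (a + 1) c).filter (fun w => wt w = 0))
    (f := List.cons C)
  have h5 := Finset.card_image_le (s := (words a (a + 1) (c + 1)).filter (fun w => wt w = 0))
    (f := List.cons A)
  have h6 := Finset.card_image_le (s := (words (a + 1) a (c + 1)).filter (fun w => wt w = 0))
    (f := List.cons B)
  have h7 := count_swap_le (a + 1) a (c + 1)
  omega

/-- The step from no letter `C` to a single one. The slack `K` serves to treat `base_le` (`K = 0`)
and `base_lt` (`K = 1`) together. -/
lemma balanced_base (n K : ℕ)
    (hK : (n + 3) * ((words (n + 2) (n + 2) 0).filter (fun w => wt w = 0)).card + K ≤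
      (words (n + 2) (n + 2) 0).card) :
    (n + 3) * ((2 * n + 5) * ((words (n + 2) (n + 2) 1).filter (fun w => wt w = 0)).card) +
      (2 * n + 5) * K ≤ (n + 3) * (words (n + 2) (n + 2) 1).card := by
  have h1 := balanced_recursion (n + 1) 0
  have h2 := count_deficiency_one n 0
  have h3 := card_words_succC (n + 2) (n + 2) 0
  have h4 := card_words_succA (n + 1) (n + 2) 1
  simp only [zero_add, add_assoc, Nat.reduceAdd, add_zero, one_mul] at h1 h2 h3 h4
  set N := ((words (n + 2) (n + 2) 1).filter (fun w => wt w = 0)).card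
  set N' := ((words (n + 2) (n + 2) 0).filter (fun w => wt w = 0)).card
  set T := ((words (n + 1) (n + 2) 1).filter (fun w => wt w = 0)).card
  set W := (words (n + 2) (n + 2) 1).card
  set P := (words (n + 2) (n + 2) 0).card
  set Q := (words (n + 1) (n + 2) 1).card
  have e1 : 2 * ((n + 3) * T) ≤ Q := by
    have : (n + 2) * (2 * ((n + 3) * T)) ≤ (n + 2) * Q := by
      calc _ = (2 * n + 4) * ((n + 3) * T) := by ring
        _ ≤ _ := h2
    exact Nat.le_of_mul_le_mul_left this (by omega)
  have e2 : (2 * n + 5) * Q = (n + 2) * W := by rw [h4]; ring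
  have e3 : (2 * n + 5) * P = W := by rw [h3]; ring
  calc _ ≤ (n + 3) * ((2 * n + 5) * (N' + 2 * T)) + (2 * n + 5) * K := by gcongr
    _ = (2 * n + 5) * ((n + 3) * N' + K) + (2 * n + 5) * (2 * ((n + 3) * T)) := by ring
    _ ≤ (2 * n + 5) * P + (2 * n + 5) * Q := by gcongr
    _ = _ := by rw [e2, e3]; ring

lemma balanced_one_le (n : ℕ) :
    (2 * n + 5) * ((words (n + 2) (n + 2) 1).filter (fun w => wt w = 0)).card ≤
      (words (n + 2) (n + 2) 1).card := by
  have := balanced_base n 0 (by simpa using base_le (n + 1))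
  exact Nat.le_of_mul_le_mul_left (by simpa using this) (by omega : 0 < n + 3)

lemma balanced_one_lt (n : ℕ) (hn : 1 ≤ n) :
    (2 * n + 5) * ((words (n + 2) (n + 2) 1).filter (fun w => wt w = 0)).card <
      (words (n + 2) (n + 2) 1).card := by
  have := balanced_base n 1 (by simpa using base_lt (n + 1) (by omega))
  exact Nat.lt_of_mul_lt_mul_left (a := n + 3) (by omega)

lemma balanced_step (n c : ℕ)
    (ih : (2 * n + c + 5) * ((words (n + 2) (n + 2) (c + 1)).filter (fun w => wt w = 0)).card ≤
      (words (n + 2) (n + 2) (c + 1)).card) :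
    (2 * n + c + 6) * ((words (n + 2) (n + 2) (c + 2)).filter (fun w => wt w = 0)).card <
      (words (n + 2) (n + 2) (c + 2)).card := by
  have h1 := balanced_recursion (n + 1) (c + 1)
  have h2 := count_deficiency_one n (c + 1)
  have h3 := card_words_succC (n + 2) (n + 2) (c + 1)
  have h4 := card_words_succA (n + 1) (n + 2) (c + 2)
  have hpos := words_card_pos (n + 2) (n + 2) (c + 2)
  simp only [add_assoc, Nat.reduceAdd] at h1 h2 h3 h4
  set N := ((words (n + 2) (n + 2) (c + 2)).filter (fun w => wt w = 0)).card
  set N' := ((words (n + 2) (n + 2) (c + 1)).filter (fun w => wt w = 0)).card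
  set T := ((words (n + 1) (n + 2) (c + 2)).filter (fun w => wt w = 0)).card
  set W := (words (n + 2) (n + 2) (c + 2)).card
  set P := (words (n + 2) (n + 2) (c + 1)).card
  set Q := (words (n + 1) (n + 2) (c + 2)).card
  have e2 : (2 * n + c + 6) * Q = (n + 2) * W := by rw [h4]; ring
  have e3 : (2 * n + c + 6) * P = (c + 2) * W := by rw [h3]; ring
  have h2' : (2 * n + c + 5) * ((n + 3) * T) ≤ (n + 2) * Q := by
    convert h2 using 2; ring
  have key : ((n + 3) * (2 * n + c + 5)) * ((2 * n + c + 6) * N) <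
      ((n + 3) * (2 * n + c + 5)) * W := by
    calc _ ≤ ((n + 3) * (2 * n + c + 5)) * ((2 * n + c + 6) * (N' + 2 * T)) := by gcongr
      _ = (2 * n + c + 6) * ((n + 3) * ((2 * n + c + 5) * N')) +
          (2 * n + c + 6) * (2 * ((2 * n + c + 5) * ((n + 3) * T))) := by ring
      _ ≤ (2 * n + c + 6) * ((n + 3) * P) + (2 * n + c + 6) * (2 * ((n + 2) * Q)) := by gcongr
      _ = (n + 3) * ((2 * n + c + 6) * P) + 2 * (n + 2) * ((2 * n + c + 6) * Q) := by ring
      _ = ((n + 3) * (c + 2) + 2 * (n + 2) * (n + 2)) * W := by rw [e2, e3]; ring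
      _ < _ := by
        apply Nat.mul_lt_mul_of_pos_right _ hpos
        nlinarith
  exact Nat.lt_of_mul_lt_mul_left key

lemma balanced (n c : ℕ) :
    (2 * n + c + 5) * ((words (n + 2) (n + 2) (c + 1)).filter (fun w => wt w = 0)).card ≤
      (words (n + 2) (n + 2) (c + 1)).card ∧ (¬ (n = 0 ∧ c = 0) →
    (2 * n + c + 5) * ((words (n + 2) (n + 2) (c + 1)).filter (fun w => wt w = 0)).card <
      (words (n + 2) (n + 2) (c + 1)).card) := by
  induction c with
  | zero => exact ⟨balanced_one_le n, fun h => balanced_one_lt n (by omega)⟩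
  | succ c ih =>
    have h := balanced_step n c ih.1
    exact ⟨h.le, fun _ => h⟩

/-! ### Large difference: growing a block of letters A -/

/-- Gaps of words in `words a' b c` such that inserting a block of `i` letters `A` there gives
weight `0`. -/
def blockSplits (b c i a' : ℕ) : Finset (List Letter × List Letter) :=
  (splits a' b c).filter (fun p => wt (p.1 ++ (List.replicate i A ++ p.2)) = 0)

/-- Words `v` for which the weight of `v ++ A ⋯ A`, with `i` letters `A` at the end, is nonnegative
and divisible by `i`. Moving the block to the left lowers the weight by multiples of `i`, so these
are the candidates for containing a gap in `blockSplits`. -/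
def tailWords (b c i a' : ℕ) : Finset (List Letter) :=
  (words a' b c).filter (fun v => 0 ≤ wt (v ++ List.replicate i A) ∧
    (i : ℤ) ∣ wt (v ++ List.replicate i A))

/-- Moving a block of `i` letters `A` from the end to the front of `v` costs `i` for each `C` and
`2 * i` for each `B` in `v`, hence nothing for an `A`. -/
lemma wt_move_block (u v : List Letter) (i : ℕ) :
    wt (u ++ (List.replicate i A ++ v)) =
      wt ((u ++ v) ++ List.replicate i A) - i * (v.length - sgn v) := by
  simp only [wt_append, sgn_append, sgn_replicate, List.length_append, List.length_replicate, eps]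
  push_cast
  ring

lemma sgn_le_length (l : List Letter) : sgn l ≤ l.length := by
  rw [sgn_eq_count, length_eq_count]
  push_cast
  omega

lemma eq_nil_of_sgn_eq_length {u t : List Letter} (h : sgn t = t.length)
    (hA : (u ++ t).getLast? ≠ some A) : t = [] := by
  rcases List.eq_nil_or_concat' t with rfl | ⟨l, x, rfl⟩
  · rfl
  · exfalso
    have := sgn_le_length l
    simp only [sgn_append, sgn_cons, sgn_nil, List.length_append, List.length_cons,
      List.length_nil] at h
    push_cast at h
    have hx : x = A := by
      cases x <;> simp only [eps] at h <;> first | rfl | omega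
    apply hA
    simp [hx]

/-- Two gaps of the same word that both give weight `0` are separated only by letters `A`; hence
they agree if the later one is not preceded by an `A`. -/
lemma splits_eq_of_le {i : ℕ} (hi : 0 < i) {v₁ v₂ u₁ u₂ : List Letter}
    (he : v₁ ++ v₂ = u₁ ++ u₂) (hle : u₁.length ≤ v₁.length)
    (hv : wt (v₁ ++ (List.replicate i A ++ v₂)) = 0)
    (hu : wt (u₁ ++ (List.replicate i A ++ u₂)) = 0)
    (hA : v₁.getLast? ≠ some A) : v₁ = u₁ ∧ v₂ = u₂ := by
  rw [wt_move_block] at hv hu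
  rw [he] at hv
  have h1 : (i : ℤ) * (v₂.length - sgn v₂) = i * (u₂.length - sgn u₂) := by linarith
  have h2 := mul_left_cancel₀ (by exact_mod_cast hi.ne') h1
  rcases List.append_eq_append_iff.1 he with ⟨t, ht1, ht2⟩ | ⟨t, ht1, ht2⟩
  · have : t = [] := by
      rw [ht1, List.length_append] at hle
      exact List.length_eq_zero_iff.1 (by omega)
    subst this
    simp_all
  · have : t = [] := by
      apply eq_nil_of_sgn_eq_length (u := u₁)
      · rw [ht2, List.length_append, sgn_append] at h2
        push_cast at h2
        linarith
      · rw [← ht1]; exact hA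
    subst this
    simp_all

lemma card_blockSplits_not_A (b c i a' : ℕ) (hi : 0 < i) :
    ((blockSplits b c i a').filter (fun p => p.1.getLast? ≠ some A)).card ≤
      (tailWords b c i a').card := by
  apply Finset.card_le_card_of_injOn (fun p => p.1 ++ p.2)
  · rintro ⟨v₁, v₂⟩ h
    simp only [blockSplits, tailWords, Finset.coe_filter, Finset.mem_filter, Set.mem_ofPred_eq,
      mem_splits] at h ⊢
    obtain ⟨⟨h1, h2⟩, h3⟩ := h
    rw [wt_move_block, sub_eq_zero] at h2
    refine ⟨h1, ?_, ?_⟩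
    · rw [h2]
      have := sgn_le_length v₂
      exact mul_nonneg (by positivity) (by linarith)
    · rw [h2]; exact dvd_mul_right _ _
  · rintro ⟨v₁, v₂⟩ h ⟨u₁, u₂⟩ h' e
    simp only [blockSplits, Finset.coe_filter, Finset.mem_filter, Set.mem_ofPred_eq,
      mem_splits] at h h' e
    rcases le_total u₁.length v₁.length with hl | hl
    · have := splits_eq_of_le hi e hl h.1.2 h'.1.2 h.2
      simp [this]
    · have := splits_eq_of_le hi e.symm hl h'.1.2 h.1.2 h'.2
      simp [this]

/-- If the inserted block is preceded by an `A`, that letter can be absorbed into the block. -/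
lemma blockSplits_step (b c i a' : ℕ) (hi : 0 < i) :
    (blockSplits b c i (a' + 1)).card ≤
      (tailWords b c i (a' + 1)).card + (blockSplits b c (i + 1) a').card := by
  have h1 := card_blockSplits_not_A b c i (a' + 1) hi
  have h2 : ((blockSplits b c i (a' + 1)).filter (fun p => p.1.getLast? = some A)).card ≤
      (blockSplits b c (i + 1) a').card := by
    refine le_trans (Finset.card_le_card ?_)
      (Finset.card_image_le (s := blockSplits b c (i + 1) a') (f := fun p => (p.1 ++ [A], p.2)))
    rintro ⟨v₁, v₂⟩ h
    simp only [blockSplits, Finset.mem_filter, mem_splits] at h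
    obtain ⟨⟨h1, h2⟩, h3⟩ := h
    obtain ⟨u, rfl⟩ := List.getLast?_eq_some_iff.1 h3
    rw [Finset.mem_image]
    refine ⟨(u, v₂), ?_, rfl⟩
    simp only [blockSplits, Finset.mem_filter, mem_splits]
    refine ⟨?_, ?_⟩
    · rw [← mem_words_insA]
      simpa using h1
    · rw [List.replicate_succ]
      simpa using h2
  have h3 := Finset.card_filter_add_card_filter_not (s := blockSplits b c i (a' + 1))
    (fun p => p.1.getLast? = some A)
  simp only [ne_eq] at h1
  omega

lemma blockSplits_zero (b c i : ℕ) (hi : 0 < i) :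
    (blockSplits b c i 0).card ≤ (tailWords b c i 0).card := by
  refine le_trans (le_of_eq ?_) (card_blockSplits_not_A b c i 0 hi)
  rw [Finset.filter_true_of_mem]
  rintro ⟨v₁, v₂⟩ h h'
  obtain ⟨u, rfl⟩ := List.getLast?_eq_some_iff.1 h'
  have := (mem_words.1 (mem_splits.1 (Finset.mem_filter.1 h).1)).1
  simp at this

/-- For short blocks, `v ++ A ⋯ A` and `v.reverse ++ A ⋯ A` have weights with negative sum, so at
most one of the two is nonnegative. -/
lemma two_mul_tailWords (b c i a' : ℕ) (hi : i ≤ 3) (hab : a' + i + 4 ≤ b) :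
    2 * (tailWords b c i a').card ≤ (words a' b c).card := by
  have hdisj : Disjoint (tailWords b c i a') ((tailWords b c i a').image List.reverse) := by
    rw [Finset.disjoint_left]
    intro v hv hv'
    obtain ⟨u, hu, rfl⟩ := Finset.mem_image.1 hv'
    simp only [tailWords, Finset.mem_filter] at hu hv
    have h1 := hv.2.1
    have h2 := hu.2.1
    have hl := length_of_mem hu.1
    rw [wt_append, wt_reverse, List.length_reverse] at h1
    rw [wt_append] at h2
    rw [sgn_replicate, sgn_of_mem hu.1] at h1
    rw [sgn_replicate] at h2
    have h3 := two_wt_replicate i A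
    simp only [eps] at h1 h2 h3
    rw [hl] at h1 h2
    push_cast at h1 h2
    have hab' : (a' : ℤ) + i + 4 ≤ b := by exact_mod_cast hab
    have h4 : (0 : ℤ) ≤ ((a' + b + c : ℕ) + 1) * ((b : ℤ) - (a' + i + 4)) := by
      apply mul_nonneg <;> [positivity; linarith]
    push_cast at h4
    interval_cases i <;> push_cast at * <;> nlinarith
  have hsub : tailWords b c i a' ∪ (tailWords b c i a').image List.reverse ⊆ words a' b c := by
    apply Finset.union_subset (Finset.filter_subset _ _)
    intro v hv
    obtain ⟨u, hu, rfl⟩ := Finset.mem_image.1 hv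
    exact (perm_mem_words (List.reverse_perm u)).2 (Finset.mem_filter.1 hu).1
  have := Finset.card_le_card hsub
  rw [Finset.card_union_of_disjoint hdisj,
    Finset.card_image_of_injective _ List.reverse_injective] at this
  omega

lemma two_mul_words (a b c : ℕ) (h : a + 1 ≤ b + c) :
    2 * (words a b c).card ≤ (words (a + 1) b c).card := by
  have h1 := card_words_succA a b c
  have : (a + 1) * (2 * (words a b c).card) ≤ (a + 1) * (words (a + 1) b c).card := by
    rw [h1]
    calc _ = (2 * (a + 1)) * (words a b c).card := by ring
      _ ≤ _ := Nat.mul_le_mul_right _ (by omega)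
  exact Nat.le_of_mul_le_mul_left this (by omega)

lemma pow_mul_words (a b c k : ℕ) (h : a + k ≤ b + c) :
    2 ^ k * (words a b c).card ≤ (words (a + k) b c).card := by
  induction k with
  | zero => simp
  | succ k ih =>
    have h1 := ih (by omega)
    have h2 := two_mul_words (a + k) b c (by omega)
    calc _ = 2 * (2 ^ k * (words a b c).card) := by ring
      _ ≤ 2 * (words (a + k) b c).card := by gcongr
      _ ≤ _ := h2

/-- For long blocks, divisibility by `i` is the effective constraint. -/
lemma beta_tailWords (b c i a' : ℕ) (hi : 0 < i) :
    i * ((b + 1) * (tailWords b (c + 1) i a').card) ≤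
      (a' + b + c + i) * (words a' b (c + 1)).card := by
  refine le_trans ?_ (beta_mod a' b c i hi
    (wt (List.replicate i A) + ((a' + b + (c + 1) : ℕ) : ℤ) * i))
  gcongr
  intro v hv
  simp only [tailWords, Finset.mem_filter] at hv ⊢
  refine ⟨hv.1, dvd_congr hv.2.2 ?_⟩
  rw [wt_append, sgn_replicate, length_of_mem hv.1]
  simp only [eps]
  ring

/-- The contribution of blocks of length `i` decays like `2 ^ (-i)`, so that the sum over `i ≥ 1`
stays below the total. -/
lemma tailWords_bound (b c i a' : ℕ) (hi : 0 < i) (hab : a' + i + 4 ≤ b) :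
    2 ^ i * ((a' + i + b + (c + 1)) * (tailWords b (c + 1) i a').card) ≤
      (a' + i) * (words (a' + i) b (c + 1)).card := by
  rcases le_or_gt i 3 with h | h
  · obtain ⟨k, rfl⟩ : ∃ k, i = k + 1 := ⟨i - 1, by omega⟩
    have h1 := two_mul_tailWords b (c + 1) (k + 1) a' h hab
    have h2 := pow_mul_words a' b (c + 1) k (by omega)
    have h3 := card_words_succA (a' + k) b (c + 1)
    calc _ = (a' + (k + 1) + b + (c + 1)) *
            (2 ^ k * (2 * (tailWords b (c + 1) (k + 1) a').card)) := by
          ring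
      _ ≤ (a' + (k + 1) + b + (c + 1)) * (2 ^ k * (words a' b (c + 1)).card) := by gcongr
      _ ≤ (a' + (k + 1) + b + (c + 1)) * (words (a' + k) b (c + 1)).card := by gcongr
      _ = (a' + k + b + (c + 1) + 1) * (words (a' + k) b (c + 1)).card := by ring
      _ = _ := h3.symm
  · obtain ⟨k, rfl⟩ : ∃ k, i = k + 2 := ⟨i - 2, by omega⟩
    have h1 := beta_tailWords b c (k + 2) a' hi
    have h2 := pow_mul_words a' b (c + 1) k (by omega)
    have h3 := card_words_succA (a' + k) b (c + 1)
    have h4 := card_words_succA (a' + k + 1) b (c + 1)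
    have key : ((k + 2) * (b + 1)) * (2 ^ (k + 2) * ((a' + (k + 2) + b + (c + 1)) *
        (tailWords b (c + 1) (k + 2) a').card)) ≤
        ((k + 2) * (b + 1)) * ((a' + (k + 2)) * (words (a' + (k + 2)) b (c + 1)).card) := by
      calc _ = 4 * 2 ^ k * ((a' + (k + 2) + b + (c + 1)) * ((k + 2) * ((b + 1) *
            (tailWords b (c + 1) (k + 2) a').card))) := by ring
        _ ≤ 4 * 2 ^ k * ((a' + (k + 2) + b + (c + 1)) *
            ((a' + b + c + (k + 2)) * (words a' b (c + 1)).card)) := by gcongr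
        _ = 4 * ((a' + (k + 2) + b + (c + 1)) *
            ((a' + b + c + (k + 2)) * (2 ^ k * (words a' b (c + 1)).card))) := by ring
        _ ≤ 4 * ((a' + (k + 2) + b + (c + 1)) *
            ((a' + b + c + (k + 2)) * (words (a' + k) b (c + 1)).card)) := by gcongr
        _ = 4 * ((a' + (k + 2) + b + (c + 1)) *
            ((a' + k + b + (c + 1) + 1) * (words (a' + k) b (c + 1)).card)) := by ring
        _ = 4 * (a' + k + 1) * ((a' + k + 1 + b + (c + 1) + 1) *
            (words (a' + k + 1) b (c + 1)).card) := by rw [← h3]; ring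
        _ = (4 * (a' + k + 1)) * ((a' + (k + 2)) * (words (a' + (k + 2)) b (c + 1)).card) := by
            rw [← h4]; ring_nf
        _ ≤ _ := by
            apply Nat.mul_le_mul_right
            apply Nat.mul_le_mul <;> omega
    exact Nat.le_of_mul_le_mul_left key (by positivity)

lemma blockSplits_bound (b c a' i : ℕ) (hab : a' + (i + 1) + 4 ≤ b) :
    2 ^ i * ((a' + (i + 1) + b + (c + 1)) * (blockSplits b (c + 1) (i + 1) a').card) <
      (a' + (i + 1)) * (words (a' + (i + 1)) b (c + 1)).card := by
  induction a' generalizing i with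
  | zero =>
    have h1 := blockSplits_zero b (c + 1) (i + 1) (by omega)
    have h2 := tailWords_bound b c (i + 1) 0 (by omega) (by omega)
    have hpos : 0 < (0 + (i + 1)) * (words (0 + (i + 1)) b (c + 1)).card :=
      Nat.mul_pos (by omega) (words_card_pos _ _ _)
    have h3 : 2 * (2 ^ i * ((0 + (i + 1) + b + (c + 1)) * (blockSplits b (c + 1) (i + 1) 0).card)) ≤
        (0 + (i + 1)) * (words (0 + (i + 1)) b (c + 1)).card := by
      refine le_trans ?_ h2
      calc _ = 2 ^ (i + 1) * ((0 + (i + 1) + b + (c + 1)) *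
            (blockSplits b (c + 1) (i + 1) 0).card) := by ring
        _ ≤ _ := by gcongr
    omega
  | succ a' ih =>
    have h1 := blockSplits_step b (c + 1) (i + 1) a' (by omega)
    have h2 := tailWords_bound b c (i + 1) (a' + 1) (by omega) (by omega)
    have h3 := ih (i + 1) (by omega)
    have e : a' + (i + 1 + 1) = a' + 1 + (i + 1) := by ring
    rw [e] at h3
    have h4 : 2 * (2 ^ i * ((a' + 1 + (i + 1) + b + (c + 1)) *
        (blockSplits b (c + 1) (i + 1) (a' + 1)).card)) ≤
        2 ^ (i + 1) * ((a' + 1 + (i + 1) + b + (c + 1)) *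
          (tailWords b (c + 1) (i + 1) (a' + 1)).card) +
        2 ^ (i + 1) * ((a' + 1 + (i + 1) + b + (c + 1)) *
          (blockSplits b (c + 1) (i + 1 + 1) a').card) := by
      calc _ = 2 ^ (i + 1) * ((a' + 1 + (i + 1) + b + (c + 1)) *
            (blockSplits b (c + 1) (i + 1) (a' + 1)).card) := by ring
        _ ≤ 2 ^ (i + 1) * ((a' + 1 + (i + 1) + b + (c + 1)) *
            ((tailWords b (c + 1) (i + 1) (a' + 1)).card +
              (blockSplits b (c + 1) (i + 1 + 1) a').card)) := by gcongr
        _ = _ := by ring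
    omega

/-- The case `b - a ≥ 4`. -/
lemma count_deficiency_four (a b c : ℕ) (hab : a + 1 + 4 ≤ b) :
    (a + 1 + b + (c + 1)) *
      ((words (a + 1) b (c + 1)).filter (fun w => wt w = 0)).card <
      (words (a + 1) b (c + 1)).card := by
  have h := blockSplits_bound b c a 0 (by omega)
  have h2 := card_markA a b (c + 1) (fun w => wt w = 0)
  have e : blockSplits b (c + 1) (0 + 1) a =
      (splits a b (c + 1)).filter (fun p => wt (p.1 ++ A :: p.2) = 0) := by
    simp [blockSplits]
  rw [e, h2] at h
  apply Nat.lt_of_mul_lt_mul_left (a := a + 1)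
  calc _ = 2 ^ 0 * ((a + (0 + 1) + b + (c + 1)) * ((a + 1) *
        ((words (a + 1) b (c + 1)).filter (fun w => wt w = 0)).card)) := by ring
    _ < _ := h

/-! ### All cases for words -/

/-- The case `b - a = i ∈ {2, 3}`. As `i` is prime, either it is coprime to `m` and rotation
suffices, or it divides `m` and the hypothesis on words with weight divisible by `i` is needed. -/
lemma count_deficiency_small (a c i : ℕ) (hi : i = 2 ∨ i = 3)
    (hmod : i ∣ a + (a + i) + c →
      2 * i * ((words a (a + i) c).filter (fun w => (i : ℤ) ∣ wt w)).card <
        (i + 1) * (words a (a + i) c).card) :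
    (a + (a + i) + c) * ((words a (a + i) c).filter (fun w => wt w = 0)).card <
      (words a (a + i) c).card := by
  have hflip := flip_count_two a (a + i) c (by omega)
  have hpos := words_card_pos a (a + i) c
  have hprime : Nat.Prime i := by rcases hi with rfl | rfl <;> norm_num
  by_cases hd : i ∣ a + (a + i) + c
  · have h1 := hmod hd
    obtain ⟨k, hk⟩ := hd
    have hrot := rotation_count a (a + i) c i k (-1) hk hprime.pos (by push_cast; ring)
      isCoprime_one_right.neg_right
    set N := ((words a (a + i) c).filter (fun w => wt w = 0)).card
    set W := (words a (a + i) c).card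
    set M := ((words a (a + i) c).filter (fun w => ((a + (a + i) + c : ℕ) : ℤ) ∣ wt w)).card
    set R := ((words a (a + i) c).filter (fun w => (i : ℤ) ∣ wt w)).card
    rw [hk]
    have h2 : 4 * (i * k * N) < 4 * W := by
      calc 4 * (i * k * N) = 2 * i * (k * (2 * N)) := by ring
        _ ≤ 2 * i * (k * M) := by gcongr
        _ ≤ 2 * i * R := by gcongr
        _ < (i + 1) * W := h1
        _ ≤ 4 * W := Nat.mul_le_mul_right _ (by omega)
    omega
  · have hcop : IsCoprime ((a + (a + i) + c : ℕ) : ℤ) (-(i : ℤ)) := by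
      apply IsCoprime.neg_right
      rw [Nat.isCoprime_iff_coprime]
      exact ((Nat.Prime.coprime_iff_not_dvd hprime).2 hd).symm
    have hrot := rotation_count a (a + i) c 1 (a + (a + i) + c) (-(i : ℤ)) (by ring) one_pos
      (by push_cast; ring) hcop
    have hle : ((words a (a + i) c).filter (fun w => ((1 : ℕ) : ℤ) ∣ wt w)).card ≤
      (words a (a + i) c).card := Finset.card_filter_le _ _
    set N := ((words a (a + i) c).filter (fun w => wt w = 0)).card
    set W := (words a (a + i) c).card
    set M := ((words a (a + i) c).filter (fun w => ((a + (a + i) + c : ℕ) : ℤ) ∣ wt w)).card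
    have h2 : 2 * ((a + (a + i) + c) * N) ≤ W := by
      calc _ = (a + (a + i) + c) * (2 * N) := by ring
        _ ≤ (a + (a + i) + c) * M := by gcongr
        _ ≤ W := hrot.trans hle
    omega

lemma wt_le_of_count_A {l : List Letter} (h : l.count A = 0) : wt l ≤ -(l.count B : ℤ) := by
  induction l with
  | nil => simp
  | cons x l ih =>
    cases x with
    | A => simp at h
    | B =>
      have h' : l.count A = 0 := by simpa using h
      have := ih h'
      rw [wt_cons, sgn_eq_count, h']
      simp [eps]
      omega
    | C =>
      have h' : l.count A = 0 := by simpa using h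
      have := ih h'
      rw [wt_cons, sgn_eq_count, h']
      simp [eps]
      omega

lemma le_wt_of_count_B {l : List Letter} (h : l.count B = 0) : (l.count A : ℤ) ≤ wt l := by
  induction l with
  | nil => simp
  | cons x l ih =>
    cases x with
    | B => simp at h
    | A =>
      have h' : l.count B = 0 := by simpa using h
      have := ih h'
      rw [wt_cons, sgn_eq_count, h']
      simp [eps]
      omega
    | C =>
      have h' : l.count B = 0 := by simpa using h
      have := ih h'
      rw [wt_cons, sgn_eq_count, h']
      simp [eps]
      omega

lemma wt_ne_zero_of_count_one {l : List Letter} (hA : l.count A = 1) (hB : l.count B = 1) :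
    wt l ≠ 0 := by
  induction l with
  | nil => simp at hA
  | cons x l ih =>
    rw [wt_cons, sgn_eq_count]
    cases x with
    | A =>
      simp at hA hB
      have := wt_le_of_count_A (l := l) (by simpa using hA)
      have hA' : l.count A = 0 := by simpa using hA
      simp only [eps]
      omega
    | B =>
      simp at hA hB
      have hB' : l.count B = 0 := by simpa using hB
      have := le_wt_of_count_B (l := l) hB'
      simp only [eps]
      omega
    | C =>
      simp at hA hB
      have := ih hA hB
      simp only [eps]
      omega

/-- The statement for words, given the estimate `hmod` on divisible weights, which is proved for
labellings in `signedSum_dvd`. -/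
theorem words_bound (a b c : ℕ) (hab : a ≤ b) (hb : 1 ≤ b) (hc : 1 ≤ c)
    (hmod : ∀ i : ℕ, 2 ≤ i → i ∣ a + b + c →
      2 * i * ((words a b c).filter (fun w => (i : ℤ) ∣ wt w)).card <
        (i + 1) * (words a b c).card) :
    (a + b + c) * ((words a b c).filter (fun w => wt w = 0)).card ≤ (words a b c).card ∧
    (¬ (a = 2 ∧ b = 2 ∧ c = 1) →
      (a + b + c) * ((words a b c).filter (fun w => wt w = 0)).card < (words a b c).card) := by
  have hstrict : (a + b + c) * ((words a b c).filter (fun w => wt w = 0)).card <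
      (words a b c).card →
    (a + b + c) * ((words a b c).filter (fun w => wt w = 0)).card ≤ (words a b c).card ∧
    (¬ (a = 2 ∧ b = 2 ∧ c = 1) →
      (a + b + c) * ((words a b c).filter (fun w => wt w = 0)).card < (words a b c).card) :=
    fun h => ⟨h.le, fun _ => h⟩
  have hempty : (∀ w ∈ words a b c, wt w ≠ 0) →
      (a + b + c) * ((words a b c).filter (fun w => wt w = 0)).card < (words a b c).card := by
    intro h
    rw [Finset.filter_false_of_mem h]
    simpa using words_card_pos a b c
  obtain ⟨c, rfl⟩ : ∃ c', c = c' + 1 := ⟨c - 1, by omega⟩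
  rcases Nat.eq_zero_or_pos a with rfl | ha
  · apply hstrict
    apply hempty
    intro w hw
    obtain ⟨h1, h2, h3⟩ := mem_words.1 hw
    have := wt_le_of_count_A h1
    omega
  obtain ⟨a, rfl⟩ : ∃ a', a = a' + 1 := ⟨a - 1, by omega⟩
  obtain ⟨d, rfl⟩ := Nat.exists_eq_add_of_le hab
  match d, hmod with
  | 0, _ =>
    rcases Nat.eq_zero_or_pos a with rfl | ha
    · apply hstrict
      apply hempty
      intro w hw
      obtain ⟨h1, h2, h3⟩ := mem_words.1 hw
      exact wt_ne_zero_of_count_one h1 h2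
    · obtain ⟨n, rfl⟩ : ∃ n, a = n + 1 := ⟨a - 1, by omega⟩
      have h := balanced n c
      have e : n + 1 + 1 + (n + 1 + 1 + 0) + (c + 1) = 2 * n + c + 5 := by ring
      rw [e]
      exact ⟨h.1, fun h' => h.2 (by omega)⟩
  | 1, _ =>
    apply hstrict
    have h := count_deficiency_one a c
    have hpos := words_card_pos (a + 1) (a + 2) (c + 1)
    have e : a + 1 + (a + 1 + 1) + (c + 1) = 2 * a + c + 4 := by ring
    rw [e]
    apply Nat.lt_of_mul_lt_mul_left (a := a + 3)
    calc _ = (2 * a + c + 4) * ((a + 3) *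
        ((words (a + 1) (a + 2) (c + 1)).filter (fun w => wt w = 0)).card) := by
          rw [show a + 1 + 1 = a + 2 from rfl]; ring
      _ ≤ _ := h
      _ < _ := Nat.mul_lt_mul_of_pos_right (by omega) hpos
  | 2, hmod =>
    exact hstrict (count_deficiency_small (a + 1) (c + 1) 2 (Or.inl rfl) (hmod 2 le_rfl))
  | 3, hmod =>
    exact hstrict (count_deficiency_small (a + 1) (c + 1) 3 (Or.inr rfl) (hmod 3 (by norm_num)))
  | d + 4, _ =>
    exact hstrict (count_deficiency_four a (a + 1 + (d + 4)) c (by omega))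

/-! ### From words to labellings -/

lemma sgn_ofFn {m : ℕ} (g : Fin m → Letter) : sgn (List.ofFn g) = ∑ k, eps (g k) := by
  simp [sgn, List.sum_ofFn, List.map_ofFn]

lemma wt_ofFn {m : ℕ} (g : Fin m → Letter) :
    wt (List.ofFn g) = ∑ k : Fin m, eps (g k) * ((k : ℕ) + 1 : ℤ) := by
  induction m with
  | zero => simp
  | succ m ih =>
    rw [List.ofFn_succ, wt_cons, ih, sgn_ofFn, Fin.sum_univ_succ]
    simp only [Fin.val_succ, Fin.val_zero]
    push_cast
    simp only [mul_add, mul_one, Finset.sum_add_distrib]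
    ring

lemma count_ofFn {m : ℕ} (g : Fin m → Letter) (x : Letter) :
    (List.ofFn g).count x = (Finset.univ.filter (fun k => g k = x)).card := by
  induction m with
  | zero => simp
  | succ m ih =>
    rw [List.ofFn_succ, List.count_cons, ih, Fin.card_filter_univ_succ]
    by_cases h : g 0 = x <;> simp [h]

section Labelling

variable {E : Type*} [Fintype E] {m : ℕ}

/-- The word listing the letters of the elements of `E` in the order of their labels. -/
def word (col : E → Letter) (f : E ≃ Fin m) : List Letter :=
  List.ofFn (fun k => col (f.symm k))

/-- Labels of the `A`-elements minus labels of the `B`-elements; the label of `e` is `f e + 1`. -/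
def signedSum (col : E → Letter) (f : E ≃ Fin m) : ℤ :=
  ∑ e, eps (col e) * ((f e : ℕ) + 1 : ℤ)

/-- The number of elements of `E` that carry the letter `x`. -/
def mult (col : E → Letter) (x : Letter) : ℕ := (Finset.univ.filter (fun e => col e = x)).card

lemma wt_word (col : E → Letter) (f : E ≃ Fin m) : wt (word col f) = signedSum col f := by
  rw [word, wt_ofFn, signedSum]
  exact (Fintype.sum_equiv f _ _ (fun e => by simp)).symm

lemma word_mem (col : E → Letter) (f : E ≃ Fin m) :
    word col f ∈ words (mult col A) (mult col B) (mult col C) := by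
  have h : ∀ x, (word col f).count x = mult col x := by
    intro x
    rw [word, count_ofFn, mult]
    apply Finset.card_equiv f.symm
    simp
  rw [mem_words]
  exact ⟨h A, h B, h C⟩

lemma exists_perm {g g' : Fin m → Letter} (h : (List.ofFn g).Perm (List.ofFn g')) :
    ∃ σ : Equiv.Perm (Fin m), ∀ k, g' (σ k) = g k := by
  have hc : ∀ x, Nonempty ({k // g k = x} ≃ {k // g' k = x}) := by
    intro x
    refine ⟨Fintype.equivOfCardEq ?_⟩
    rw [Fintype.card_subtype, Fintype.card_subtype, ← count_ofFn, ← count_ofFn, h.count_eq]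
  refine ⟨Equiv.ofFiberEquiv (fun x => (hc x).some), fun k => ?_⟩
  exact Equiv.ofFiberEquiv_map _ k

variable [DecidableEq E]

lemma fibre_le (col : E → Letter) {w w' : List Letter} (h : w.Perm w') (hl : w.length = m) :
    (Finset.univ.filter (fun f : E ≃ Fin m => word col f = w)).card ≤
      (Finset.univ.filter (fun f : E ≃ Fin m => word col f = w')).card := by
  have ex : ∀ u : List Letter, u.length = m → ∃ g : Fin m → Letter, List.ofFn g = u := by
    rintro u rfl
    exact ⟨u.get, List.ofFn_get u⟩
  obtain ⟨g, rfl⟩ := ex w hl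
  obtain ⟨g', rfl⟩ := ex w' (h.length_eq ▸ hl)
  obtain ⟨σ, hσ⟩ := exists_perm h
  apply Finset.card_le_card_of_injOn (fun f => f.trans σ)
  · intro f hf
    simp only [Finset.coe_filter, Finset.mem_univ, true_and, Set.mem_ofPred_eq, word,
      List.ofFn_inj] at hf ⊢
    funext k
    obtain ⟨j, rfl⟩ := σ.surjective k
    rw [hσ, ← hf]
    simp
  · intro f _ f' _ e
    ext k
    have := congrArg (fun t : E ≃ Fin m => σ.symm (t k)) e
    simp at this
    rw [this]

/-- Every word with the letter counts of `col` comes from the same number `K` of labellings, so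
probabilities for labellings and for words agree. -/
lemma exists_fibre_card (col : E → Letter) (hm : Fintype.card E = m) :
    ∃ K : ℕ, ∀ (Q : List Letter → Prop) [DecidablePred Q],
      (Finset.univ.filter (fun f : E ≃ Fin m => Q (word col f))).card =
        K * ((words (mult col A) (mult col B) (mult col C)).filter Q).card := by
  obtain ⟨f₀⟩ : Nonempty (E ≃ Fin m) := ⟨Fintype.equivFinOfCardEq hm⟩
  refine ⟨(Finset.univ.filter (fun f : E ≃ Fin m => word col f = word col f₀)).card, ?_⟩
  intro Q _
  rw [Finset.card_eq_sum_card_fiberwise (f := word col)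
    (t := (words (mult col A) (mult col B) (mult col C)).filter Q)]
  · rw [mul_comm, ← smul_eq_mul, ← Finset.sum_const]
    apply Finset.sum_congr rfl
    intro w hw
    obtain ⟨hw, hQ⟩ := Finset.mem_filter.1 hw
    rw [Finset.filter_filter]
    have e : (Finset.univ.filter (fun f : E ≃ Fin m => Q (word col f) ∧ word col f = w)) =
        Finset.univ.filter (fun f : E ≃ Fin m => word col f = w) := by
      apply Finset.filter_congr
      intro f _
      exact ⟨fun h => h.2, fun h => ⟨h ▸ hQ, h⟩⟩
    rw [e]
    have hw0 := word_mem col f₀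
    have hperm : w.Perm (word col f₀) := by
      rw [List.perm_iff_count]
      rw [mem_words] at hw hw0
      intro x
      cases x <;> simp [hw, hw0]
    have hl : (word col f₀).length = m := by simp [word]
    exact le_antisymm (fibre_le col hperm (hperm.length_eq.trans hl)) (fibre_le col hperm.symm hl)
  · intro f hf
    simp only [Finset.coe_filter, Finset.mem_univ, true_and, Set.mem_ofPred_eq] at hf ⊢
    exact ⟨word_mem col f, hf⟩

lemma card_labellings (hm : Fintype.card E = m) :
    (Finset.univ : Finset (E ≃ Fin m)).card = m.factorial := by
  rw [Finset.card_univ, Fintype.card_equiv (Fintype.equivFinOfCardEq hm), hm]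

/-- For `i ∣ m`, two given elements have labels congruent modulo `i` with probability at most
`(m / i - 1) / (m - 1)`: by symmetry this is the average over all `y ≠ g` in the place of `x`. -/
lemma congruent_pairs (hm : Fintype.card E = m) {i : ℕ} (hi : 0 < i) (him : i ∣ m)
    {g x : E} (hgx : x ≠ g) :
    (m - 1) * (Finset.univ.filter (fun f : E ≃ Fin m =>
      (i : ℤ) ∣ ((f x : ℕ) : ℤ) - (f g : ℕ))).card ≤ (m / i - 1) * m.factorial := by
  have hswap : ∀ y ∈ Finset.univ.erase g,
      (Finset.univ.filter (fun f : E ≃ Fin m =>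
        (i : ℤ) ∣ ((f x : ℕ) : ℤ) - (f g : ℕ))).card ≤
      (Finset.univ.filter (fun f : E ≃ Fin m =>
        (i : ℤ) ∣ ((f y : ℕ) : ℤ) - (f g : ℕ))).card := by
    intro y hy
    have hyg : y ≠ g := Finset.ne_of_mem_erase hy
    apply Finset.card_le_card_of_injOn (fun f => (Equiv.swap x y).trans f)
    · intro f hf
      simp only [Finset.coe_filter, Finset.mem_univ, true_and, Set.mem_ofPred_eq,
        Equiv.trans_apply, Equiv.swap_apply_right] at hf ⊢
      rwa [Equiv.swap_apply_of_ne_of_ne hgx.symm hyg.symm]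
    · intro f _ f' _ e
      ext k
      have := congrArg (fun t : E ≃ Fin m => t (Equiv.swap x y k)) e
      simp at this
      rw [this]
  have hsum : ∑ y ∈ Finset.univ.erase g, (Finset.univ.filter (fun f : E ≃ Fin m =>
        (i : ℤ) ∣ ((f y : ℕ) : ℤ) - (f g : ℕ))).card ≤ (m / i - 1) * m.factorial := by
    simp only [Finset.card_filter]
    rw [Finset.sum_comm, ← card_labellings hm, mul_comm, ← smul_eq_mul]
    apply Finset.sum_le_card_nsmul
    intro f _
    rw [← Finset.card_filter]
    have h1 : ((Finset.univ.erase g).filter (fun y =>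
        (i : ℤ) ∣ ((f y : ℕ) : ℤ) - (f g : ℕ))).card + 1 ≤
        ((Finset.range m).filter (fun j : ℕ => (i : ℤ) ∣ (j : ℤ) + -((f g : ℕ) : ℤ))).card := by
      rw [Finset.filter_erase, Finset.card_erase_add_one (by simp)]
      apply Finset.card_le_card_of_injOn (fun y => (f y : ℕ))
      · intro y hy
        simp only [Finset.coe_filter, Finset.mem_univ, true_and, Set.mem_ofPred_eq,
          Finset.mem_range] at hy ⊢
        exact ⟨(f y).2, by rwa [← sub_eq_add_neg]⟩
      · intro y _ y' _ e
        exact f.injective (Fin.ext e)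
    have h2 := card_dvd_range i hi m (-((f g : ℕ) : ℤ))
    obtain ⟨k, rfl⟩ := him
    rw [Nat.mul_div_cancel_left _ hi]
    have h3 : i * ((Finset.range (i * k)).filter
        (fun j : ℕ => (i : ℤ) ∣ (j : ℤ) + -((f g : ℕ) : ℤ))).card < i * (k + 1) := by
      rw [mul_add, mul_one]; omega
    have h4 := Nat.lt_of_mul_lt_mul_left h3
    omega
  have hcard : (Finset.univ.erase g).card = m - 1 := by
    rw [Finset.card_erase_of_mem (Finset.mem_univ g), Finset.card_univ, hm]
  calc _ = ∑ y ∈ Finset.univ.erase g, (Finset.univ.filter (fun f : E ≃ Fin m =>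
        (i : ℤ) ∣ ((f x : ℕ) : ℤ) - (f g : ℕ))).card := by
        rw [Finset.sum_const, hcard, smul_eq_mul]
    _ ≤ _ := Finset.sum_le_sum hswap
    _ ≤ _ := hsum

lemma signedSum_swap (col : E → Letter) (f : E ≃ Fin m) {g x : E} (hg : col g = C)
    (hx : col x = B) :
    signedSum col ((Equiv.swap x g).trans f) =
      signedSum col f + (((f x : ℕ) : ℤ) - (f g : ℕ)) := by
  have hxg : x ≠ g := by
    rintro rfl
    rw [hg] at hx
    cases hx
  have key : ∀ f : E ≃ Fin m, signedSum col f = -((f x : ℕ) + 1 : ℤ) +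
      ∑ e ∈ (Finset.univ.erase x).erase g, eps (col e) * ((f e : ℕ) + 1 : ℤ) := by
    intro f
    rw [signedSum, ← Finset.add_sum_erase _ _ (Finset.mem_univ x),
      ← Finset.add_sum_erase _ _ (Finset.mem_erase.2 ⟨hxg.symm, Finset.mem_univ g⟩), hg, hx]
    simp [eps]
  rw [key, key f]
  have hs : ∑ e ∈ (Finset.univ.erase x).erase g,
      eps (col e) * ((((Equiv.swap x g).trans f) e : ℕ) + 1 : ℤ) =
      ∑ e ∈ (Finset.univ.erase x).erase g, eps (col e) * ((f e : ℕ) + 1 : ℤ) := by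
    apply Finset.sum_congr rfl
    intro e he
    simp only [Finset.mem_erase, Finset.mem_univ, and_true] at he
    rw [Equiv.trans_apply, Equiv.swap_apply_of_ne_of_ne he.2 he.1]
  rw [hs, Equiv.trans_apply, Equiv.swap_apply_left]
  ring

/-- Swapping the labels of a `B`-element `x` and a `C`-element `g` changes the signed sum by the
difference of the two labels. So both signed sums are divisible by `i` only if the two labels are
congruent modulo `i`. -/
lemma signedSum_dvd (hm : Fintype.card E = m) (col : E → Letter) {g x : E} (hg : col g = C)
    (hx : col x = B) {i : ℕ} (hi : 2 ≤ i) (him : i ∣ m) :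
    2 * i * (Finset.univ.filter (fun f : E ≃ Fin m => (i : ℤ) ∣ signedSum col f)).card <
      (i + 1) * m.factorial := by
  have hxg : x ≠ g := by
    rintro rfl
    rw [hg] at hx
    cases hx
  have h1 := congruent_pairs hm (by omega : 0 < i) him hxg
  set S := Finset.univ.filter (fun f : E ≃ Fin m => (i : ℤ) ∣ signedSum col f) with hS
  set T := Finset.univ.filter (fun f : E ≃ Fin m => (i : ℤ) ∣ ((f x : ℕ) : ℤ) - (f g : ℕ)) with hT
  have hinj : Function.Injective (fun f : E ≃ Fin m => (Equiv.swap x g).trans f) := by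
    intro f f' e
    ext k
    have := congrArg (fun t : E ≃ Fin m => t (Equiv.swap x g k)) e
    simp at this
    rw [this]
  have h2 : 2 * S.card ≤ m.factorial + T.card := by
    have hU := Finset.card_union_add_card_inter S (S.image (fun f => (Equiv.swap x g).trans f))
    rw [Finset.card_image_of_injective _ hinj] at hU
    have hle : (S ∪ S.image (fun f => (Equiv.swap x g).trans f)).card ≤ m.factorial := by
      rw [← card_labellings hm]
      exact Finset.card_le_card (Finset.subset_univ _)
    have hint : (S ∩ S.image (fun f => (Equiv.swap x g).trans f)).card ≤ T.card := by
      apply Finset.card_le_card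
      intro f hf
      simp only [hS, hT, Finset.mem_inter, Finset.mem_image, Finset.mem_filter, Finset.mem_univ,
        true_and] at hf ⊢
      obtain ⟨h, f', h', rfl⟩ := hf
      rw [signedSum_swap col f' hg hx] at h
      have := (dvd_add_right h').1 h
      rw [Equiv.trans_apply, Equiv.trans_apply, Equiv.swap_apply_left, Equiv.swap_apply_right]
      rw [← dvd_neg, neg_sub]
      exact this
    omega
  obtain ⟨k, rfl⟩ := him
  rw [Nat.mul_div_cancel_left _ (by omega)] at h1
  have hk : 1 ≤ k := by
    rcases Nat.eq_zero_or_pos k with rfl | h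
    · rw [mul_zero, Fintype.card_eq_zero_iff] at hm
      exact (hm.false x).elim
    · exact h
  have hfac := Nat.factorial_pos (i * k)
  obtain ⟨k, rfl⟩ : ∃ k', k = k' + 1 := ⟨k - 1, by omega⟩
  obtain ⟨j, rfl⟩ : ∃ j, i = j + 2 := ⟨i - 2, by omega⟩
  have e : (j + 2) * (k + 1) - 1 = (j + 2) * k + (j + 1) := by
    rw [mul_add]; omega
  rw [e, Nat.add_sub_cancel] at h1
  set F := ((j + 2) * (k + 1)).factorial
  have h3 : ((j + 2) * k + (j + 1)) * ((j + 2) * T.card) < ((j + 2) * k + (j + 1)) * F := by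
    calc _ = (j + 2) * (((j + 2) * k + (j + 1)) * T.card) := by ring
      _ ≤ (j + 2) * (k * F) := by gcongr
      _ = ((j + 2) * k) * F := by ring
      _ < _ := Nat.mul_lt_mul_of_pos_right (by omega) hfac
  have h4 := Nat.lt_of_mul_lt_mul_left h3
  calc _ = (j + 2) * (2 * S.card) := by ring
    _ ≤ (j + 2) * (F + T.card) := by gcongr
    _ = (j + 2) * F + (j + 2) * T.card := by ring
    _ < (j + 2) * F + F := by omega
    _ = _ := by ring

/-- The bound for labellings of an arbitrary finite set whose elements carry letters. -/
theorem labelling_bound (hm : Fintype.card E = m) (col : E → Letter)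
    (hab : mult col A ≤ mult col B) (hb : 1 ≤ mult col B) (hc : 1 ≤ mult col C) :
    m * (Finset.univ.filter (fun f : E ≃ Fin m => signedSum col f = 0)).card ≤ m.factorial ∧
    (¬ (mult col A = 2 ∧ mult col B = 2 ∧ mult col C = 1) →
      m * (Finset.univ.filter (fun f : E ≃ Fin m => signedSum col f = 0)).card <
        m.factorial) := by
  obtain ⟨K, hK⟩ := exists_fibre_card col hm
  obtain ⟨x, hx⟩ := Finset.card_pos.1 (lt_of_lt_of_le one_pos hb)
  obtain ⟨g, hg⟩ := Finset.card_pos.1 (lt_of_lt_of_le one_pos hc)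
  have hx' : col x = B := (Finset.mem_filter.1 hx).2
  have hg' : col g = C := (Finset.mem_filter.1 hg).2
  have hfac : m.factorial = K * (words (mult col A) (mult col B) (mult col C)).card := by
    rw [← card_labellings hm]
    simpa using hK (fun _ => True)
  have hKpos : 0 < K := by
    rcases Nat.eq_zero_or_pos K with rfl | h
    · have := Nat.factorial_pos m
      omega
    · exact h
  have hsum : mult col A + mult col B + mult col C = m := by
    have h1 := length_of_mem (word_mem col (Fintype.equivFinOfCardEq hm))
    rw [← h1]; simp [word]
  have h0 := hK (fun w => wt w = 0)
  simp only [wt_word] at h0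
  have hmod : ∀ i : ℕ, 2 ≤ i → i ∣ mult col A + mult col B + mult col C →
      2 * i * ((words (mult col A) (mult col B) (mult col C)).filter
        (fun w => (i : ℤ) ∣ wt w)).card <
        (i + 1) * (words (mult col A) (mult col B) (mult col C)).card := by
    intro i hi him
    rw [hsum] at him
    have h1 := signedSum_dvd hm col hg' hx' hi him
    have h2 := hK (fun w => (i : ℤ) ∣ wt w)
    simp only [wt_word] at h2
    rw [h2, hfac] at h1
    apply Nat.lt_of_mul_lt_mul_left (a := K)
    calc _ = 2 * i * (K * ((words (mult col A) (mult col B) (mult col C)).filter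
        (fun w => (i : ℤ) ∣ wt w)).card) := by ring
      _ < _ := h1
      _ = _ := by ring
  have h := words_bound _ _ _ hab hb hc hmod
  rw [hsum] at h
  rw [h0, hfac, mul_left_comm]
  exact ⟨Nat.mul_le_mul_left _ h.1, fun h' => Nat.mul_lt_mul_of_pos_left (h.2 h') hKpos⟩

end Labelling

/-! ### Graphs -/

section Graph

variable {V : Type*} [DecidableEq V] (G : SimpleGraph V)

/-- The role of the edge `e` with respect to `xy`. -/
def edgeColour (x y : V) (e : Sym2 V) : Letter :=
  if x ∈ e then (if y ∈ e then C else A) else (if y ∈ e then B else C)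

lemma eps_edgeColour (x y : V) (e : Sym2 V) :
    eps (edgeColour x y e) = (if x ∈ e then 1 else 0) - (if y ∈ e then 1 else 0) := by
  unfold edgeColour
  split_ifs <;> simp [eps]

variable [Fintype V] [DecidableRel G.Adj]

lemma mult_edgeColour (x y : V) (z : Letter) :
    mult (fun e : G.edgeFinset => edgeColour x y e.1) z =
      (G.edgeFinset.filter (fun e => edgeColour x y e = z)).card := by
  rw [mult, ← Finset.card_map (Function.Embedding.subtype _)]
  congr 1
  ext e
  simp
  tauto

lemma card_filter_mem (v : V) : (G.edgeFinset.filter (fun e => v ∈ e)).card = G.degree v := by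
  rw [← G.card_incidenceFinset_eq_degree, G.incidenceFinset_eq_filter]

lemma filter_both {x y : V} (h : G.Adj x y) :
    G.edgeFinset.filter (fun e => x ∈ e ∧ y ∈ e) = {s(x, y)} := by
  ext e
  simp only [Finset.mem_filter, Finset.mem_singleton, Sym2.mem_and_mem_iff h.ne]
  constructor
  · exact fun h => h.2
  · rintro rfl
    exact ⟨by simpa using h, rfl⟩

lemma mult_A {x y : V} (h : G.Adj x y) :
    mult (fun e : G.edgeFinset => edgeColour x y e.1) A + 1 = G.degree x := by
  rw [mult_edgeColour, ← card_filter_mem G x,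
    ← Finset.card_filter_add_card_filter_not (s := G.edgeFinset.filter (fun e => x ∈ e))
      (fun e => y ∈ e), Finset.filter_filter, Finset.filter_filter, filter_both G h,
    Finset.card_singleton, add_comm]
  congr 2
  apply Finset.filter_congr
  intro e _
  unfold edgeColour
  split_ifs <;> simp_all

lemma mult_B {x y : V} (h : G.Adj x y) :
    mult (fun e : G.edgeFinset => edgeColour x y e.1) B + 1 = G.degree y := by
  rw [mult_edgeColour, ← card_filter_mem G y,
    ← Finset.card_filter_add_card_filter_not (s := G.edgeFinset.filter (fun e => y ∈ e))
      (fun e => x ∈ e), Finset.filter_filter, Finset.filter_filter, filter_both G h.symm,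
    Finset.card_singleton, add_comm]
  congr 2
  apply Finset.filter_congr
  intro e _
  unfold edgeColour
  split_ifs <;> simp_all

lemma mult_C {x y : V} (h : G.Adj x y) :
    1 ≤ mult (fun e : G.edgeFinset => edgeColour x y e.1) C := by
  rw [mult_edgeColour]
  apply Finset.card_pos.2
  exact ⟨s(x, y), Finset.mem_filter.2 ⟨by simpa using h, by simp [edgeColour]⟩⟩

lemma signedSum_edgeColour {m : ℕ} (x y : V) (f : G.edgeFinset ≃ Fin m) :
    signedSum (fun e : G.edgeFinset => edgeColour x y e.1) f =
      ((∑ e ∈ G.edgeFinset.attach.filter (fun e => x ∈ e.1), ((f e : ℕ) + 1) : ℕ) : ℤ) -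
      ((∑ e ∈ G.edgeFinset.attach.filter (fun e => y ∈ e.1), ((f e : ℕ) + 1) : ℕ) : ℤ) := by
  rw [signedSum, Finset.sum_filter, Finset.sum_filter, ← Finset.univ_eq_attach]
  push_cast
  rw [← Finset.sum_sub_distrib]
  apply Finset.sum_congr rfl
  intro e _
  rw [eps_edgeColour]
  split_ifs <;> simp

/-- The theorem in counting form, with `deg x ≤ deg y` (so that `deg y ≠ 1` says that `xy` is not
isolated). -/
lemma graph_bound (m : ℕ) (hm : G.edgeFinset.card = m) (x y : V) (hxy : G.Adj x y)
    (hle : G.degree x ≤ G.degree y) (hy : G.degree y ≠ 1) :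
    m * (Finset.univ.filter (fun f : G.edgeFinset ≃ Fin m =>
      ∑ e ∈ G.edgeFinset.attach.filter (fun e => x ∈ e.1), ((f e : ℕ) + 1) =
      ∑ e ∈ G.edgeFinset.attach.filter (fun e => y ∈ e.1), ((f e : ℕ) + 1))).card ≤
        m.factorial ∧
    (¬ (m = 5 ∧ G.degree x = 3 ∧ G.degree y = 3) →
      m * (Finset.univ.filter (fun f : G.edgeFinset ≃ Fin m =>
        ∑ e ∈ G.edgeFinset.attach.filter (fun e => x ∈ e.1), ((f e : ℕ) + 1) =
        ∑ e ∈ G.edgeFinset.attach.filter (fun e => y ∈ e.1), ((f e : ℕ) + 1))).card <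
          m.factorial) := by
  have hA := mult_A G hxy
  have hB := mult_B G hxy
  have hC := mult_C G hxy
  have hcard : Fintype.card G.edgeFinset = m := by rw [Fintype.card_coe, hm]
  have h := labelling_bound hcard (fun e : G.edgeFinset => edgeColour x y e.1)
    (by omega) (by omega) hC
  have hsum := length_of_mem (word_mem (fun e : G.edgeFinset => edgeColour x y e.1)
    (Fintype.equivFinOfCardEq hcard))
  rw [word, List.length_ofFn] at hsum
  have hfilter : (Finset.univ.filter (fun f : G.edgeFinset ≃ Fin m =>
      ∑ e ∈ G.edgeFinset.attach.filter (fun e => x ∈ e.1), ((f e : ℕ) + 1) =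
      ∑ e ∈ G.edgeFinset.attach.filter (fun e => y ∈ e.1), ((f e : ℕ) + 1))) =
      Finset.univ.filter (fun f : G.edgeFinset ≃ Fin m =>
        signedSum (fun e : G.edgeFinset => edgeColour x y e.1) f = 0) := by
    apply Finset.filter_congr
    intro f _
    rw [signedSum_edgeColour, sub_eq_zero, Nat.cast_inj]
  rw [hfilter]
  exact ⟨h.1, fun h' => h.2 (by omega)⟩

end Graph

end Letter

/-- For a graph `G` with `m` edges, none isolated, and an edge `xy`, a uniformly
random bijective labelling of the edges with `{1,…,m}` (modelled by an equivalence
`G.edgeFinset ≃ Fin m`, the label of `e` being `f e + 1`) satisfies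
`ℙ(S_x = S_y) ≤ 1/m`, with strict inequality unless `m = 5` and
`deg x = deg y = 3`. -/
theorem prob_equal_sums_le {V : Type*} [Fintype V] [DecidableEq V]
    (G : SimpleGraph V) [DecidableRel G.Adj] (m : ℕ) (hm : G.edgeFinset.card = m)
    (hiso : ∀ x y : V, G.Adj x y → ¬ (G.degree x = 1 ∧ G.degree y = 1))
    (x y : V) (hxy : G.Adj x y)
    (S : (G.edgeFinset ≃ Fin m) → V → ℕ)
    (hS : ∀ (f : G.edgeFinset ≃ Fin m) (v : V),
      S f v = ∑ e ∈ G.edgeFinset.attach.filter (fun e => v ∈ e.1),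
        ((f e : ℕ) + 1)) :
    (((Finset.univ.filter (fun f : G.edgeFinset ≃ Fin m => S f x = S f y)).card : ℚ)
        / (Nat.factorial m : ℚ) ≤ 1 / (m : ℚ)) ∧
    (¬ (m = 5 ∧ G.degree x = 3 ∧ G.degree y = 3) →
      ((Finset.univ.filter (fun f : G.edgeFinset ≃ Fin m => S f x = S f y)).card : ℚ)
        / (Nat.factorial m : ℚ) < 1 / (m : ℚ)) := by
  have hmpos : 0 < m := by
    rw [← hm, Finset.card_pos]
    exact ⟨s(x, y), by simpa using hxy⟩
  have hx1 : 0 < G.degree x := (G.degree_pos_iff_exists_adj x).2 ⟨y, hxy⟩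
  have hy1 : 0 < G.degree y := (G.degree_pos_iff_exists_adj y).2 ⟨x, hxy.symm⟩
  have hne := hiso x y hxy
  set N := (Finset.univ.filter (fun f : G.edgeFinset ≃ Fin m => S f x = S f y)).card with hN
  have key : m * N ≤ m.factorial ∧
      (¬ (m = 5 ∧ G.degree x = 3 ∧ G.degree y = 3) → m * N < m.factorial) := by
    rcases le_total (G.degree x) (G.degree y) with h | h
    · have := Letter.graph_bound G m hm x y hxy h (by omega)
      simp only [← hS] at this
      exact this
    · have := Letter.graph_bound G m hm y x hxy.symm h (by omega)
      simp only [← hS, eq_comm (a := S _ y)] at this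
      exact ⟨this.1, fun h' => this.2 (by tauto)⟩
  have hm' : (0 : ℚ) < m := by exact_mod_cast hmpos
  have hf' : (0 : ℚ) < m.factorial := by exact_mod_cast m.factorial_pos
  rw [div_le_div_iff₀ hf' hm', div_lt_div_iff₀ hf' hm', one_mul]
  refine ⟨?_, fun h => ?_⟩
  · rw [mul_comm]; exact_mod_cast key.1
  · rw [mul_comm]; exact_mod_cast key.2 h
end

section
/- Let n and c both be even with 0 < c < n, and let X be a uniformly random c-element subset of {1,…,n}. Then for each i ∈ {0,1}, the probability that Σ_{x∈X} x ≡ i (mod 2) is at most (1/2)·(1 + 1/(n−1)); equivalently, the number of c-element subsets of {1,…,n} whose element sum is congruent to i mod 2 is at most (1/2)·(1 + 1/(n−1))·C(n,c). -/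
/-!
Write `n = 2m` and `c = 2k`. The signed count `S = ∑_X (-1)^(∑ X)` over `c`-subsets `X` is a
coefficient of `∏_{x=1}^{n} (T + (-1)^x) = (T² - 1)^m`, so `|S| = C(m, m - k)`
(`abs_signed_count`). The number of `c`-subsets whose sum has parity `i` is
`(C(n, c) + (-1)^i S) / 2`, so the bound amounts to `(2m - 1) C(m, k) ≤ C(2m, 2k)` for `0 < k < m`
(`choose_half_bound`), which follows by induction on `m - k`, with equality at `m - k = 1`.
-/

open Polynomial in
lemma prod_sign_Icc (m : ℕ) :
    ∏ x ∈ Finset.Icc 1 (2 * m), (X + C ((-1 : ℤ) ^ x)) = expand ℤ 2 ((X - C 1) ^ m) := by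
  induction m with
  | zero => simp
  | succ m ih =>
    rw [show 2 * (m + 1) = 2 * m + 1 + 1 by ring, Finset.prod_Icc_succ_top (by omega),
      Finset.prod_Icc_succ_top (by omega), ih]
    simp only [map_pow, map_sub, expand_X, expand_C, pow_succ, pow_mul]
    simp
    ring

/-- Only the absolute value is recorded; the sign of the sum is `(-1)^k`. -/
lemma abs_signed_count (m k : ℕ) (hk : k ≤ m) :
    |∑ X ∈ (Finset.Icc 1 (2 * m)).powersetCard (2 * k), (-1 : ℤ) ^ (∑ x ∈ X, x)|
      = (m.choose (m - k) : ℤ) := by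
  have h := Finset.prod_X_add_C_coeff (Finset.Icc 1 (2 * m)) (fun x => (-1 : ℤ) ^ x)
    (k := (m - k) * 2) (by simp; omega)
  rw [prod_sign_Icc, Polynomial.coeff_expand_mul (by norm_num), sub_eq_add_neg, ← Polynomial.C_neg,
    Polynomial.coeff_X_add_C_pow] at h
  have e : (Finset.Icc 1 (2 * m)).card - (m - k) * 2 = 2 * k := by simp; omega
  rw [e] at h
  rw [Finset.sum_congr rfl fun t _ =>
    (Finset.prod_pow_eq_pow_sum t (fun x => x) (-1 : ℤ)).symm, ← h, abs_mul, abs_pow]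
  simp

/-- The inequality `(2m - 1) C(m, a) ≤ C(2m, 2a)` for `0 < a < m`, with `a = k + 1` and
`m = k + l + 2`. -/
lemma choose_half_bound (k l : ℕ) :
    (2 * (k + l) + 3) * (k + l + 2).choose (k + 1)
      ≤ (2 * (k + l + 2)).choose (2 * (k + 1)) := by
  induction l with
  | zero =>
    have h1 : (k + 0 + 2).choose (k + 1) = k + 2 := by
      rw [show k + 0 + 2 = (k + 1) + 1 by ring, Nat.choose_succ_self_right]
    have h2 : (2 * (k + 0 + 2)).choose (2 * (k + 1)) = (2 * k + 4).choose 2 :=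
      Nat.choose_symm_of_eq_add (by ring)
    rw [h1, h2, Nat.choose_two_right, show 2 * k + 4 - 1 = 2 * k + 3 by omega]
    rw [Nat.le_div_iff_mul_le (by norm_num)]
    nlinarith
  | succ l ih =>
    have h1 := Nat.choose_mul_succ_eq (k + l + 2) (k + 1)
    have h2 := Nat.choose_mul_succ_eq (2 * (k + l + 2)) (2 * (k + 1))
    have h3 := Nat.choose_mul_succ_eq (2 * (k + l + 2) + 1) (2 * (k + 1))
    rw [show k + l + 2 + 1 - (k + 1) = l + 2 by omega] at h1
    rw [show 2 * (k + l + 2) + 1 - 2 * (k + 1) = 2 * l + 3 by omega] at h2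
    rw [show 2 * (k + l + 2) + 1 + 1 - 2 * (k + 1) = 2 * (l + 2) by omega] at h3
    rw [show k + (l + 1) + 2 = k + l + 2 + 1 by ring,
      show 2 * (k + l + 2 + 1) = 2 * (k + l + 2) + 1 + 1 by ring]
    generalize (k + l + 2).choose (k + 1) = a at *
    generalize (k + l + 2 + 1).choose (k + 1) = a' at *
    generalize (2 * (k + l + 2)).choose (2 * (k + 1)) = b at *
    generalize (2 * (k + l + 2) + 1).choose (2 * (k + 1)) = b1 at *
    generalize (2 * (k + l + 2) + 1 + 1).choose (2 * (k + 1)) = b' at *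
    -- Both sides are multiplied by `(2l + 4)(2l + 3)`, which turns the new binomials into the old.
    refine Nat.le_of_mul_le_mul_right (c := 2 * (l + 2) * (2 * l + 3)) ?_ (by positivity)
    calc (2 * (k + (l + 1)) + 3) * a' * (2 * (l + 2) * (2 * l + 3))
        = 2 * (2 * (k + l) + 5) * (2 * l + 3) * (a' * (l + 2)) := by ring
      _ = 2 * (2 * (k + l) + 5) * (k + l + 3) * (a * (2 * l + 3)) := by rw [← h1]; ring
      _ ≤ 2 * (2 * (k + l) + 5) * (k + l + 3) * ((2 * (k + l) + 3) * a) := by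
          gcongr 2 * (2 * (k + l) + 5) * (k + l + 3) * ?_
          rw [mul_comm]
          gcongr
          omega
      _ ≤ 2 * (2 * (k + l) + 5) * (k + l + 3) * b := by gcongr
      _ = 2 * (k + l + 3) * (b * (2 * (k + l + 2) + 1)) := by ring
      _ = (b1 * (2 * (k + l + 2) + 1 + 1)) * (2 * l + 3) := by rw [h2]; ring
      _ = b' * (2 * (l + 2) * (2 * l + 3)) := by rw [h3]; ring

lemma two_mul_card_parity (s : Finset (Finset ℕ)) (i : ℕ) (hi : i = 0 ∨ i = 1) :
    2 * ((s.filter (fun X => (∑ x ∈ X, x) % 2 = i)).card : ℤ)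
      = s.card + (-1) ^ i * ∑ X ∈ s, (-1 : ℤ) ^ (∑ x ∈ X, x) := by
  rw [Finset.card_filter, Finset.card_eq_sum_ones]
  push_cast
  rw [Finset.mul_sum, Finset.mul_sum, ← Finset.sum_add_distrib]
  refine Finset.sum_congr rfl fun X _ => ?_
  rw [neg_one_pow_eq_pow_mod_two (n := ∑ x ∈ X, x)]
  rcases hi with rfl | rfl <;> rcases Nat.mod_two_eq_zero_or_one (∑ x ∈ X, x) with h | h <;>
    simp [h]

/-- If `n` and `c` are both even with `0 < c < n`, then for each `i ∈ {0,1}`, the number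
of `c`-element subsets of `{1,…,n}` with element sum congruent to `i` mod 2 is at most
`(1/2)·(1 + 1/(n−1)) · C(n,c)`. -/
theorem parity_even_even (n c : ℕ) (hn : Even n) (hc : Even c) (h0 : 0 < c) (hcn : c < n)
    (i : ℕ) (hi : i = 0 ∨ i = 1) :
    ((((Finset.Icc 1 n).powersetCard c).filter
        (fun X => (∑ x ∈ X, x) % 2 = i)).card : ℚ)
      ≤ (1 / 2) * (1 + 1 / ((n : ℚ) - 1)) * (n.choose c : ℚ) := by
  obtain ⟨m, rfl⟩ := hn.two_dvd
  obtain ⟨k', rfl⟩ := hc.two_dvd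
  obtain ⟨k, rfl⟩ : ∃ k, k' = k + 1 := ⟨k' - 1, by omega⟩
  obtain ⟨l, rfl⟩ : ∃ l, m = k + l + 2 := ⟨m - k - 2, by omega⟩
  have h1 := two_mul_card_parity
    ((Finset.Icc 1 (2 * (k + l + 2))).powersetCard (2 * (k + 1))) i hi
  have h2 := abs_signed_count (k + l + 2) (k + 1) (by omega)
  rw [Nat.choose_symm (by omega)] at h2
  have h3 := choose_half_bound k l
  rw [Finset.card_powersetCard, Nat.card_Icc, Nat.add_sub_cancel] at h1
  generalize ∑ X ∈ (Finset.Icc 1 (2 * (k + l + 2))).powersetCard (2 * (k + 1)),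
    (-1 : ℤ) ^ (∑ x ∈ X, x) = S at *
  generalize (Finset.card _) = N at *
  generalize (2 * (k + l + 2)).choose (2 * (k + 1)) = B at *
  generalize (k + l + 2).choose (k + 1) = A at *
  have h4 : (2 * N : ℤ) ≤ B + A := by
    rw [h1, ← h2]
    rcases hi with rfl | rfl
    · simpa using le_abs_self S
    · simpa using neg_le_abs S
  have h4' : (2 * N : ℚ) ≤ B + A := by exact_mod_cast h4
  have h3' : (2 * (k + l) + 3 : ℚ) * A ≤ B := by exact_mod_cast h3
  have h5 : ((2 * (k + l + 2) : ℕ) : ℚ) - 1 = 2 * (k + l) + 3 := by push_cast; ring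
  have h6 : (A : ℚ) ≤ B / (2 * (k + l) + 3) := by
    rw [le_div_iff₀ (by positivity)]
    linarith
  rw [h5]
  calc (N : ℚ) ≤ (1 / 2) * (B + B / (2 * (k + l) + 3)) := by linarith
    _ = _ := by ring
end

section
/- If n and c are even integers with 0 < c < n, then C(n,c) ≥ (n−1)·C(n/2, c/2). -/
/-!
Write `n = 2m` and `c = 2k`. For `k = 1` the claim is the equality `C(2m,2) = (2m-1)·m`.
Passing from `k` to `k + 1` multiplies the ratio `C(2m,2k) / C(m,k)` by
`(2(m-k)-1) / (2k+1)`, which is at least `1` as long as `2k + 1 ≤ m`. So the claim holds for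
`2k ≤ m` by induction (`choose_ge_lower_half`), and the symmetry `k ↦ m - k` gives the rest.
-/

theorem choose_ge_lower_half (m k : ℕ) (hk : 1 ≤ k) (hkm : 2 * k ≤ m) :
    (2 * m - 1) * m.choose k ≤ (2 * m).choose (2 * k) := by
  induction k, hk using Nat.le_induction with
  | base =>
    rw [mul_one, Nat.choose_one_right, Nat.choose_two_right, mul_assoc,
      Nat.mul_div_cancel_left _ (by norm_num), mul_comm]
  | succ k hk ih =>
    have ih := ih (by omega)
    obtain ⟨d, rfl⟩ : ∃ d, m = k + 1 + d := ⟨m - (k + 1), by omega⟩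
    have h1 := Nat.choose_succ_right_eq (2 * (k + 1 + d)) (2 * k)
    have h2 := Nat.choose_succ_right_eq (2 * (k + 1 + d)) (2 * k + 1)
    have h3 := Nat.choose_succ_right_eq (k + 1 + d) k
    rw [show 2 * (k + 1 + d) - 2 * k = 2 * (d + 1) by omega] at h1
    rw [show 2 * (k + 1 + d) - (2 * k + 1) = 2 * d + 1 by omega] at h2
    rw [show k + 1 + d - k = d + 1 by omega] at h3
    rw [show 2 * (k + 1) = 2 * k + 1 + 1 by ring]
    generalize (2 * (k + 1 + d)).choose (2 * k + 1 + 1) = A at *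
    generalize (2 * (k + 1 + d)).choose (2 * k + 1) = B at *
    generalize (2 * (k + 1 + d)).choose (2 * k) = C at *
    generalize (k + 1 + d).choose (k + 1) = D at *
    generalize (k + 1 + d).choose k = E at *
    generalize 2 * (k + 1 + d) - 1 = N at *
    have hA : A * (2 * (k + 1) * (2 * k + 1)) = C * (2 * (d + 1)) * (2 * d + 1) := by
      rw [← h1]; linear_combination (2 * k + 1) * h2
    refine Nat.le_of_mul_le_mul_right (c := 2 * (k + 1) * (2 * k + 1)) ?_ (by positivity)
    calc N * D * (2 * (k + 1) * (2 * k + 1))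
        = N * (D * (k + 1)) * 2 * (2 * k + 1) := by ring
      _ = N * E * (2 * (d + 1)) * (2 * k + 1) := by rw [h3]; ring
      _ ≤ C * (2 * (d + 1)) * (2 * d + 1) := by gcongr; omega
      _ = A * (2 * (k + 1) * (2 * k + 1)) := hA.symm

/-- If `n` and `c` are even with `0 < c < n`, then `C(n,c) ≥ (n−1) · C(n/2, c/2)`. -/
theorem choose_ge_even (n c : ℕ) (hn : Even n) (hc : Even c) (h0 : 0 < c) (hcn : c < n) :
    n.choose c ≥ (n - 1) * ((n / 2).choose (c / 2)) := by
  obtain ⟨m, rfl⟩ := hn.two_dvd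
  obtain ⟨k, rfl⟩ := hc.two_dvd
  rw [Nat.mul_div_cancel_left _ two_pos, Nat.mul_div_cancel_left _ two_pos]
  rcases le_total (2 * k) m with h | h
  · exact choose_ge_lower_half m k (by omega) h
  · have := choose_ge_lower_half m (m - k) (by omega) (by omega)
    rwa [Nat.choose_symm (by omega), Nat.mul_sub, Nat.choose_symm (by omega)] at this
end

section
/- If n and c are odd integers with 0 < c < n, then C(n,c) ≥ n·C((n−1)/2, (c−1)/2). -/
/-!
Write `n = 2m + 1`, `c = 2k + 1` with `k < m`, and fix `k`. For `m = k + 1` both sides equal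
`(2k + 3)(k + 1)`. Passing from `m` to `m + 1` multiplies `C(2m+1, 2k+1)` by
`(2m+3)(2m+2) / ((2d+2)(2d+1))` and `(2m+1) C(m, k)` by `(2m+3)(m+1) / ((2m+1)(d+1))`, where
`d = m - k`. The first factor is at least the second because `d ≤ m`, so the inequality follows by
induction on `m`.
-/

/-- The claim with `m = k + 1 + j`, which allows induction on `j`. -/
theorem mul_choose_le_choose_odd (k j : ℕ) :
    (2 * (k + 1 + j) + 1) * (k + 1 + j).choose k ≤
      (2 * (k + 1 + j) + 1).choose (2 * k + 1) := by
  induction j with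
  | zero =>
    have h : (2 * k + 3).choose (2 * k + 1) = (2 * k + 3).choose 2 :=
      Nat.choose_symm_of_eq_add (by ring)
    have h2 : (2 * k + 3).choose 2 = (2 * k + 3) * (k + 1) := by
      rw [Nat.choose_two_right, show 2 * k + 3 - 1 = (k + 1) * 2 by omega, ← mul_assoc,
        Nat.mul_div_cancel _ (by norm_num)]
    have h3 : (k + 1).choose k = k + 1 := Nat.choose_succ_self_right k
    rw [add_zero, h3, show 2 * (k + 1) + 1 = 2 * k + 3 by ring, h, h2]
  | succ j ih =>
    obtain ⟨m, hm⟩ : ∃ m, m = k + 1 + j := ⟨_, rfl⟩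
    rw [show k + 1 + (j + 1) = m + 1 by omega]
    rw [← hm] at ih
    have e1 := Nat.choose_mul_succ_eq (2 * m + 1) (2 * k + 1)
    have e2 := Nat.choose_mul_succ_eq (2 * m + 2) (2 * k + 1)
    have e3 := Nat.choose_mul_succ_eq m k
    rw [show 2 * m + 1 + 1 - (2 * k + 1) = 2 * j + 3 by omega] at e1
    rw [show 2 * m + 2 + 1 - (2 * k + 1) = 2 * j + 4 by omega] at e2
    rw [show m + 1 - k = j + 2 by omega] at e3
    rw [show 2 * (m + 1) + 1 = 2 * m + 2 + 1 by ring]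
    rw [show 2 * m + 1 + 1 = 2 * m + 2 by ring] at e1
    generalize (2 * m + 2 + 1).choose (2 * k + 1) = A₂ at *
    generalize (2 * m + 2).choose (2 * k + 1) = A₁ at *
    generalize (2 * m + 1).choose (2 * k + 1) = A₀ at *
    generalize (m + 1).choose k = B₁ at *
    generalize m.choose k = B₀ at *
    -- Clear the denominators `(2d+2)(2d+1)`, where `d = m - k = j + 1`.
    refine Nat.le_of_mul_le_mul_right (c := (2 * j + 4) * (2 * j + 3)) ?_ (by positivity)
    calc (2 * m + 2 + 1) * B₁ * ((2 * j + 4) * (2 * j + 3))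
        ≤ (2 * m + 2 + 1) * B₁ * ((2 * j + 4) * (2 * m + 1)) :=
          Nat.mul_le_mul_left _ (Nat.mul_le_mul_left _ (by omega))
      _ = (2 * m + 2 + 1) * (2 * (2 * m + 1)) * (B₁ * (j + 2)) := by ring
      _ = (2 * m + 2 + 1) * (2 * m + 2) * ((2 * m + 1) * B₀) := by rw [← e3]; ring
      _ ≤ (2 * m + 2 + 1) * (2 * m + 2) * A₀ := by gcongr
      _ = (2 * m + 2 + 1) * (A₀ * (2 * m + 2)) := by ring
      _ = A₁ * (2 * m + 2 + 1) * (2 * j + 3) := by rw [e1]; ring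
      _ = A₂ * ((2 * j + 4) * (2 * j + 3)) := by rw [e2]; ring

/-- If `n` and `c` are odd with `0 < c < n`, then `C(n,c) ≥ n · C((n−1)/2, (c−1)/2)`. -/
theorem choose_ge_odd (n c : ℕ) (hn : Odd n) (hc : Odd c) (h0 : 0 < c) (hcn : c < n) :
    n.choose c ≥ n * (((n - 1) / 2).choose ((c - 1) / 2)) := by
  obtain ⟨m, rfl⟩ := hn
  obtain ⟨k, rfl⟩ := hc
  obtain ⟨j, rfl⟩ : ∃ j, m = k + 1 + j := ⟨m - (k + 1), by omega⟩
  rw [show (2 * (k + 1 + j) + 1 - 1) / 2 = k + 1 + j by omega,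
    show (2 * k + 1 - 1) / 2 = k by omega]
  exact mul_choose_le_choose_odd k j
end

section
/- Let a ≥ 1 and n be integers with 2a − 1 < n, and let σ be a uniformly random permutation of {1,…,n}. Then for every integer t, the probability that D_{a,a−1}(σ) ≡ t (mod n) is exactly 1/n; equivalently, the number of permutations σ of {1,…,n} with D_{a,a−1}(σ) ≡ t (mod n) is exactly (n−1)!. -/
/-!
Adding a constant `c` modulo `n` to every value of `σ` is a bijection on permutations, and it
changes `D_{a,a-1}` by `a c - (a - 1) c = c` modulo `n` (`D_shift`). Hence all `n` residue classes
of `D_{a,a-1}` contain equally many permutations, so each contains `n! / n` of them.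
-/

/-- `D n a b σ = (σ(1)+⋯+σ(a)) − (σ(a+1)+⋯+σ(a+b))` for a permutation `σ` of `{1,…,n}`,
modelled as a permutation of `Fin n` with values `σ i + 1 ∈ {1,…,n}`. -/
def D (n a b : ℕ) (σ : Equiv.Perm (Fin n)) : ℤ :=
  (∑ i ∈ Finset.univ.filter (fun i : Fin n => (i : ℕ) < a), ((σ i : ℕ) + 1 : ℤ))
    - ∑ i ∈ Finset.univ.filter (fun i : Fin n => a ≤ (i : ℕ) ∧ (i : ℕ) < a + b),
        ((σ i : ℕ) + 1 : ℤ)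

lemma card_filter_block (n a b : ℕ) (h : a + b ≤ n) :
    (Finset.univ.filter (fun i : Fin n => a ≤ (i : ℕ) ∧ (i : ℕ) < a + b)).card = b := by
  have himage : (Finset.univ.filter (fun i : Fin n => a ≤ (i : ℕ) ∧ (i : ℕ) < a + b)).map
      Fin.valEmbedding = Finset.Ico a (a + b) := by
    ext x
    simp only [Finset.mem_map, Finset.mem_filter, Finset.mem_univ, true_and,
      Fin.valEmbedding_apply, Finset.mem_Ico]
    constructor
    · rintro ⟨i, hi, rfl⟩
      exact hi
    · intro hx
      exact ⟨⟨x, by omega⟩, hx, rfl⟩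
  rw [← Finset.card_map Fin.valEmbedding, himage]
  simp

/-- Translating the values of `σ` by `c` modulo `n = m + 1` translates `D_{b+1,b}` by
`(b + 1) c - b c = c` modulo `n`. -/
lemma D_shift (m b : ℕ) (h : b + 1 + b ≤ m + 1) (c : Fin (m + 1))
    (σ : Equiv.Perm (Fin (m + 1))) :
    (D (m + 1) (b + 1) b (Equiv.addRight c * σ) : ZMod (m + 1))
      = (D (m + 1) (b + 1) b σ : ZMod (m + 1)) + ((c : ℕ) : ZMod (m + 1)) := by
  have hA : (Finset.univ.filter (fun i : Fin (m + 1) => (i : ℕ) < b + 1)).card = b + 1 := by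
    simpa using card_filter_block (m + 1) 0 (b + 1) (by omega)
  have hB := card_filter_block (m + 1) (b + 1) b h
  have hval (x : Fin (m + 1)) : (((x + c : Fin (m + 1)) : ℕ) : ZMod (m + 1))
      = ((x : ℕ) : ZMod (m + 1)) + ((c : ℕ) : ZMod (m + 1)) := by
    rw [Fin.val_add, ZMod.natCast_mod, Nat.cast_add]
  unfold D
  push_cast
  simp only [Function.comp_apply, Equiv.coe_addRight, hval, Finset.sum_add_distrib,
    Finset.sum_const, hA, hB, nsmul_eq_mul]
  push_cast
  ring

/-- For `a ≥ 1` and `2a − 1 < n`, a uniformly random permutation `σ` of `{1,…,n}`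
satisfies `D_{a,a−1}(σ) ≡ t (mod n)` with probability exactly `1/n`, for every `t`. -/
theorem prob_D_diffone_mod (a n : ℕ) (ha : 1 ≤ a) (hn : 2 * a - 1 < n) (t : ℤ) :
    ((Finset.univ.filter
        (fun σ : Equiv.Perm (Fin n) => D n a (a - 1) σ ≡ t [ZMOD (n : ℤ)])).card : ℚ)
      / (Nat.factorial n : ℚ) = 1 / (n : ℚ) := by
  obtain ⟨m, rfl⟩ : ∃ m, n = m + 1 := ⟨n - 1, by omega⟩
  obtain ⟨b, rfl⟩ : ∃ b, a = b + 1 := ⟨a - 1, by omega⟩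
  simp only [Nat.add_sub_cancel]
  set f : Equiv.Perm (Fin (m + 1)) → ZMod (m + 1) := fun σ => (D (m + 1) (b + 1) b σ : ℤ) with hf
  have hfilter : Finset.univ.filter (fun σ : Equiv.Perm (Fin (m + 1)) =>
      D (m + 1) (b + 1) b σ ≡ t [ZMOD ((m + 1 : ℕ) : ℤ)])
      = Finset.univ.filter (fun σ => f σ = (t : ZMod (m + 1))) := by
    ext σ
    simp only [Finset.mem_filter, Finset.mem_univ, true_and, hf]
    exact (ZMod.intCast_eq_intCast_iff _ _ _).symm
  have hfiber (z : ZMod (m + 1)) :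
      (Finset.univ.filter (fun σ => f σ = z)).card
        = (Finset.univ.filter (fun σ => f σ = (t : ZMod (m + 1)))).card := by
    -- `ZMod (m + 1)` unfolds to `Fin (m + 1)`, so the residue `t - z` is a translation amount.
    let c : Fin (m + 1) := ((t : ZMod (m + 1)) - z : ZMod (m + 1))
    have hc : ((c : ℕ) : ZMod (m + 1)) = (t : ZMod (m + 1)) - z :=
      ZMod.natCast_zmod_val ((t : ZMod (m + 1)) - z)
    refine Finset.card_equiv (Equiv.mulLeft (Equiv.addRight c)) fun σ => ?_
    have hs : f (Equiv.addRight c * σ) = f σ + ((c : ℕ) : ZMod (m + 1)) :=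
      D_shift m b (by omega) c σ
    simp only [Finset.mem_filter, Finset.mem_univ, true_and, Equiv.coe_mulLeft, hs, hc]
    constructor
    · rintro rfl
      ring
    · intro h
      linear_combination h
  have htotal : (m + 1).factorial
      = (m + 1) * (Finset.univ.filter (fun σ => f σ = (t : ZMod (m + 1)))).card := by
    have h := Finset.card_eq_sum_card_fiberwise (f := f) (s := Finset.univ) (t := Finset.univ)
      (fun _ _ => by simp)
    simpa [hfiber, Fintype.card_perm, ZMod.card] using h
  rw [hfilter, div_eq_div_iff (by positivity) (by positivity), htotal]
  push_cast
  ring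
end
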